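/- Fix k ≥ 4, 0 < μ < 1/10 and 0 < (8k+7)ν < μ. There exist ε₀ > 0 and C > 0 such that for every ε ∈ (0,ε₀) and every global C^∞ solution u of the Cauchy problem, for all (σ,ω) ∈ ℝ×S¹ the integral ∫_{t_{1,σ}}^∞ ρ(τ;σ,ω) dτ converges absolutely and |∫_{t_{1,σ}}^∞ ρ(τ;σ,ω) dτ| ≤ Cε^{5/2−2μ}, where t_{1,σ} = max{ε^{−1}, −2σ}. -/

import Mathlib

/-!
The integrand is bounded pointwise: for `t ≥ ε⁻¹` and `r = t + σ ≥ t / 2`, one shows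
`|U_j| ≲ ε` and `|K_j| ≲ ε t^{2μ - 3/2}`, hence `|ρ| ≲ ε² t^{2μ - 3/2}` (`rho_point`). Integrating
from `t = ε⁻¹` produces the extra factor `ε^{1/2 - 2μ}` (`tail_bound`). Everything else is the global
decay theory for the small-data Cauchy problem, proved here by the hyperboloidal method.

*Reduction.* The nonlinearity is dissipative, so the local energy in backward cones does not
increase and a solution with data in `|x| ≤ R` lives in `|x| ≤ t + R` (`finite_speed`). After
translating time by `T = R + 1` the solution is supported in `|x| ≤ t - 1`, where the hyperboloids
`t = √(s² + |x|²)` meet the support in a bounded set. A local energy argument on a slab (`slab`)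
makes the data on the first hyperboloid of size `ε`.

*Weak decay.* The boosts `L_a = t∂_a + x_a∂ₜ` commute with `□`. The energies of the boosted
unknowns on hyperboloids obey `hyp_flux`; if `∂u`, with up to two boosts applied, is bounded by
`b₀ t^{-1/2}` up to a factor `s^η` per boost, then a weighted Grönwall inequality shows that these
energies grow at most like `s^{12η}` (`hyp_energy`). The Sobolev inequality on hyperboloids
(`hyp_sob`) turns this into pointwise decay with a small loss `s^δ`, `δ = 6η` (the structure `Weak`).

*Sharp decay.* The radiation field `½√r(∂ᵣ - ∂ₜ)v` satisfies a transport equation along the outgoing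
characteristics `r = t - c` (`char_deriv`) whose linear errors are integrable by the weak decay.
For the undifferentiated unknown the cubic term acts as a damping and can be discarded; for a
boosted unknown it is a forcing of size `b₀³ s^{κ}/t` with `κ > 0`, which integrates to a multiple
of `b₀³ s^{κ}` (`ode_barrier`, `ode_final`, `char_f`). The resulting bound `char_bound` improves the
assumption on `∂u` when `b₀` is a fixed large multiple of `ε` and `ε` is small, and the continuity
argument `bootstrap` yields `decay`: `|∂u| ≲ ε t^{-1/2}` with no loss, together with `Weak`.

*The remainder `K`.* Take `δ = μ`. Since `∂ₜu = -U/√r` up to errors of size `ε t^{δ - 1}`, the two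
cubic terms in `H` cancel up to these errors and the difference `1/t - 1/r`, which is controlled by
the interior decay of `U`; the angular term is bounded by the boosts. This is `K_bound`.
-/

open Real MeasureTheory Filter Topology

noncomputable section

/-- Partial derivative in `t`. -/
def pt (u : ℝ → ℝ → ℝ → ℝ) : ℝ → ℝ → ℝ → ℝ :=
  fun t x1 x2 => deriv (fun s => u s x1 x2) t

/-- Partial derivative in `x₁`. -/
def p1 (u : ℝ → ℝ → ℝ → ℝ) : ℝ → ℝ → ℝ → ℝ :=
  fun t x1 x2 => deriv (fun y => u t y x2) x1

/-- Partial derivative in `x₂`. -/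
def p2 (u : ℝ → ℝ → ℝ → ℝ) : ℝ → ℝ → ℝ → ℝ :=
  fun t x1 x2 => deriv (fun y => u t x1 y) x2

/-- The d'Alembertian `□ = ∂ₜ² − ∂₁² − ∂₂²`. -/
def dAlembert (u : ℝ → ℝ → ℝ → ℝ) : ℝ → ℝ → ℝ → ℝ :=
  fun t x1 x2 => pt (pt u) t x1 x2 - p1 (p1 u) t x1 x2 - p2 (p2 u) t x1 x2

/-- `u : ℝ×ℝ² → ℝ` (curried) is C^∞. -/
def Smooth3 (u : ℝ → ℝ → ℝ → ℝ) : Prop :=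
  ContDiff ℝ (⊤ : ℕ∞) (fun p : ℝ × ℝ × ℝ => u p.1 p.2.1 p.2.2)

/-- Compactly supported C^∞ function on ℝ². -/
def SmoothCompact2 (f : ℝ → ℝ → ℝ) : Prop :=
  ContDiff ℝ (⊤ : ℕ∞) (fun p : ℝ × ℝ => f p.1 p.2) ∧
    HasCompactSupport (fun p : ℝ × ℝ => f p.1 p.2)

/-- Global C^∞ solution of the Cauchy problem
`□u₁ = −(∂ₜu₂)²∂ₜu₁`, `□u₂ = −(∂ₜu₁)²∂ₜu₂` with data `(εf_j, εg_j)`. -/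
structure IsSolution (ε : ℝ) (f1 f2 g1 g2 : ℝ → ℝ → ℝ)
    (u1 u2 : ℝ → ℝ → ℝ → ℝ) : Prop where
  smooth1 : Smooth3 u1
  smooth2 : Smooth3 u2
  pde1 : ∀ t x1 x2 : ℝ, 0 < t →
    dAlembert u1 t x1 x2 = -(pt u2 t x1 x2) ^ 2 * pt u1 t x1 x2
  pde2 : ∀ t x1 x2 : ℝ, 0 < t →
    dAlembert u2 t x1 x2 = -(pt u1 t x1 x2) ^ 2 * pt u2 t x1 x2
  init1 : ∀ x1 x2 : ℝ, u1 0 x1 x2 = ε * f1 x1 x2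
  init2 : ∀ x1 x2 : ℝ, u2 0 x1 x2 = ε * f2 x1 x2
  initd1 : ∀ x1 x2 : ℝ, pt u1 0 x1 x2 = ε * g1 x1 x2
  initd2 : ∀ x1 x2 : ℝ, pt u2 0 x1 x2 = ε * g2 x1 x2

/-- `‖u(t)‖_E²  = ½∫ ((∂ₜu)² + (∂₁u)² + (∂₂u)²) dx`. -/
def energySq (u : ℝ → ℝ → ℝ → ℝ) (t : ℝ) : ℝ :=
  (1 / 2) * ∫ x : ℝ × ℝ,
    ((pt u t x.1 x.2) ^ 2 + (p1 u t x.1 x.2) ^ 2 + (p2 u t x.1 x.2) ^ 2)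

/-- The energy norm `‖u(t)‖_E`. -/
def energyNorm (u : ℝ → ℝ → ℝ → ℝ) (t : ℝ) : ℝ :=
  Real.sqrt (energySq u t)

/-- `|x|` in coordinates. -/
def radius (x1 x2 : ℝ) : ℝ := Real.sqrt (x1 ^ 2 + x2 ^ 2)

/-- The Japanese bracket `⟨z⟩ = (1+z²)^{1/2}`. -/
def jb (z : ℝ) : ℝ := Real.sqrt (1 + z ^ 2)

/-- `U(t,x) = D(|x|^{1/2}u(t,x))` where `D = ½(∂_r − ∂ₜ)`. -/
def Uop (u : ℝ → ℝ → ℝ → ℝ) : ℝ → ℝ → ℝ → ℝ :=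
  fun t x1 x2 =>
    (1 / 2) * ((x1 / radius x1 x2) *
        p1 (fun s y1 y2 => radius y1 y2 ^ ((1 : ℝ) / 2) * u s y1 y2) t x1 x2
      + (x2 / radius x1 x2) *
        p2 (fun s y1 y2 => radius y1 y2 ^ ((1 : ℝ) / 2) * u s y1 y2) t x1 x2
      - pt (fun s y1 y2 => radius y1 y2 ^ ((1 : ℝ) / 2) * u s y1 y2) t x1 x2)

/-- `V(t;σ,ω) = U(t,(t+σ)ω)`. -/
def Vop (u : ℝ → ℝ → ℝ → ℝ) (t σ ω1 ω2 : ℝ) : ℝ :=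
  Uop u t ((t + σ) * ω1) ((t + σ) * ω2)

/-- The rotation vector field `Ω = x₁∂₂ − x₂∂₁`. -/
def rot (u : ℝ → ℝ → ℝ → ℝ) : ℝ → ℝ → ℝ → ℝ :=
  fun t x1 x2 => x1 * p2 u t x1 x2 - x2 * p1 u t x1 x2

/-- `H` for component `a` (the other component being `b`):
`H_a = ½(|x|^{1/2}(∂ₜu_b)²(∂ₜu_a) + t⁻¹U_b²U_a) − (8|x|^{3/2})⁻¹(4Ω²+1)u_a`. -/
def Hfun (ua ub : ℝ → ℝ → ℝ → ℝ) (t x1 x2 : ℝ) : ℝ :=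
  (1 / 2) * (radius x1 x2 ^ ((1 : ℝ) / 2) * (pt ub t x1 x2) ^ 2 * pt ua t x1 x2
      + (1 / t) * (Uop ub t x1 x2) ^ 2 * Uop ua t x1 x2)
    - (1 / (8 * radius x1 x2 ^ ((3 : ℝ) / 2))) *
        (4 * rot (rot ua) t x1 x2 + ua t x1 x2)

/-- `K_a(t;σ,ω) = H_a(t,(t+σ)ω)`. -/
def Kfun (ua ub : ℝ → ℝ → ℝ → ℝ) (t σ ω1 ω2 : ℝ) : ℝ :=
  Hfun ua ub t ((t + σ) * ω1) ((t + σ) * ω2)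

/-- `ρ = V₁K₁ − V₂K₂`. -/
def rhoFun (u1 u2 : ℝ → ℝ → ℝ → ℝ) (t σ ω1 ω2 : ℝ) : ℝ :=
  Vop u1 t σ ω1 ω2 * Kfun u1 u2 t σ ω1 ω2 -
    Vop u2 t σ ω1 ω2 * Kfun u2 u1 t σ ω1 ω2

/-- The Radon transform: line integral of `φ` over `{y : y·ω = s}`. -/
def Rline (φ : ℝ → ℝ → ℝ) (s ω1 ω2 : ℝ) : ℝ :=
  ∫ τ : ℝ, φ (s * ω1 - τ * ω2) (s * ω2 + τ * ω1)

/-- `R₂[φ](σ,ω) = (2√2π)⁻¹ ∫_σ^∞ R[φ](s,ω)(s−σ)^{−1/2} ds`. -/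
def R2 (φ : ℝ → ℝ → ℝ) (σ ω1 ω2 : ℝ) : ℝ :=
  (1 / (2 * Real.sqrt 2 * Real.pi)) *
    ∫ s in Set.Ioi σ, Rline φ s ω1 ω2 / Real.sqrt (s - σ)

/-- The Friedlander radiation field `F₀[φ,ψ] = −∂_σR₂[φ] + R₂[ψ]`. -/
def F0 (φ ψ : ℝ → ℝ → ℝ) (σ ω1 ω2 : ℝ) : ℝ :=
  -deriv (fun σ' => R2 φ σ' ω1 ω2) σ + R2 ψ σ ω1 ω2

/-- `∂_σF₀[φ,ψ]`. -/
def dF0 (φ ψ : ℝ → ℝ → ℝ) (σ ω1 ω2 : ℝ) : ℝ :=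
  deriv (fun σ' => F0 φ ψ σ' ω1 ω2) σ

/-- The vector fields `Γ = (S, L₁, L₂, Ω, ∂ₜ, ∂₁, ∂₂)`. -/
def Gam (i : Fin 7) (u : ℝ → ℝ → ℝ → ℝ) : ℝ → ℝ → ℝ → ℝ :=
  match i with
  | 0 => fun t x1 x2 => t * pt u t x1 x2 + x1 * p1 u t x1 x2 + x2 * p2 u t x1 x2
  | 1 => fun t x1 x2 => t * p1 u t x1 x2 + x1 * pt u t x1 x2
  | 2 => fun t x1 x2 => t * p2 u t x1 x2 + x2 * pt u t x1 x2
  | 3 => rot u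
  | 4 => pt u
  | 5 => p1 u
  | 6 => p2 u

/-- `Γ^α = Γ₀^{α₀}⋯Γ₆^{α₆}`. -/
def GamMulti (α : Fin 7 → ℕ) (u : ℝ → ℝ → ℝ → ℝ) : ℝ → ℝ → ℝ → ℝ :=
  (Gam 0)^[α 0] ((Gam 1)^[α 1] ((Gam 2)^[α 2] ((Gam 3)^[α 3]
    ((Gam 4)^[α 4] ((Gam 5)^[α 5] ((Gam 6)^[α 6] u))))))

/-- Pointwise norm `|φ(t,x)|_s = Σ_{|α|≤s}|Γ^αφ(t,x)|`, for a (finite) family of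
components, `|Γ^αφ|` being the Euclidean norm of the vector of components. -/
def ptwiseNorm (s : ℕ) (us : List (ℝ → ℝ → ℝ → ℝ)) (t x1 x2 : ℝ) : ℝ :=
  ∑ α : Fin 7 → Fin (s + 1),
    if (∑ i, (α i : ℕ)) ≤ s then
      Real.sqrt ((us.map fun u => (GamMulti (fun i => (α i : ℕ)) u t x1 x2) ^ 2).sum)
    else 0

/-- `‖φ(t)‖_s = Σ_{|α|≤s}‖Γ^αφ(t,·)‖_{L²(ℝ²)}`. -/
def sobNorm (s : ℕ) (us : List (ℝ → ℝ → ℝ → ℝ)) (t : ℝ) : ℝ :=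
  ∑ α : Fin 7 → Fin (s + 1),
    if (∑ i, (α i : ℕ)) ≤ s then
      Real.sqrt (∫ x : ℝ × ℝ,
        (us.map fun u => (GamMulti (fun i => (α i : ℕ)) u t x.1 x.2) ^ 2).sum)
    else 0

/-- The components of `∂u = (∂ₜu₁,∂₁u₁,∂₂u₁,∂ₜu₂,∂₁u₂,∂₂u₂)`. -/
def dList (u1 u2 : ℝ → ℝ → ℝ → ℝ) : List (ℝ → ℝ → ℝ → ℝ) :=
  [pt u1, p1 u1, p2 u1, pt u2, p1 u2, p2 u2]

/-- Smooth solution of the free wave equation with data `(φ0,φ1)`. -/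
def IsFreeSolution (φ0 φ1 : ℝ → ℝ → ℝ) (φ : ℝ → ℝ → ℝ → ℝ) : Prop :=
  Smooth3 φ ∧ (∀ t x1 x2 : ℝ, 0 < t → dAlembert φ t x1 x2 = 0) ∧
    (∀ x1 x2 : ℝ, φ 0 x1 x2 = φ0 x1 x2) ∧
    (∀ x1 x2 : ℝ, pt φ 0 x1 x2 = φ1 x1 x2)

/-- Mixed space-time partial `∂^α = ∂ₜ^{α₀}∂₁^{α₁}∂₂^{α₂}`. -/
def dmix (α : Fin 3 → ℕ) (u : ℝ → ℝ → ℝ → ℝ) : ℝ → ℝ → ℝ → ℝ :=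
  pt^[α 0] (p1^[α 1] (p2^[α 2] u))

/-! ### Calculus of partial derivatives -/

/-- Uncurried form of a function of `(t,x₁,x₂)`. -/
def unc (u : ℝ → ℝ → ℝ → ℝ) : ℝ × ℝ × ℝ → ℝ := fun p => u p.1 p.2.1 p.2.2

theorem unc_smooth {u : ℝ → ℝ → ℝ → ℝ} (hu : Smooth3 u) : ContDiff ℝ (⊤ : ℕ∞) (unc u) := hu

theorem unc_diff {u : ℝ → ℝ → ℝ → ℝ} (hu : Smooth3 u) : Differentiable ℝ (unc u) :=
  (unc_smooth hu).differentiable (by simp)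

theorem smooth_cont {u : ℝ → ℝ → ℝ → ℝ} (hu : Smooth3 u) :
    Continuous (fun p : ℝ × ℝ × ℝ => u p.1 p.2.1 p.2.2) := ContDiff.continuous hu

theorem smooth_comp_cont {X : Type*} [TopologicalSpace X] {u : ℝ → ℝ → ℝ → ℝ} (hu : Smooth3 u)
    {a b c : X → ℝ} (ha : Continuous a) (hb : Continuous b) (hc : Continuous c) :
    Continuous (fun x => u (a x) (b x) (c x)) :=
  (smooth_cont hu).comp (ha.prodMk (hb.prodMk hc))

theorem smooth_comp_contOn {X : Type*} [TopologicalSpace X] {u : ℝ → ℝ → ℝ → ℝ} (hu : Smooth3 u)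
    {a b c : X → ℝ} {s : Set X} (ha : ContinuousOn a s) (hb : ContinuousOn b s)
    (hc : ContinuousOn c s) : ContinuousOn (fun x => u (a x) (b x) (c x)) s :=
  (smooth_cont hu).comp_continuousOn (ha.prodMk (hb.prodMk hc))

theorem chain0 {u : ℝ → ℝ → ℝ → ℝ} (hu : Smooth3 u) {a b c : ℝ → ℝ} {a' b' c' s : ℝ}
    (ha : HasDerivAt a a' s) (hb : HasDerivAt b b' s) (hc : HasDerivAt c c' s) :
    HasDerivAt (fun τ => u (a τ) (b τ) (c τ))
      (fderiv ℝ (unc u) (a s, b s, c s) (a', b', c')) s := by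
  have h := (unc_diff hu (a s, b s, c s)).hasFDerivAt
  exact h.comp_hasDerivAt s (ha.prodMk (hb.prodMk hc))

theorem pt_eq {u : ℝ → ℝ → ℝ → ℝ} (hu : Smooth3 u) (t x1 x2 : ℝ) :
    pt u t x1 x2 = fderiv ℝ (unc u) (t, x1, x2) (1, 0, 0) :=
  (chain0 hu (hasDerivAt_id t) (hasDerivAt_const t x1) (hasDerivAt_const t x2)).deriv

theorem p1_eq {u : ℝ → ℝ → ℝ → ℝ} (hu : Smooth3 u) (t x1 x2 : ℝ) :
    p1 u t x1 x2 = fderiv ℝ (unc u) (t, x1, x2) (0, 1, 0) :=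
  (chain0 hu (hasDerivAt_const x1 t) (hasDerivAt_id x1) (hasDerivAt_const x1 x2)).deriv

theorem p2_eq {u : ℝ → ℝ → ℝ → ℝ} (hu : Smooth3 u) (t x1 x2 : ℝ) :
    p2 u t x1 x2 = fderiv ℝ (unc u) (t, x1, x2) (0, 0, 1) :=
  (chain0 hu (hasDerivAt_const x2 t) (hasDerivAt_const x2 x1) (hasDerivAt_id x2)).deriv

/-- Chain rule along a curve, in terms of the three partial derivatives. -/
theorem chain {u : ℝ → ℝ → ℝ → ℝ} (hu : Smooth3 u) {a b c : ℝ → ℝ} {a' b' c' s : ℝ}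
    (ha : HasDerivAt a a' s) (hb : HasDerivAt b b' s) (hc : HasDerivAt c c' s) :
    HasDerivAt (fun τ => u (a τ) (b τ) (c τ))
      (pt u (a s) (b s) (c s) * a' + p1 u (a s) (b s) (c s) * b'
        + p2 u (a s) (b s) (c s) * c') s := by
  have h := chain0 hu ha hb hc
  rw [pt_eq hu, p1_eq hu, p2_eq hu]
  convert h using 1
  have : ((a', b', c') : ℝ × ℝ × ℝ) = a' • ((1 : ℝ), (0 : ℝ), (0 : ℝ)) + b' • ((0 : ℝ), (1 : ℝ), (0 : ℝ))
      + c' • ((0 : ℝ), (0 : ℝ), (1 : ℝ)) := by simp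
  rw [this]
  simp only [map_add, map_smul, smul_eq_mul]
  ring

theorem pt_hd {u : ℝ → ℝ → ℝ → ℝ} (hu : Smooth3 u) (t x1 x2 : ℝ) :
    HasDerivAt (fun s => u s x1 x2) (pt u t x1 x2) t := by
  simpa using chain hu (hasDerivAt_id t) (hasDerivAt_const t x1) (hasDerivAt_const t x2)

theorem p1_hd {u : ℝ → ℝ → ℝ → ℝ} (hu : Smooth3 u) (t x1 x2 : ℝ) :
    HasDerivAt (fun s => u t s x2) (p1 u t x1 x2) x1 := by
  simpa using chain hu (hasDerivAt_const x1 t) (hasDerivAt_id x1) (hasDerivAt_const x1 x2)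

theorem p2_hd {u : ℝ → ℝ → ℝ → ℝ} (hu : Smooth3 u) (t x1 x2 : ℝ) :
    HasDerivAt (fun s => u t x1 s) (p2 u t x1 x2) x2 := by
  simpa using chain hu (hasDerivAt_const x2 t) (hasDerivAt_const x2 x1) (hasDerivAt_id x2)

theorem smooth_fderiv {u : ℝ → ℝ → ℝ → ℝ} (hu : Smooth3 u) (v : ℝ × ℝ × ℝ) :
    ContDiff ℝ (⊤ : ℕ∞) (fun p => fderiv ℝ (unc u) p v) := by
  have : ContDiff ℝ (⊤ : ℕ∞) (fderiv ℝ (unc u)) :=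
    (unc_smooth hu).fderiv_right (by simp)
  exact this.clm_apply contDiff_const

/-- The three coordinate derivatives `∂ₜ, ∂₁, ∂₂`. -/
def P (j : Fin 3) (u : ℝ → ℝ → ℝ → ℝ) : ℝ → ℝ → ℝ → ℝ :=
  match j with
  | 0 => pt u
  | 1 => p1 u
  | 2 => p2 u

theorem smooth_pt {u : ℝ → ℝ → ℝ → ℝ} (hu : Smooth3 u) : Smooth3 (pt u) := by
  have h := smooth_fderiv hu (1, 0, 0)
  unfold Smooth3
  convert h using 2 with p
  exact pt_eq hu _ _ _

theorem smooth_p1 {u : ℝ → ℝ → ℝ → ℝ} (hu : Smooth3 u) : Smooth3 (p1 u) := by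
  have h := smooth_fderiv hu (0, 1, 0)
  unfold Smooth3
  convert h using 2 with p
  exact p1_eq hu _ _ _

theorem smooth_p2 {u : ℝ → ℝ → ℝ → ℝ} (hu : Smooth3 u) : Smooth3 (p2 u) := by
  have h := smooth_fderiv hu (0, 0, 1)
  unfold Smooth3
  convert h using 2 with p
  exact p2_eq hu _ _ _

theorem smooth_P (j : Fin 3) {u : ℝ → ℝ → ℝ → ℝ} (hu : Smooth3 u) : Smooth3 (P j u) := by
  fin_cases j
  · exact smooth_pt hu
  · exact smooth_p1 hu
  · exact smooth_p2 hu

theorem smooth_add {u v : ℝ → ℝ → ℝ → ℝ} (hu : Smooth3 u) (hv : Smooth3 v) : Smooth3 (u + v) :=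
  ContDiff.add hu hv

theorem smooth_sub {u v : ℝ → ℝ → ℝ → ℝ} (hu : Smooth3 u) (hv : Smooth3 v) : Smooth3 (u - v) :=
  ContDiff.sub hu hv

theorem smooth_mul {u v : ℝ → ℝ → ℝ → ℝ} (hu : Smooth3 u) (hv : Smooth3 v) : Smooth3 (u * v) :=
  ContDiff.mul hu hv

theorem smooth_smul (c : ℝ) {u : ℝ → ℝ → ℝ → ℝ} (hu : Smooth3 u) : Smooth3 (c • u) :=
  ContDiff.mul contDiff_const hu

/-- The coordinate function `t`. -/
def ct : ℝ → ℝ → ℝ → ℝ := fun t _ _ => t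
/-- The coordinate function `x₁`. -/
def c1 : ℝ → ℝ → ℝ → ℝ := fun _ x _ => x
/-- The coordinate function `x₂`. -/
def c2 : ℝ → ℝ → ℝ → ℝ := fun _ _ y => y

theorem smooth_ct : Smooth3 ct := contDiff_fst
theorem smooth_c1 : Smooth3 c1 := contDiff_snd.fst
theorem smooth_c2 : Smooth3 c2 := contDiff_snd.snd

theorem pt_add {u v : ℝ → ℝ → ℝ → ℝ} (hu : Smooth3 u) (hv : Smooth3 v) :
    pt (u + v) = pt u + pt v := by
  funext t x y; exact ((pt_hd hu t x y).add (pt_hd hv t x y)).deriv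
theorem p1_add {u v : ℝ → ℝ → ℝ → ℝ} (hu : Smooth3 u) (hv : Smooth3 v) :
    p1 (u + v) = p1 u + p1 v := by
  funext t x y; exact ((p1_hd hu t x y).add (p1_hd hv t x y)).deriv
theorem p2_add {u v : ℝ → ℝ → ℝ → ℝ} (hu : Smooth3 u) (hv : Smooth3 v) :
    p2 (u + v) = p2 u + p2 v := by
  funext t x y; exact ((p2_hd hu t x y).add (p2_hd hv t x y)).deriv
theorem pt_mul {u v : ℝ → ℝ → ℝ → ℝ} (hu : Smooth3 u) (hv : Smooth3 v) :
    pt (u * v) = pt u * v + u * pt v := by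
  funext t x y; exact ((pt_hd hu t x y).mul (pt_hd hv t x y)).deriv
theorem p1_mul {u v : ℝ → ℝ → ℝ → ℝ} (hu : Smooth3 u) (hv : Smooth3 v) :
    p1 (u * v) = p1 u * v + u * p1 v := by
  funext t x y; exact ((p1_hd hu t x y).mul (p1_hd hv t x y)).deriv
theorem p2_mul {u v : ℝ → ℝ → ℝ → ℝ} (hu : Smooth3 u) (hv : Smooth3 v) :
    p2 (u * v) = p2 u * v + u * p2 v := by
  funext t x y; exact ((p2_hd hu t x y).mul (p2_hd hv t x y)).deriv
theorem pt_smul (c : ℝ) {u : ℝ → ℝ → ℝ → ℝ} (hu : Smooth3 u) : pt (c • u) = c • pt u := by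
  funext t x y; exact ((pt_hd hu t x y).const_mul c).deriv
theorem p1_smul (c : ℝ) {u : ℝ → ℝ → ℝ → ℝ} (hu : Smooth3 u) : p1 (c • u) = c • p1 u := by
  funext t x y; exact ((p1_hd hu t x y).const_mul c).deriv
theorem p2_smul (c : ℝ) {u : ℝ → ℝ → ℝ → ℝ} (hu : Smooth3 u) : p2 (c • u) = c • p2 u := by
  funext t x y; exact ((p2_hd hu t x y).const_mul c).deriv

theorem P_add (j : Fin 3) {u v : ℝ → ℝ → ℝ → ℝ} (hu : Smooth3 u) (hv : Smooth3 v) :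
    P j (u + v) = P j u + P j v := by
  fin_cases j
  · exact pt_add hu hv
  · exact p1_add hu hv
  · exact p2_add hu hv
theorem P_mul (j : Fin 3) {u v : ℝ → ℝ → ℝ → ℝ} (hu : Smooth3 u) (hv : Smooth3 v) :
    P j (u * v) = P j u * v + u * P j v := by
  fin_cases j
  · exact pt_mul hu hv
  · exact p1_mul hu hv
  · exact p2_mul hu hv
theorem P_smul (j : Fin 3) (c : ℝ) {u : ℝ → ℝ → ℝ → ℝ} (hu : Smooth3 u) :
    P j (c • u) = c • P j u := by
  fin_cases j
  · exact pt_smul c hu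
  · exact p1_smul c hu
  · exact p2_smul c hu

theorem pt_ct : pt ct = 1 := by funext t x y; exact (hasDerivAt_id t).deriv
theorem pt_c1 : pt c1 = 0 := by funext t x y; exact (hasDerivAt_const t x).deriv
theorem pt_c2 : pt c2 = 0 := by funext t x y; exact (hasDerivAt_const t y).deriv
theorem p1_ct : p1 ct = 0 := by funext t x y; exact (hasDerivAt_const x t).deriv
theorem p1_c1 : p1 c1 = 1 := by funext t x y; exact (hasDerivAt_id x).deriv
theorem p1_c2 : p1 c2 = 0 := by funext t x y; exact (hasDerivAt_const x y).deriv
theorem p2_ct : p2 ct = 0 := by funext t x y; exact (hasDerivAt_const y t).deriv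
theorem p2_c1 : p2 c1 = 0 := by funext t x y; exact (hasDerivAt_const y x).deriv
theorem p2_c2 : p2 c2 = 1 := by funext t x y; exact (hasDerivAt_id y).deriv

theorem fderiv_comm {u : ℝ → ℝ → ℝ → ℝ} (hu : Smooth3 u) (p v w : ℝ × ℝ × ℝ) :
    fderiv ℝ (fun q => fderiv ℝ (unc u) q v) p w = fderiv ℝ (fun q => fderiv ℝ (unc u) q w) p v := by
  have hd : DifferentiableAt ℝ (fderiv ℝ (unc u)) p := by
    have : ContDiff ℝ (⊤ : ℕ∞) (fderiv ℝ (unc u)) :=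
      (unc_smooth hu).fderiv_right (by simp)
    exact (this.differentiable (by simp)) p
  have hs : IsSymmSndFDerivAt ℝ (unc u) p := by
    apply ContDiffAt.isSymmSndFDerivAt (unc_smooth hu).contDiffAt
    rw [minSmoothness_of_isRCLikeNormedField]
    exact WithTop.coe_le_coe.2 (le_top : (2 : ℕ∞) ≤ ⊤)
  rw [fderiv_clm_apply hd (differentiableAt_const v), fderiv_clm_apply hd (differentiableAt_const w)]
  simpa using hs w v

theorem unc_P_eq {u : ℝ → ℝ → ℝ → ℝ} (hu : Smooth3 u) :
    unc (pt u) = (fun q => fderiv ℝ (unc u) q (1, 0, 0)) ∧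
    unc (p1 u) = (fun q => fderiv ℝ (unc u) q (0, 1, 0)) ∧
    unc (p2 u) = (fun q => fderiv ℝ (unc u) q (0, 0, 1)) :=
  ⟨funext fun _ => pt_eq hu _ _ _, funext fun _ => p1_eq hu _ _ _, funext fun _ => p2_eq hu _ _ _⟩

theorem p1_pt {u : ℝ → ℝ → ℝ → ℝ} (hu : Smooth3 u) : p1 (pt u) = pt (p1 u) := by
  funext t x y
  rw [p1_eq (smooth_pt hu), pt_eq (smooth_p1 hu), (unc_P_eq hu).1, (unc_P_eq hu).2.1, fderiv_comm hu]
theorem p2_pt {u : ℝ → ℝ → ℝ → ℝ} (hu : Smooth3 u) : p2 (pt u) = pt (p2 u) := by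
  funext t x y
  rw [p2_eq (smooth_pt hu), pt_eq (smooth_p2 hu), (unc_P_eq hu).1, (unc_P_eq hu).2.2, fderiv_comm hu]
theorem p2_p1 {u : ℝ → ℝ → ℝ → ℝ} (hu : Smooth3 u) : p2 (p1 u) = p1 (p2 u) := by
  funext t x y
  rw [p2_eq (smooth_p1 hu), p1_eq (smooth_p2 hu), (unc_P_eq hu).2.1, (unc_P_eq hu).2.2, fderiv_comm hu]

theorem P_comm (i j : Fin 3) {u : ℝ → ℝ → ℝ → ℝ} (hu : Smooth3 u) : P i (P j u) = P j (P i u) := by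
  fin_cases i <;> fin_cases j <;>
    first
    | rfl
    | exact p1_pt hu
    | exact (p1_pt hu).symm
    | exact p2_pt hu
    | exact (p2_pt hu).symm
    | exact p2_p1 hu
    | exact (p2_p1 hu).symm

theorem box_eq (u : ℝ → ℝ → ℝ → ℝ) :
    dAlembert u = P 0 (P 0 u) - P 1 (P 1 u) - P 2 (P 2 u) := rfl

theorem smooth_box {u : ℝ → ℝ → ℝ → ℝ} (hu : Smooth3 u) : Smooth3 (dAlembert u) := by
  rw [box_eq]
  exact smooth_sub (smooth_sub (smooth_P _ (smooth_P _ hu)) (smooth_P _ (smooth_P _ hu)))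
    (smooth_P _ (smooth_P _ hu))

theorem P_sub (j : Fin 3) {u v : ℝ → ℝ → ℝ → ℝ} (hu : Smooth3 u) (hv : Smooth3 v) :
    P j (u - v) = P j u - P j v := by
  have : u - v = u + (-1 : ℝ) • v := by simp [sub_eq_add_neg]
  rw [this, P_add j hu (smooth_smul _ hv), P_smul j _ hv]; simp [sub_eq_add_neg]

/-- Vanishing on an open set, for functions of `(t,x₁,x₂)`. -/
def VanishOn (O : Set (ℝ × ℝ × ℝ)) (u : ℝ → ℝ → ℝ → ℝ) : Prop :=
  ∀ p ∈ O, u p.1 p.2.1 p.2.2 = 0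

theorem P_vanish (j : Fin 3) {O : Set (ℝ × ℝ × ℝ)} (hO : IsOpen O) {u : ℝ → ℝ → ℝ → ℝ}
    (hu : Smooth3 u) (h : VanishOn O u) : VanishOn O (P j u) := by
  rintro ⟨t, x, y⟩ hp
  have : unc u =ᶠ[𝓝 (t, x, y)] fun _ => 0 := by
    filter_upwards [hO.mem_nhds hp] with q hq using h q hq
  have h0 : fderiv ℝ (unc u) (t, x, y) = 0 := by rw [this.fderiv_eq]; simp
  fin_cases j
  · show pt u t x y = 0
    rw [pt_eq hu, h0]; rfl
  · show p1 u t x y = 0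
    rw [p1_eq hu, h0]; rfl
  · show p2 u t x y = 0
    rw [p2_eq hu, h0]; rfl

theorem vanish_closure {O : Set (ℝ × ℝ × ℝ)} {u : ℝ → ℝ → ℝ → ℝ}
    (hu : Smooth3 u) (h : VanishOn O u) : VanishOn (closure O) u := by
  intro p hp
  have hc : IsClosed {q : ℝ × ℝ × ℝ | u q.1 q.2.1 q.2.2 = 0} :=
    isClosed_eq (smooth_cont hu) continuous_const
  exact (closure_minimal h hc) hp

/-! ### Commuting vector fields: translations and boosts -/

/-- A family of derivations that commute with `□` and whose commutators with the coordinate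
derivatives are again coordinate derivatives (with a coefficient of modulus at most one). -/
structure CommFam {ι : Type} (Z : ι → (ℝ → ℝ → ℝ → ℝ) → (ℝ → ℝ → ℝ → ℝ)) : Prop where
  smooth : ∀ i u, Smooth3 u → Smooth3 (Z i u)
  add : ∀ i u v, Smooth3 u → Smooth3 v → Z i (u + v) = Z i u + Z i v
  mul : ∀ i u v, Smooth3 u → Smooth3 v → Z i (u * v) = Z i u * v + u * Z i v
  smul : ∀ i (c : ℝ) u, Smooth3 u → Z i (c • u) = c • Z i u
  box : ∀ i u, Smooth3 u → Z i (dAlembert u) = dAlembert (Z i u)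
  comm : ∀ i j u, Smooth3 u → ∃ (κ : ℝ) (k : Fin 3), |κ| ≤ 1 ∧
    Z i (P j u) = P j (Z i u) + κ • P k u
  vanish : ∀ i u (O : Set (ℝ × ℝ × ℝ)), IsOpen O → Smooth3 u → VanishOn O u → VanishOn O (Z i u)

/-- Iterated application of a family of operators along a word; the head acts first. -/
def Zw {ι : Type} (Z : ι → (ℝ → ℝ → ℝ → ℝ) → (ℝ → ℝ → ℝ → ℝ)) :
    List ι → (ℝ → ℝ → ℝ → ℝ) → (ℝ → ℝ → ℝ → ℝ)
  | [], u => u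
  | i :: w, u => Zw Z w (Z i u)

section
variable {ι : Type} {Z : ι → (ℝ → ℝ → ℝ → ℝ) → (ℝ → ℝ → ℝ → ℝ)}

theorem Zw_append (w w' : List ι) (u : ℝ → ℝ → ℝ → ℝ) : Zw Z (w ++ w') u = Zw Z w' (Zw Z w u) := by
  induction w generalizing u with
  | nil => rfl
  | cons i w ih => exact ih _

theorem Zw_smooth (hZ : CommFam Z) (w : List ι) {u : ℝ → ℝ → ℝ → ℝ} (hu : Smooth3 u) :
    Smooth3 (Zw Z w u) := by
  induction w generalizing u with
  | nil => exact hu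
  | cons i w ih => exact ih (hZ.smooth i u hu)

theorem Zw_add (hZ : CommFam Z) (w : List ι) {u v : ℝ → ℝ → ℝ → ℝ} (hu : Smooth3 u)
    (hv : Smooth3 v) : Zw Z w (u + v) = Zw Z w u + Zw Z w v := by
  induction w generalizing u v with
  | nil => rfl
  | cons i w ih =>
    show Zw Z w (Z i (u + v)) = _
    rw [hZ.add i u v hu hv]; exact ih (hZ.smooth i u hu) (hZ.smooth i v hv)

theorem Zw_smul (hZ : CommFam Z) (w : List ι) (c : ℝ) {u : ℝ → ℝ → ℝ → ℝ} (hu : Smooth3 u) :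
    Zw Z w (c • u) = c • Zw Z w u := by
  induction w generalizing u with
  | nil => rfl
  | cons i w ih =>
    show Zw Z w (Z i (c • u)) = _
    rw [hZ.smul i c u hu]; exact ih (hZ.smooth i u hu)

theorem Zw_box (hZ : CommFam Z) (w : List ι) {u : ℝ → ℝ → ℝ → ℝ} (hu : Smooth3 u) :
    Zw Z w (dAlembert u) = dAlembert (Zw Z w u) := by
  induction w generalizing u with
  | nil => rfl
  | cons i w ih =>
    show Zw Z w (Z i (dAlembert u)) = _
    rw [hZ.box i u hu]; exact ih (hZ.smooth i u hu)

theorem Zw_vanish (hZ : CommFam Z) (w : List ι) {u : ℝ → ℝ → ℝ → ℝ} {O : Set (ℝ × ℝ × ℝ)}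
    (hO : IsOpen O) (hu : Smooth3 u) (h : VanishOn O u) : VanishOn O (Zw Z w u) := by
  induction w generalizing u with
  | nil => exact h
  | cons i w ih => exact ih (hZ.smooth i u hu) (hZ.vanish i u O hO hu h)

/-- Commuting a word past one coordinate derivative, pointwise. -/
theorem Zw_P_bound (hZ : CommFam Z) (w : List ι) {v : ℝ → ℝ → ℝ → ℝ} (hv : Smooth3 v)
    (t x y Y q : ℝ) (hq : 1 ≤ q) (hY : 0 ≤ Y)
    (h : ∀ w' : List ι, w'.length ≤ w.length → ∀ k, |P k (Zw Z w' v) t x y| ≤ Y * q ^ w'.length)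
    (j : Fin 3) : |Zw Z w (P j v) t x y| ≤ 2 ^ w.length * (Y * q ^ w.length) := by
  induction w generalizing v Y j with
  | nil => simpa [Zw] using h [] le_rfl j
  | cons i w ih =>
    obtain ⟨κ, k, hκ, he⟩ := hZ.comm i j v hv
    have e : Zw Z (i :: w) (P j v) = Zw Z w (P j (Z i v)) + κ • Zw Z w (P k v) := by
      show Zw Z w (Z i (P j v)) = _
      rw [he, Zw_add hZ w (smooth_P j (hZ.smooth i v hv)) (smooth_smul _ (smooth_P k hv)),
        Zw_smul hZ w κ (smooth_P k hv)]
    have h1 := ih (hZ.smooth i v hv) (Y * q) (by positivity) (fun w' hw' k => by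
      have := h (i :: w') (by simpa using hw') k
      simpa [Zw, pow_succ', mul_assoc] using this) j
    have h2 := ih hv Y hY (fun w' hw' k => h w' (hw'.trans (by simp)) k) k
    rw [e]
    show |Zw Z w (P j (Z i v)) t x y + κ * Zw Z w (P k v) t x y| ≤ _
    have h3 : |κ * Zw Z w (P k v) t x y| ≤ 2 ^ w.length * (Y * q ^ w.length) := by
      rw [abs_mul]
      calc _ ≤ 1 * |Zw Z w (P k v) t x y| := by gcongr
        _ ≤ _ := by simpa using h2
    have h4 : 2 ^ w.length * (Y * q ^ w.length) ≤ 2 ^ w.length * (Y * q * q ^ w.length) := by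
      have : Y ≤ Y * q := le_mul_of_one_le_right hY hq
      gcongr
    calc _ ≤ _ := abs_add_le _ _
      _ ≤ 2 ^ w.length * (Y * q * q ^ w.length) + 2 ^ w.length * (Y * q * q ^ w.length) :=
        add_le_add h1 (h3.trans h4)
      _ = _ := by simp [pow_succ]; ring

/-- Leibniz rule for a triple product, in the form of a bound for all splittings of the word. -/
theorem Zw_mul3_bound (hZ : CommFam Z) (w : List ι) {f g h : ℝ → ℝ → ℝ → ℝ} (hf : Smooth3 f)
    (hg : Smooth3 g) (hh : Smooth3 h) (t x y R : ℝ)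
    (H : ∀ a b c : List ι, a.length + b.length + c.length = w.length →
      |Zw Z a f t x y * Zw Z b g t x y * Zw Z c h t x y| ≤ R) :
    |Zw Z w (f * g * h) t x y| ≤ 3 ^ w.length * R := by
  induction w generalizing f g h with
  | nil => simpa [Zw] using H [] [] [] rfl
  | cons i w ih =>
    have e : Zw Z (i :: w) (f * g * h) =
        Zw Z w (Z i f * g * h) + Zw Z w (f * Z i g * h) + Zw Z w (f * g * Z i h) := by
      show Zw Z w (Z i (f * g * h)) = _
      have s1 := hZ.smooth i f hf
      have s2 := hZ.smooth i g hg
      have s3 := hZ.smooth i h hh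
      rw [hZ.mul i _ _ (smooth_mul hf hg) hh, hZ.mul i _ _ hf hg,
        show (Z i f * g + f * Z i g) * h + f * g * Z i h
          = (Z i f * g * h + f * Z i g * h) + f * g * Z i h by ring,
        Zw_add hZ w (smooth_add (smooth_mul (smooth_mul s1 hg) hh)
          (smooth_mul (smooth_mul hf s2) hh)) (smooth_mul (smooth_mul hf hg) s3),
        Zw_add hZ w (smooth_mul (smooth_mul s1 hg) hh) (smooth_mul (smooth_mul hf s2) hh)]
    have h1 := ih (hZ.smooth i f hf) hg hh (fun a b c habc => H (i :: a) b c (by simp; omega))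
    have h2 := ih hf (hZ.smooth i g hg) hh (fun a b c habc => H a (i :: b) c (by simp; omega))
    have h3 := ih hf hg (hZ.smooth i h hh) (fun a b c habc => H a b (i :: c) (by simp; omega))
    rw [e]
    show |Zw Z w (Z i f * g * h) t x y + Zw Z w (f * Z i g * h) t x y
      + Zw Z w (f * g * Z i h) t x y| ≤ _
    rw [List.length_cons, pow_succ]
    rw [abs_le] at h1 h2 h3 ⊢
    constructor <;> linarith [h1.1, h1.2, h2.1, h2.2, h3.1, h3.2]

/-- Pointwise bound of the commuted cubic nonlinearity: at most one of the three factors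
carries more than `m` vector fields, so two factors are estimated by `β` and one by `M`. -/
theorem cubic_bound (hZ : CommFam Z) (m : ℕ) {u v : ℝ → ℝ → ℝ → ℝ} (hu : Smooth3 u)
    (hv : Smooth3 v) (t x y β M q : ℝ) (hq : 1 ≤ q) (hβ : 0 ≤ β) (hM : 0 ≤ M) (w : List ι)
    (hw : w.length ≤ 2 * m + 1)
    (hu1 : ∀ w' : List ι, w'.length ≤ m → ∀ k, |P k (Zw Z w' u) t x y| ≤ β * q ^ w'.length)
    (hv1 : ∀ w' : List ι, w'.length ≤ m → ∀ k, |P k (Zw Z w' v) t x y| ≤ β * q ^ w'.length)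
    (hu2 : ∀ w' : List ι, w'.length ≤ w.length → ∀ k,
      |P k (Zw Z w' u) t x y| ≤ M * q ^ w'.length)
    (hv2 : ∀ w' : List ι, w'.length ≤ w.length → ∀ k,
      |P k (Zw Z w' v) t x y| ≤ M * q ^ w'.length) :
    |Zw Z w (pt v * pt v * pt u) t x y| ≤ 24 ^ w.length * (β ^ 2 * M * q ^ w.length) := by
  have key : ∀ f : ℝ → ℝ → ℝ → ℝ, Smooth3 f →
      (∀ w' : List ι, w'.length ≤ m → ∀ k, |P k (Zw Z w' f) t x y| ≤ β * q ^ w'.length) →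
      (∀ w' : List ι, w'.length ≤ w.length → ∀ k,
        |P k (Zw Z w' f) t x y| ≤ M * q ^ w'.length) →
      ∀ a : List ι, (a.length ≤ m → |Zw Z a (pt f) t x y| ≤ 2 ^ a.length * (β * q ^ a.length)) ∧
        (a.length ≤ w.length → |Zw Z a (pt f) t x y| ≤ 2 ^ a.length * (M * q ^ a.length)) := by
    intro f hf h1 h2 a
    exact ⟨fun ha => Zw_P_bound hZ a hf t x y β q hq hβ (fun w' hw' k => h1 w' (hw'.trans ha) k) 0,
      fun ha => Zw_P_bound hZ a hf t x y M q hq hM (fun w' hw' k => h2 w' (hw'.trans ha) k) 0⟩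
  have := Zw_mul3_bound hZ w (smooth_pt hv) (smooth_pt hv) (smooth_pt hu) t x y
    (2 ^ w.length * (β ^ 2 * M * q ^ w.length)) (by
      intro a b c habc
      obtain ⟨a1, a2⟩ := key v hv hv1 hv2 a
      obtain ⟨b1, b2⟩ := key v hv hv1 hv2 b
      obtain ⟨d1, d2⟩ := key u hu hu1 hu2 c
      rw [abs_mul, abs_mul]
      have e2 : (2 : ℝ) ^ w.length = 2 ^ a.length * 2 ^ b.length * 2 ^ c.length := by
        rw [← habc, pow_add, pow_add]
      have eq : q ^ w.length = q ^ a.length * q ^ b.length * q ^ c.length := by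
        rw [← habc, pow_add, pow_add]
      have q0 : 0 ≤ q := by linarith
      rw [e2, eq]
      by_cases ha : a.length ≤ m
      · by_cases hb : b.length ≤ m
        · calc _ ≤ (2 ^ a.length * (β * q ^ a.length)) * (2 ^ b.length * (β * q ^ b.length)) *
              (2 ^ c.length * (M * q ^ c.length)) := by
                gcongr
                · exact a1 ha
                · exact b1 hb
                · exact d2 (by omega)
            _ = _ := by ring
        · calc _ ≤ (2 ^ a.length * (β * q ^ a.length)) * (2 ^ b.length * (M * q ^ b.length)) *
              (2 ^ c.length * (β * q ^ c.length)) := by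
                gcongr
                · exact a1 ha
                · exact b2 (by omega)
                · exact d1 (by omega)
            _ = _ := by ring
      · calc _ ≤ (2 ^ a.length * (M * q ^ a.length)) * (2 ^ b.length * (β * q ^ b.length)) *
              (2 ^ c.length * (β * q ^ c.length)) := by
                gcongr
                · exact a2 (by omega)
                · exact b1 (by omega)
                · exact d1 (by omega)
          _ = _ := by ring)
  refine this.trans ?_
  rw [← mul_assoc, ← mul_pow]
  have : (3 * 2 : ℝ) ^ w.length ≤ 24 ^ w.length := by gcongr; norm_num
  have q0 : 0 ≤ q := by linarith
  gcongr

end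

theorem P_comm_box (j : Fin 3) {u : ℝ → ℝ → ℝ → ℝ} (hu : Smooth3 u) :
    P j (dAlembert u) = dAlembert (P j u) := by
  have h : ∀ i, P j (P i (P i u)) = P i (P i (P j u)) := fun i => by
    rw [P_comm j i (smooth_P i hu), P_comm j i hu]
  have s : ∀ i, Smooth3 (P i (P i u)) := fun i => smooth_P _ (smooth_P _ hu)
  rw [box_eq, box_eq, P_sub j (smooth_sub (s 0) (s 1)) (s 2), P_sub j (s 0) (s 1), h, h, h]

/-- The coordinate derivatives form a commuting family. -/
theorem commFam_P : CommFam P where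
  smooth i _ hu := smooth_P i hu
  add i _ _ hu hv := P_add i hu hv
  mul i _ _ hu hv := P_mul i hu hv
  smul i c _ hu := P_smul i c hu
  box i _ hu := P_comm_box i hu
  comm i j u hu := ⟨0, 0, by simp, by simp [P_comm i j hu]⟩
  vanish i _ _ hO hu h := P_vanish i hO hu h

/-- The Lorentz boosts `L_a = t∂_a + x_a∂ₜ`. -/
def L (a : Fin 2) (u : ℝ → ℝ → ℝ → ℝ) : ℝ → ℝ → ℝ → ℝ :=
  match a with
  | 0 => ct * p1 u + c1 * pt u
  | 1 => ct * p2 u + c2 * pt u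

theorem L0_apply (u : ℝ → ℝ → ℝ → ℝ) (t x y : ℝ) : L 0 u t x y = t * p1 u t x y + x * pt u t x y :=
  rfl
theorem L1_apply (u : ℝ → ℝ → ℝ → ℝ) (t x y : ℝ) : L 1 u t x y = t * p2 u t x y + y * pt u t x y :=
  rfl

theorem smooth_L (a : Fin 2) {u : ℝ → ℝ → ℝ → ℝ} (hu : Smooth3 u) : Smooth3 (L a u) := by
  fin_cases a
  · exact smooth_add (smooth_mul smooth_ct (smooth_p1 hu)) (smooth_mul smooth_c1 (smooth_pt hu))
  · exact smooth_add (smooth_mul smooth_ct (smooth_p2 hu)) (smooth_mul smooth_c2 (smooth_pt hu))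

theorem boost_add (a : Fin 2) {u v : ℝ → ℝ → ℝ → ℝ} (hu : Smooth3 u) (hv : Smooth3 v) :
    L a (u + v) = L a u + L a v := by
  fin_cases a
  · show ct * p1 (u + v) + c1 * pt (u + v) = (ct * p1 u + c1 * pt u) + (ct * p1 v + c1 * pt v)
    rw [p1_add hu hv, pt_add hu hv]; ring
  · show ct * p2 (u + v) + c2 * pt (u + v) = (ct * p2 u + c2 * pt u) + (ct * p2 v + c2 * pt v)
    rw [p2_add hu hv, pt_add hu hv]; ring

theorem boost_mul (a : Fin 2) {u v : ℝ → ℝ → ℝ → ℝ} (hu : Smooth3 u) (hv : Smooth3 v) :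
    L a (u * v) = L a u * v + u * L a v := by
  fin_cases a
  · show ct * p1 (u * v) + c1 * pt (u * v)
      = (ct * p1 u + c1 * pt u) * v + u * (ct * p1 v + c1 * pt v)
    rw [p1_mul hu hv, pt_mul hu hv]; ring
  · show ct * p2 (u * v) + c2 * pt (u * v)
      = (ct * p2 u + c2 * pt u) * v + u * (ct * p2 v + c2 * pt v)
    rw [p2_mul hu hv, pt_mul hu hv]; ring

theorem boost_smul (a : Fin 2) (c : ℝ) {u : ℝ → ℝ → ℝ → ℝ} (hu : Smooth3 u) :
    L a (c • u) = c • L a u := by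
  fin_cases a
  · show ct * p1 (c • u) + c1 * pt (c • u) = c • (ct * p1 u + c1 * pt u)
    rw [p1_smul c hu, pt_smul c hu, smul_add, mul_smul_comm, mul_smul_comm]
  · show ct * p2 (c • u) + c2 * pt (c • u) = c • (ct * p2 u + c2 * pt u)
    rw [p2_smul c hu, pt_smul c hu, smul_add, mul_smul_comm, mul_smul_comm]

theorem boost_vanish (a : Fin 2) {O : Set (ℝ × ℝ × ℝ)} (hO : IsOpen O) {u : ℝ → ℝ → ℝ → ℝ}
    (hu : Smooth3 u) (h : VanishOn O u) : VanishOn O (L a u) := by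
  intro p hp
  have h0 : pt u p.1 p.2.1 p.2.2 = 0 := P_vanish 0 hO hu h p hp
  have h1 : p1 u p.1 p.2.1 p.2.2 = 0 := P_vanish 1 hO hu h p hp
  have h2 : p2 u p.1 p.2.1 p.2.2 = 0 := P_vanish 2 hO hu h p hp
  fin_cases a
  · show p.1 * p1 u p.1 p.2.1 p.2.2 + p.2.1 * pt u p.1 p.2.1 p.2.2 = 0
    simp [h0, h1]
  · show p.1 * p2 u p.1 p.2.1 p.2.2 + p.2.2 * pt u p.1 p.2.1 p.2.2 = 0
    simp [h0, h2]


theorem P0_L0 {u : ℝ → ℝ → ℝ → ℝ} (hu : Smooth3 u) : P 0 (L 0 u) = L 0 (P 0 u) + P 1 u := by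
  show pt (ct * p1 u + c1 * pt u) = (ct * p1 (pt u) + c1 * pt (pt u)) + p1 u
  rw [pt_add (smooth_mul smooth_ct (smooth_p1 hu)) (smooth_mul smooth_c1 (smooth_pt hu)),
    pt_mul smooth_ct (smooth_p1 hu), pt_mul smooth_c1 (smooth_pt hu), pt_ct, pt_c1, p1_pt hu]
  ring
theorem P1_L0 {u : ℝ → ℝ → ℝ → ℝ} (hu : Smooth3 u) : P 1 (L 0 u) = L 0 (P 1 u) + P 0 u := by
  show p1 (ct * p1 u + c1 * pt u) = (ct * p1 (p1 u) + c1 * pt (p1 u)) + pt u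
  rw [p1_add (smooth_mul smooth_ct (smooth_p1 hu)) (smooth_mul smooth_c1 (smooth_pt hu)),
    p1_mul smooth_ct (smooth_p1 hu), p1_mul smooth_c1 (smooth_pt hu), p1_ct, p1_c1, p1_pt hu]
  ring
theorem P2_L0 {u : ℝ → ℝ → ℝ → ℝ} (hu : Smooth3 u) : P 2 (L 0 u) = L 0 (P 2 u) := by
  show p2 (ct * p1 u + c1 * pt u) = (ct * p1 (p2 u) + c1 * pt (p2 u))
  rw [p2_add (smooth_mul smooth_ct (smooth_p1 hu)) (smooth_mul smooth_c1 (smooth_pt hu)),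
    p2_mul smooth_ct (smooth_p1 hu), p2_mul smooth_c1 (smooth_pt hu), p2_ct, p2_c1, p2_pt hu,
    p2_p1 hu]
  ring
theorem P0_L1 {u : ℝ → ℝ → ℝ → ℝ} (hu : Smooth3 u) : P 0 (L 1 u) = L 1 (P 0 u) + P 2 u := by
  show pt (ct * p2 u + c2 * pt u) = (ct * p2 (pt u) + c2 * pt (pt u)) + p2 u
  rw [pt_add (smooth_mul smooth_ct (smooth_p2 hu)) (smooth_mul smooth_c2 (smooth_pt hu)),
    pt_mul smooth_ct (smooth_p2 hu), pt_mul smooth_c2 (smooth_pt hu), pt_ct, pt_c2, p2_pt hu]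
  ring
theorem P1_L1 {u : ℝ → ℝ → ℝ → ℝ} (hu : Smooth3 u) : P 1 (L 1 u) = L 1 (P 1 u) := by
  show p1 (ct * p2 u + c2 * pt u) = (ct * p2 (p1 u) + c2 * pt (p1 u))
  rw [p1_add (smooth_mul smooth_ct (smooth_p2 hu)) (smooth_mul smooth_c2 (smooth_pt hu)),
    p1_mul smooth_ct (smooth_p2 hu), p1_mul smooth_c2 (smooth_pt hu), p1_ct, p1_c2, p1_pt hu,
    p2_p1 hu]
  ring
theorem P2_L1 {u : ℝ → ℝ → ℝ → ℝ} (hu : Smooth3 u) : P 2 (L 1 u) = L 1 (P 2 u) + P 0 u := by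
  show p2 (ct * p2 u + c2 * pt u) = (ct * p2 (p2 u) + c2 * pt (p2 u)) + pt u
  rw [p2_add (smooth_mul smooth_ct (smooth_p2 hu)) (smooth_mul smooth_c2 (smooth_pt hu)),
    p2_mul smooth_ct (smooth_p2 hu), p2_mul smooth_c2 (smooth_pt hu), p2_ct, p2_c2, p2_pt hu]
  ring

theorem boost_sub (a : Fin 2) {u v : ℝ → ℝ → ℝ → ℝ} (hu : Smooth3 u) (hv : Smooth3 v) :
    L a (u - v) = L a u - L a v := by
  have : u - v = u + (-1 : ℝ) • v := by simp [sub_eq_add_neg]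
  rw [this, boost_add a hu (smooth_smul _ hv), boost_smul a _ hv]; simp [sub_eq_add_neg]

theorem boost_box (a : Fin 2) {u : ℝ → ℝ → ℝ → ℝ} (hu : Smooth3 u) :
    L a (dAlembert u) = dAlembert (L a u) := by
  have s : ∀ i, Smooth3 (P i u) := fun i => smooth_P _ hu
  have ss : ∀ i, Smooth3 (P i (P i u)) := fun i => smooth_P _ (smooth_P _ hu)
  have sL : ∀ b i, Smooth3 (L b (P i u)) := fun b i => smooth_L _ (s i)
  rw [box_eq, box_eq, boost_sub a (smooth_sub (ss 0) (ss 1)) (ss 2), boost_sub a (ss 0) (ss 1)]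
  fin_cases a
  · show L 0 (P 0 (P 0 u)) - L 0 (P 1 (P 1 u)) - L 0 (P 2 (P 2 u)) =
      P 0 (P 0 (L 0 u)) - P 1 (P 1 (L 0 u)) - P 2 (P 2 (L 0 u))
    rw [P0_L0 hu, P1_L0 hu, P2_L0 hu, P_add 0 (sL 0 0) (s 1), P_add 1 (sL 0 1) (s 0),
      P0_L0 (s 0), P1_L0 (s 1), P2_L0 (s 2), P_comm 0 1 hu]
    ring
  · show L 1 (P 0 (P 0 u)) - L 1 (P 1 (P 1 u)) - L 1 (P 2 (P 2 u)) =
      P 0 (P 0 (L 1 u)) - P 1 (P 1 (L 1 u)) - P 2 (P 2 (L 1 u))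
    rw [P0_L1 hu, P1_L1 hu, P2_L1 hu, P_add 0 (sL 1 0) (s 2), P_add 2 (sL 1 2) (s 0),
      P0_L1 (s 0), P1_L1 (s 1), P2_L1 (s 2), P_comm 0 2 hu]
    ring

/-- The boosts form a commuting family. -/
theorem commFam_L : CommFam L where
  smooth i _ hu := smooth_L i hu
  add i _ _ hu hv := boost_add i hu hv
  mul i _ _ hu hv := boost_mul i hu hv
  smul i c _ hu := boost_smul i c hu
  box i _ hu := boost_box i hu
  comm i j u hu := by
    fin_cases i <;> fin_cases j
    · exact ⟨-1, 1, by simp, by show L 0 (P 0 u) = _ ; simp [P0_L0 hu]⟩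
    · exact ⟨-1, 0, by simp, by show L 0 (P 1 u) = _ ; simp [P1_L0 hu]⟩
    · exact ⟨0, 0, by simp, by show L 0 (P 2 u) = _ ; simp [P2_L0 hu]⟩
    · exact ⟨-1, 2, by simp, by show L 1 (P 0 u) = _ ; simp [P0_L1 hu]⟩
    · exact ⟨0, 0, by simp, by show L 1 (P 1 u) = _ ; simp [P1_L1 hu]⟩
    · exact ⟨-1, 0, by simp, by show L 1 (P 2 u) = _ ; simp [P2_L1 hu]⟩
  vanish i _ _ hO hu h := boost_vanish i hO hu h

/-! ### Integration on squares, Sobolev inequalities, continuity argument -/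

/-- The square `[-ρ,ρ]²`. -/
def Kbox (ρ : ℝ) : Set (ℝ × ℝ) := Set.Icc (-ρ) ρ ×ˢ Set.Icc (-ρ) ρ

theorem Kbox_compact (ρ : ℝ) : IsCompact (Kbox ρ) := isCompact_Icc.prod isCompact_Icc

theorem Kbox_meas (ρ : ℝ) : MeasurableSet (Kbox ρ) := measurableSet_Icc.prod measurableSet_Icc

theorem Kbox_int {f : ℝ × ℝ → ℝ} {ρ : ℝ} (hf : ContinuousOn f (Kbox ρ)) :
    IntegrableOn f (Kbox ρ) := hf.integrableOn_compact (Kbox_compact ρ)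

theorem div_zero_1 {ρ : ℝ} (hρ : 0 < ρ) {b d : ℝ → ℝ → ℝ}
    (hb : ∀ x y, HasDerivAt (fun x => b x y) (d x y) x)
    (hd : Continuous (fun z : ℝ × ℝ => d z.1 z.2))
    (h0 : ∀ y, b ρ y = 0) (h1 : ∀ y, b (-ρ) y = 0) : ∫ z in Kbox ρ, d z.1 z.2 = 0 := by
  unfold Kbox
  rw [Measure.volume_eq_prod, ← setIntegral_prod_swap,
    setIntegral_prod (μ := volume) (ν := volume)
      (f := fun z : ℝ × ℝ => d z.swap.1 z.swap.2)
      (by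
        rw [← Measure.volume_eq_prod]
        exact Kbox_int (hd.comp continuous_swap).continuousOn)]
  simp only [Prod.swap_prod_mk]
  have : ∀ y, ∫ x in Set.Icc (-ρ) ρ, d x y = 0 := by
    intro y
    rw [integral_Icc_eq_integral_Ioc, ← intervalIntegral.integral_of_le (by linarith),
      intervalIntegral.integral_eq_sub_of_hasDerivAt (fun x _ => hb x y)
        ((hd.comp (continuous_id.prodMk continuous_const)).intervalIntegrable _ _), h0, h1, sub_zero]
  simp [this]

theorem div_zero_2 {ρ : ℝ} (hρ : 0 < ρ) {b d : ℝ → ℝ → ℝ}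
    (hb : ∀ x y, HasDerivAt (fun y => b x y) (d x y) y)
    (hd : Continuous (fun z : ℝ × ℝ => d z.1 z.2))
    (h0 : ∀ x, b x ρ = 0) (h1 : ∀ x, b x (-ρ) = 0) : ∫ z in Kbox ρ, d z.1 z.2 = 0 := by
  unfold Kbox
  rw [Measure.volume_eq_prod,
    setIntegral_prod (μ := volume) (ν := volume) (f := fun z : ℝ × ℝ => d z.1 z.2)
      (by rw [← Measure.volume_eq_prod]; exact Kbox_int hd.continuousOn)]
  have : ∀ x, ∫ y in Set.Icc (-ρ) ρ, d x y = 0 := by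
    intro x
    rw [integral_Icc_eq_integral_Ioc, ← intervalIntegral.integral_of_le (by linarith),
      intervalIntegral.integral_eq_sub_of_hasDerivAt (fun y _ => hb x y)
        ((hd.comp (continuous_const.prodMk continuous_id)).intervalIntegrable _ _), h0, h1, sub_zero]
  simp [this]

theorem int_deriv {A A' : ℝ → ℝ → ℝ → ℝ} {a : ℝ}
    (hA : ∀ s > a, ∀ x y, HasDerivAt (fun s => A s x y) (A' s x y) s)
    (cA : ContinuousOn (fun p : ℝ × ℝ × ℝ => A p.1 p.2.1 p.2.2) {p | a < p.1})
    (cA' : ContinuousOn (fun p : ℝ × ℝ × ℝ => A' p.1 p.2.1 p.2.2) {p | a < p.1})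
    (ρ : ℝ) {s : ℝ} (hs : a < s) :
    HasDerivAt (fun s => ∫ z in Kbox ρ, A s z.1 z.2) (∫ z in Kbox ρ, A' s z.1 z.2) s := by
  have hc : IsCompact (Set.Icc ((a + s) / 2) (s + 1) ×ˢ Kbox ρ) := isCompact_Icc.prod (Kbox_compact ρ)
  have hsub : Set.Icc ((a + s) / 2) (s + 1) ×ˢ Kbox ρ ⊆ {p : ℝ × ℝ × ℝ | a < p.1} := by
    rintro ⟨t, z⟩ ⟨ht, _⟩
    simp only [Set.mem_Icc] at ht
    show a < t
    linarith [ht.1]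
  obtain ⟨C, hC⟩ := hc.exists_bound_of_continuousOn (cA'.mono hsub)
  have cs : ∀ (B : ℝ → ℝ → ℝ → ℝ),
      ContinuousOn (fun p : ℝ × ℝ × ℝ => B p.1 p.2.1 p.2.2) {p | a < p.1} → ∀ t, a < t →
      Continuous (fun z : ℝ × ℝ => B t z.1 z.2) := by
    intro B hB t ht
    exact hB.comp_continuous (f := fun z : ℝ × ℝ => (t, z)) (by fun_prop) (fun z => ht)
  have hnh : Set.Ioo ((a + s) / 2) (s + 1) ∈ 𝓝 s := Ioo_mem_nhds (by linarith) (by linarith)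
  refine (hasDerivAt_integral_of_dominated_loc_of_deriv_le (μ := volume.restrict (Kbox ρ))
    (F := fun s z => A s z.1 z.2) (F' := fun s z => A' s z.1 z.2) (bound := fun _ => C)
    hnh ?_ ?_ ?_ ?_ ?_ ?_).2
  · filter_upwards [hnh] with t ht
    exact (cs A cA t (by linarith [ht.1])).aestronglyMeasurable
  · exact Kbox_int (cs A cA s hs).continuousOn
  · exact (cs A' cA' s hs).aestronglyMeasurable
  · refine (ae_restrict_iff' (Kbox_meas ρ)).2 (Filter.Eventually.of_forall ?_)
    intro z hz t ht
    exact hC (t, z) ⟨⟨ht.1.le, ht.2.le⟩, hz⟩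
  · exact (Kbox_int continuousOn_const)
  · refine Filter.Eventually.of_forall ?_
    intro z t ht
    exact hA t (by linarith [ht.1]) z.1 z.2

/-- Differentiation of an energy integral whose density satisfies a balance law. -/
theorem flux {A B1 B2 D1 D2 C : ℝ → ℝ → ℝ → ℝ} {a : ℝ}
    (hA : ∀ s > a, ∀ x y, HasDerivAt (fun s => A s x y) (D1 s x y + D2 s x y + C s x y) s)
    (cA : ContinuousOn (fun p : ℝ × ℝ × ℝ => A p.1 p.2.1 p.2.2) {p | a < p.1})
    (cC : ContinuousOn (fun p : ℝ × ℝ × ℝ => C p.1 p.2.1 p.2.2) {p | a < p.1})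
    (c1 : ContinuousOn (fun p : ℝ × ℝ × ℝ => D1 p.1 p.2.1 p.2.2) {p | a < p.1})
    (c2 : ContinuousOn (fun p : ℝ × ℝ × ℝ => D2 p.1 p.2.1 p.2.2) {p | a < p.1})
    (h1 : ∀ s > a, ∀ x y, HasDerivAt (fun x => B1 s x y) (D1 s x y) x)
    (h2 : ∀ s > a, ∀ x y, HasDerivAt (fun y => B2 s x y) (D2 s x y) y)
    {ρ : ℝ} (hρ : 0 < ρ) {s : ℝ} (hs : a < s)
    (b1 : ∀ y, B1 s ρ y = 0 ∧ B1 s (-ρ) y = 0) (b2 : ∀ x, B2 s x ρ = 0 ∧ B2 s x (-ρ) = 0) :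
    HasDerivAt (fun s => ∫ z in Kbox ρ, A s z.1 z.2) (∫ z in Kbox ρ, C s z.1 z.2) s := by
  have cs : ∀ (B : ℝ → ℝ → ℝ → ℝ),
      ContinuousOn (fun p : ℝ × ℝ × ℝ => B p.1 p.2.1 p.2.2) {p | a < p.1} →
      Continuous (fun z : ℝ × ℝ => B s z.1 z.2) := by
    intro B hB
    exact hB.comp_continuous (f := fun z : ℝ × ℝ => (s, z)) (by fun_prop) (fun z => hs)
  have h := int_deriv (A := A) (A' := fun s x y => D1 s x y + D2 s x y + C s x y)
    hA cA ((c1.add c2).add cC) ρ hs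
  have e : ∫ z in Kbox ρ, (D1 s z.1 z.2 + D2 s z.1 z.2 + C s z.1 z.2)
      = ∫ z in Kbox ρ, C s z.1 z.2 := by
    have k1 := cs D1 c1
    have k2 := cs D2 c2
    rw [integral_add (f := fun z : ℝ × ℝ => D1 s z.1 z.2 + D2 s z.1 z.2)
      (Kbox_int (by fun_prop)) (Kbox_int (cs C cC).continuousOn), integral_add (Kbox_int (cs D1 c1).continuousOn)
      (Kbox_int (cs D2 c2).continuousOn), div_zero_1 hρ (h1 s hs) (cs D1 c1) (fun y => (b1 y).1)
      (fun y => (b1 y).2), div_zero_2 hρ (h2 s hs) (cs D2 c2) (fun x => (b2 x).1)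
      (fun x => (b2 x).2)]
    ring
  rwa [e] at h

/-- One-dimensional Sobolev inequality on an interval of length `l`. -/
theorem sob1 {f f' : ℝ → ℝ} (hf : ∀ x, HasDerivAt f (f' x) x) (hf' : Continuous f') (a : ℝ)
    {l : ℝ} (hl : 0 < l) :
    l * f a ^ 2 ≤ 2 * ∫ x in a..(a + l), (f x ^ 2 + l ^ 2 * f' x ^ 2) := by
  have cf : Continuous f := continuous_iff_continuousAt.2 fun x => (hf x).continuousAt
  have hG : ∀ x, HasDerivAt (fun x => (l - (x - a)) * f x ^ 2)
      (-(f x ^ 2) + (l - (x - a)) * (2 * f x * f' x)) x := by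
    intro x
    have h := ((((hasDerivAt_id x).sub_const a).const_sub l)).mul ((hf x).pow 2)
    exact h.congr_deriv (by simp only [id, Pi.pow_apply]; push_cast; ring)
  have cG : Continuous (fun x => -(f x ^ 2) + (l - (x - a)) * (2 * f x * f' x)) := by fun_prop
  have h1 := intervalIntegral.integral_eq_sub_of_hasDerivAt (a := a) (b := a + l)
    (fun x _ => hG x) (cG.intervalIntegrable _ _)
  have h2 : ∫ x in a..(a + l), (-2 * (f x ^ 2 + l ^ 2 * f' x ^ 2)) ≤
      ∫ x in a..(a + l), (-(f x ^ 2) + (l - (x - a)) * (2 * f x * f' x)) := by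
    apply intervalIntegral.integral_mono_on (by linarith)
      (Continuous.intervalIntegrable (by fun_prop) _ _) (cG.intervalIntegrable _ _)
    rintro x ⟨hx1, hx2⟩
    have : (l - (x - a)) ^ 2 * f' x ^ 2 ≤ l ^ 2 * f' x ^ 2 := by
      gcongr
      · linarith
      · linarith
    nlinarith [sq_nonneg (f x + (l - (x - a)) * f' x), sq_nonneg (l * f' x)]
  rw [intervalIntegral.integral_const_mul, h1] at h2
  have e : (l - (a + l - a)) * f (a + l) ^ 2 - (l - (a - a)) * f a ^ 2 = - (l * f a ^ 2) := by ring
  rw [e] at h2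
  linarith

/-- Two-dimensional Sobolev inequality on a square of side `l`, with anisotropic derivatives. -/
theorem sob2 {w w1 w2 w12 G : ℝ → ℝ → ℝ} (h1 : ∀ x y, HasDerivAt (fun x => w x y) (w1 x y) x)
    (h2 : ∀ x y, HasDerivAt (fun y => w x y) (w2 x y) y)
    (h12 : ∀ x y, HasDerivAt (fun y => w1 x y) (w12 x y) y)
    (c0 : Continuous (fun z : ℝ × ℝ => w z.1 z.2)) (c1 : Continuous (fun z : ℝ × ℝ => w1 z.1 z.2))
    (c2 : Continuous (fun z : ℝ × ℝ => w2 z.1 z.2))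
    (c12 : Continuous (fun z : ℝ × ℝ => w12 z.1 z.2))
    (cG : Continuous (fun z : ℝ × ℝ => G z.1 z.2)) {a b l ρ : ℝ} (hl : 0 < l)
    (ha : -ρ ≤ a ∧ a + l ≤ ρ) (hb : -ρ ≤ b ∧ b + l ≤ ρ) (G0 : ∀ x y, 0 ≤ G x y)
    (hG : ∀ x ∈ Set.Icc a (a + l), ∀ y ∈ Set.Icc b (b + l),
      w x y ^ 2 + l ^ 2 * w1 x y ^ 2 + l ^ 2 * w2 x y ^ 2 + l ^ 4 * w12 x y ^ 2 ≤ G x y) :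
    l ^ 2 * w a b ^ 2 ≤ 4 * ∫ z in Kbox ρ, G z.1 z.2 := by
  have sl1 : ∀ {g : ℝ → ℝ → ℝ}, Continuous (fun z : ℝ × ℝ => g z.1 z.2) → ∀ y,
      Continuous (fun x => g x y) := fun hg y => hg.comp (continuous_id.prodMk continuous_const)
  have sl2 : ∀ {g : ℝ → ℝ → ℝ}, Continuous (fun z : ℝ × ℝ => g z.1 z.2) → ∀ x,
      Continuous (fun y => g x y) := fun hg x => hg.comp (continuous_const.prodMk continuous_id)
  have s1 := sob1 (fun x => h1 x b) (sl1 c1 b) a hl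
  have cint : Continuous (fun x => ∫ y in b..(b + l), G x y) :=
    intervalIntegral.continuous_parametric_intervalIntegral_of_continuous' cG _ _
  have s2 : ∀ x ∈ Set.Icc a (a + l), l * (w x b ^ 2 + l ^ 2 * w1 x b ^ 2) ≤
      2 * ∫ y in b..(b + l), G x y := by
    intro x hx
    have q1 := sob1 (fun y => h2 x y) (sl2 c2 x) b hl
    have q2 := sob1 (fun y => h12 x y) (sl2 c12 x) b hl
    have k0 := sl2 c0 x
    have k1 := sl2 c1 x
    have k2 := sl2 c2 x
    have k3 := sl2 c12 x
    have q3 : ∫ y in b..(b + l), ((w x y ^ 2 + l ^ 2 * w2 x y ^ 2) +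
        l ^ 2 * (w1 x y ^ 2 + l ^ 2 * w12 x y ^ 2)) ≤ ∫ y in b..(b + l), G x y := by
      apply intervalIntegral.integral_mono_on (by linarith)
        (Continuous.intervalIntegrable (by fun_prop) _ _) ((sl2 cG x).intervalIntegrable _ _)
      intro y hy
      have := hG x hx y hy
      nlinarith
    rw [intervalIntegral.integral_add (Continuous.intervalIntegrable (by fun_prop) _ _)
      (Continuous.intervalIntegrable (by fun_prop) _ _), intervalIntegral.integral_const_mul] at q3
    nlinarith [mul_le_mul_of_nonneg_left q2 (sq_nonneg l)]
  have s3 : l * ∫ x in a..(a + l), (w x b ^ 2 + l ^ 2 * w1 x b ^ 2) ≤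
      2 * ∫ x in a..(a + l), ∫ y in b..(b + l), G x y := by
    have k0 := sl1 c0 b
    have k1 := sl1 c1 b
    rw [← intervalIntegral.integral_const_mul, ← intervalIntegral.integral_const_mul]
    exact intervalIntegral.integral_mono_on (by linarith)
        (Continuous.intervalIntegrable (by fun_prop) _ _)
        (Continuous.intervalIntegrable (by fun_prop) _ _) s2
  have s4 : ∫ x in a..(a + l), ∫ y in b..(b + l), G x y ≤ ∫ z in Kbox ρ, G z.1 z.2 := by
    have e : ∫ x in a..(a + l), ∫ y in b..(b + l), G x y =
        ∫ z in Set.Icc a (a + l) ×ˢ Set.Icc b (b + l), G z.1 z.2 := by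
      rw [Measure.volume_eq_prod, setIntegral_prod (μ := volume) (ν := volume)
        (f := fun z : ℝ × ℝ => G z.1 z.2) (by
          rw [← Measure.volume_eq_prod]
          exact cG.continuousOn.integrableOn_compact (isCompact_Icc.prod isCompact_Icc))]
      rw [intervalIntegral.integral_of_le (by linarith), integral_Icc_eq_integral_Ioc]
      congr 1
      ext x
      rw [intervalIntegral.integral_of_le (by linarith), integral_Icc_eq_integral_Ioc]
    rw [e]
    apply setIntegral_mono_set (Kbox_int cG.continuousOn)
    · exact Filter.Eventually.of_forall fun z => G0 _ _
    · apply Filter.Eventually.of_forall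
      rintro ⟨x, y⟩ ⟨hx, hy⟩
      exact ⟨⟨ha.1.trans hx.1, hx.2.trans ha.2⟩, ⟨hb.1.trans hy.1, hy.2.trans hb.2⟩⟩
  nlinarith

/-- Continuity argument: strict inequalities that self-improve hold on the whole interval. -/
theorem bootstrap {J X : Type} [Finite J] [TopologicalSpace X] {K : Set X} (hK : IsCompact K)
    (g : J → ℝ → X → ℝ) (a b : ℝ)
    (hc : ∀ j, ContinuousOn (fun p : ℝ × X => g j p.1 p.2) (Set.Icc a b ×ˢ K))
    (step : ∀ s1 ∈ Set.Icc a b, (∀ s ∈ Set.Ico a s1, ∀ j, ∀ x ∈ K, g j s x < 0) →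
      ∀ j, ∀ x ∈ K, g j s1 x < 0) : ∀ s ∈ Set.Icc a b, ∀ j, ∀ x ∈ K, g j s x < 0 := by
  have hK2 : IsCompact (Set.Icc a b ×ˢ K) := isCompact_Icc.prod hK
  have hbad : ∀ j, IsCompact {p : ℝ × X | p ∈ Set.Icc a b ×ˢ K ∧ 0 ≤ g j p.1 p.2} := by
    intro j
    have : CompactSpace (Set.Icc a b ×ˢ K : Set (ℝ × X)) := isCompact_iff_compactSpace.1 hK2
    have hcl : IsClosed {p : (Set.Icc a b ×ˢ K : Set (ℝ × X)) | 0 ≤ g j p.1.1 p.1.2} :=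
      isClosed_le continuous_const (continuousOn_iff_continuous_domRestrict.1 (hc j))
    have := hcl.isCompact.image continuous_subtype_val
    convert this using 1
    ext p
    constructor
    · rintro ⟨h1, h2⟩
      exact ⟨⟨p, h1⟩, h2, rfl⟩
    · rintro ⟨⟨q, h1⟩, h2, rfl⟩
      exact ⟨h1, h2⟩
  have hU : IsCompact (⋃ j, {p : ℝ × X | p ∈ Set.Icc a b ×ˢ K ∧ 0 ≤ g j p.1 p.2}) :=
    isCompact_iUnion hbad
  by_contra! hcon
  obtain ⟨s, hs, j, x, hx, hg⟩ := hcon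
  have hne : (Prod.fst '' (⋃ j, {p : ℝ × X | p ∈ Set.Icc a b ×ˢ K ∧ 0 ≤ g j p.1 p.2})).Nonempty :=
    ⟨s, (s, x), Set.mem_iUnion.2 ⟨j, ⟨hs, hx⟩, hg⟩, rfl⟩
  obtain ⟨s1, ⟨p, hp, rfl⟩, hmin⟩ := (hU.image continuous_fst).exists_isLeast hne
  obtain ⟨j1, ⟨hp1, hp2⟩, hp3⟩ := Set.mem_iUnion.1 hp
  have := step p.1 hp1 (by
    intro s' hs' j' x' hx'
    by_contra! h
    have := hmin ⟨(s', x'), Set.mem_iUnion.2 ⟨j', ⟨⟨hs'.1, (hs'.2.le).trans hp1.2⟩, hx'⟩, h⟩, rfl⟩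
    exact absurd hs'.2 (not_lt.2 this)) j1 p.2 hp2
  linarith

/-! ### Energy identities on time slices and hyperboloids -/

/-- Balance law for the weighted standard energy. -/
theorem flat_flux {χ v : ℝ → ℝ → ℝ → ℝ} (hχ : Smooth3 χ) (hv : Smooth3 v) {ρ s : ℝ} (hρ : 0 < ρ)
    (b1 : ∀ y, χ s ρ y * pt v s ρ y = 0 ∧ χ s (-ρ) y * pt v s (-ρ) y = 0)
    (b2 : ∀ x, χ s x ρ * pt v s x ρ = 0 ∧ χ s x (-ρ) * pt v s x (-ρ) = 0) :
    HasDerivAt (fun s => ∫ z in Kbox ρ, χ s z.1 z.2 *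
        (pt v s z.1 z.2 ^ 2 + p1 v s z.1 z.2 ^ 2 + p2 v s z.1 z.2 ^ 2))
      (∫ z in Kbox ρ, (2 * χ s z.1 z.2 * pt v s z.1 z.2 * dAlembert v s z.1 z.2
        + (pt χ s z.1 z.2 * (pt v s z.1 z.2 ^ 2 + p1 v s z.1 z.2 ^ 2 + p2 v s z.1 z.2 ^ 2)
        - 2 * pt v s z.1 z.2 * (p1 χ s z.1 z.2 * p1 v s z.1 z.2
          + p2 χ s z.1 z.2 * p2 v s z.1 z.2)))) s := by
  have a0 := smooth_cont hχ
  have a1 := smooth_cont (smooth_pt hχ)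
  have a2 := smooth_cont (smooth_p1 hχ)
  have a3 := smooth_cont (smooth_p2 hχ)
  have v1 := smooth_cont (smooth_pt hv)
  have v2 := smooth_cont (smooth_p1 hv)
  have v3 := smooth_cont (smooth_p2 hv)
  have v12 := smooth_cont (smooth_p1 (smooth_pt hv))
  have v13 := smooth_cont (smooth_p2 (smooth_pt hv))
  have v22 := smooth_cont (smooth_p1 (smooth_p1 hv))
  have v33 := smooth_cont (smooth_p2 (smooth_p2 hv))
  have vb := smooth_cont (smooth_box hv)
  refine flux (a := s - 1)
    (A := fun s x y => χ s x y * (pt v s x y ^ 2 + p1 v s x y ^ 2 + p2 v s x y ^ 2))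
    (B1 := fun s x y => 2 * (χ s x y * pt v s x y) * p1 v s x y)
    (B2 := fun s x y => 2 * (χ s x y * pt v s x y) * p2 v s x y)
    (D1 := fun s x y => 2 * (p1 χ s x y * pt v s x y + χ s x y * p1 (pt v) s x y) * p1 v s x y
      + 2 * (χ s x y * pt v s x y) * p1 (p1 v) s x y)
    (D2 := fun s x y => 2 * (p2 χ s x y * pt v s x y + χ s x y * p2 (pt v) s x y) * p2 v s x y
      + 2 * (χ s x y * pt v s x y) * p2 (p2 v) s x y)
    (C := fun s x y => (2 * χ s x y * pt v s x y * dAlembert v s x y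
        + (pt χ s x y * (pt v s x y ^ 2 + p1 v s x y ^ 2 + p2 v s x y ^ 2)
        - 2 * pt v s x y * (p1 χ s x y * p1 v s x y + p2 χ s x y * p2 v s x y))))
    ?_ (by fun_prop) (by fun_prop) (by fun_prop) (by fun_prop) ?_ ?_ hρ (by linarith) ?_ ?_
  · intro s _ x y
    have h := (pt_hd hχ s x y).mul ((((pt_hd (smooth_pt hv) s x y).pow 2).add
      ((pt_hd (smooth_p1 hv) s x y).pow 2)).add ((pt_hd (smooth_p2 hv) s x y).pow 2))
    refine h.congr_deriv ?_
    simp only [Pi.pow_apply, Pi.add_apply, dAlembert]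
    rw [p1_pt hv, p2_pt hv]
    push_cast
    ring
  · intro s _ x y
    exact ((((p1_hd hχ s x y).mul (p1_hd (smooth_pt hv) s x y)).const_mul 2).mul
      (p1_hd (smooth_p1 hv) s x y)).congr_deriv (by simp only [Pi.mul_apply])
  · intro s _ x y
    exact ((((p2_hd hχ s x y).mul (p2_hd (smooth_pt hv) s x y)).const_mul 2).mul
      (p2_hd (smooth_p2 hv) s x y)).congr_deriv (by simp only [Pi.mul_apply])
  · intro y
    have := b1 y
    constructor
    · show 2 * (χ s ρ y * pt v s ρ y) * _ = 0
      rw [this.1]; ring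
    · show 2 * (χ s (-ρ) y * pt v s (-ρ) y) * _ = 0
      rw [this.2]; ring
  · intro y
    have := b2 y
    constructor
    · show 2 * (χ s y ρ * pt v s y ρ) * _ = 0
      rw [this.1]; ring
    · show 2 * (χ s y (-ρ) * pt v s y (-ρ)) * _ = 0
      rw [this.2]; ring

/-- The hyperboloidal time `t = √(s² + |x|²)`. -/
def hh (s x y : ℝ) : ℝ := √(s ^ 2 + x ^ 2 + y ^ 2)

theorem hh_cont : Continuous (fun p : ℝ × ℝ × ℝ => hh p.1 p.2.1 p.2.2) := by
  unfold hh; fun_prop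

theorem hh_sq (s x y : ℝ) : hh s x y ^ 2 = s ^ 2 + x ^ 2 + y ^ 2 :=
  Real.sq_sqrt (by positivity)

theorem hh_nonneg (s x y : ℝ) : 0 ≤ hh s x y := Real.sqrt_nonneg _

theorem hh_pos {s : ℝ} (hs : 0 < s) (x y : ℝ) : 0 < hh s x y := Real.sqrt_pos.2 (by positivity)

theorem hh_ge {s : ℝ} (x y : ℝ) : s ≤ hh s x y :=
  Real.le_sqrt_of_sq_le (by nlinarith [sq_nonneg x, sq_nonneg y])

theorem hh_ge1 (s x y : ℝ) : |x| ≤ hh s x y :=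
  Real.le_sqrt_of_sq_le (by rw [sq_abs]; nlinarith [sq_nonneg s, sq_nonneg y])

theorem hh_ge2 (s x y : ℝ) : |y| ≤ hh s x y :=
  Real.le_sqrt_of_sq_le (by rw [sq_abs]; nlinarith [sq_nonneg s, sq_nonneg x])

theorem hh_hds {s : ℝ} (hs : 0 < s) (x y : ℝ) : HasDerivAt (fun s => hh s x y) (s / hh s x y) s := by
  have h := (((hasDerivAt_pow 2 s).add_const (x ^ 2)).add_const (y ^ 2)).sqrt
    (by positivity : s ^ 2 + x ^ 2 + y ^ 2 ≠ 0)
  refine h.congr_deriv ?_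
  have := hh_pos hs x y
  unfold hh at *
  field_simp
  push_cast; ring

theorem hh_hd1 {s : ℝ} (hs : 0 < s) (x y : ℝ) : HasDerivAt (fun x => hh s x y) (x / hh s x y) x := by
  have h := (((hasDerivAt_pow 2 x).const_add (s ^ 2)).add_const (y ^ 2)).sqrt
    (by positivity : s ^ 2 + x ^ 2 + y ^ 2 ≠ 0)
  refine h.congr_deriv ?_
  have := hh_pos hs x y
  unfold hh at *
  field_simp
  push_cast; ring

theorem hh_hd2 {s : ℝ} (hs : 0 < s) (x y : ℝ) : HasDerivAt (fun y => hh s x y) (y / hh s x y) y := by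
  have h := ((hasDerivAt_pow 2 y).const_add (s ^ 2 + x ^ 2)).sqrt
    (by positivity : s ^ 2 + x ^ 2 + y ^ 2 ≠ 0)
  refine h.congr_deriv ?_
  have := hh_pos hs x y
  unfold hh at *
  field_simp
  push_cast; ring

/-- Restriction of `v` to hyperboloids: derivative in `s`. -/
theorem hyp_s {v : ℝ → ℝ → ℝ → ℝ} (hv : Smooth3 v) {s : ℝ} (hs : 0 < s) (x y : ℝ) :
    HasDerivAt (fun s => v (hh s x y) x y) (pt v (hh s x y) x y * (s / hh s x y)) s := by
  simpa using chain hv (hh_hds hs x y) (hasDerivAt_const s x) (hasDerivAt_const s y)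

theorem hyp_1 {v : ℝ → ℝ → ℝ → ℝ} (hv : Smooth3 v) {s : ℝ} (hs : 0 < s) (x y : ℝ) :
    HasDerivAt (fun x => v (hh s x y) x y)
      (pt v (hh s x y) x y * (x / hh s x y) + p1 v (hh s x y) x y) x := by
  simpa using chain hv (hh_hd1 hs x y) (hasDerivAt_id x) (hasDerivAt_const x y)

theorem hyp_2 {v : ℝ → ℝ → ℝ → ℝ} (hv : Smooth3 v) {s : ℝ} (hs : 0 < s) (x y : ℝ) :
    HasDerivAt (fun y => v (hh s x y) x y)
      (pt v (hh s x y) x y * (y / hh s x y) + p2 v (hh s x y) x y) y := by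
  simpa using chain hv (hh_hd2 hs x y) (hasDerivAt_const y x) (hasDerivAt_id y)

/-- Energy density on the hyperboloid `t² − |x|² = s²`, for the measure `dx`. -/
def Ahyp (v : ℝ → ℝ → ℝ → ℝ) (s x y : ℝ) : ℝ :=
  (s / hh s x y) ^ 2 * pt v (hh s x y) x y ^ 2 + (L 0 v (hh s x y) x y / hh s x y) ^ 2
    + (L 1 v (hh s x y) x y / hh s x y) ^ 2

theorem hyp_cont {v : ℝ → ℝ → ℝ → ℝ} (hv : Smooth3 v) :
    Continuous (fun p : ℝ × ℝ × ℝ => v (hh p.1 p.2.1 p.2.2) p.2.1 p.2.2) :=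
  smooth_comp_cont hv hh_cont (by fun_prop) (by fun_prop)

theorem hh_ne {s : ℝ} (hs : 0 < s) (x y : ℝ) : hh s x y ≠ 0 := (hh_pos hs x y).ne'

theorem Ahyp_cont {v : ℝ → ℝ → ℝ → ℝ} (hv : Smooth3 v) :
    ContinuousOn (fun p : ℝ × ℝ × ℝ => Ahyp v p.1 p.2.1 p.2.2) {p | 0 < p.1} := by
  have h0 := hh_cont
  have h1 := hyp_cont (smooth_pt hv)
  have h2 := hyp_cont (smooth_L 0 hv)
  have h3 := hyp_cont (smooth_L 1 hv)
  have hne : ∀ p ∈ {p : ℝ × ℝ × ℝ | 0 < p.1}, hh p.1 p.2.1 p.2.2 ≠ 0 := fun p hp => hh_ne hp _ _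
  unfold Ahyp
  exact (((continuous_fst.continuousOn.div h0.continuousOn hne).pow 2).mul (h1.continuousOn.pow 2)
    |>.add ((h2.continuousOn.div h0.continuousOn hne).pow 2)).add
    ((h3.continuousOn.div h0.continuousOn hne).pow 2)

/-- The exterior of the light cone `|x| ≤ t − 1`, at times after `T`. -/
def Oset (T : ℝ) : Set (ℝ × ℝ × ℝ) := {p | T < p.1 ∧ (p.1 - 1) ^ 2 < p.2.1 ^ 2 + p.2.2 ^ 2}

theorem Oset_open (T : ℝ) : IsOpen (Oset T) := by
  have h1 : IsOpen {p : ℝ × ℝ × ℝ | T < p.1} := isOpen_lt continuous_const continuous_fst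
  have h2 : IsOpen {p : ℝ × ℝ × ℝ | (p.1 - 1) ^ 2 < p.2.1 ^ 2 + p.2.2 ^ 2} :=
    isOpen_lt (by fun_prop) (by fun_prop)
  exact h1.inter h2

theorem bdry_mem {T ρ s x y : ℝ} (hρ : T < ρ) (h : s ^ 2 + 1 < 2 * ρ)
    (hxy : ρ ≤ |x| ∨ ρ ≤ |y|) : (hh s x y, x, y) ∈ Oset T := by
  have h1 : ρ ≤ hh s x y := by
    rcases hxy with h | h
    · exact h.trans (hh_ge1 _ _ _)
    · exact h.trans (hh_ge2 _ _ _)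
  refine ⟨by linarith, ?_⟩
  have := hh_sq s x y
  show (hh s x y - 1) ^ 2 < x ^ 2 + y ^ 2
  nlinarith

/-- Energy identity on hyperboloids. -/
theorem hyp_flux {T : ℝ} (hT : 2 ≤ T) {v : ℝ → ℝ → ℝ → ℝ} (hv : Smooth3 v) (h0 : VanishOn (Oset T) v)
    {ρ s : ℝ} (hρ : T < ρ) (hs : 0 < s) (hsρ : s ^ 2 + 1 < 2 * ρ) :
    HasDerivAt (fun s => ∫ z in Kbox ρ, Ahyp v s z.1 z.2)
      (∫ z in Kbox ρ, 2 * (s / hh s z.1 z.2) * pt v (hh s z.1 z.2) z.1 z.2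
        * dAlembert v (hh s z.1 z.2) z.1 z.2) s := by
  have hvt : VanishOn (Oset T) (pt v) := P_vanish 0 (Oset_open T) hv h0
  have c0 := hh_cont
  have v1 := hyp_cont (smooth_pt hv)
  have v2 := hyp_cont (smooth_p1 hv)
  have v3 := hyp_cont (smooth_p2 hv)
  have v11 := hyp_cont (smooth_pt (smooth_pt hv))
  have v12 := hyp_cont (smooth_p1 (smooth_pt hv))
  have v13 := hyp_cont (smooth_p2 (smooth_pt hv))
  have v12' := hyp_cont (smooth_pt (smooth_p1 hv))
  have v13' := hyp_cont (smooth_pt (smooth_p2 hv))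
  have v22 := hyp_cont (smooth_p1 (smooth_p1 hv))
  have v33 := hyp_cont (smooth_p2 (smooth_p2 hv))
  have vb := hyp_cont (smooth_box hv)
  have hne : ∀ p : ℝ × ℝ × ℝ, p ∈ {p : ℝ × ℝ × ℝ | 0 < p.1} → hh p.1 p.2.1 p.2.2 ≠ 0 :=
    fun p hp => hh_ne hp _ _
  have hne3 : ∀ p : ℝ × ℝ × ℝ, p ∈ {p : ℝ × ℝ × ℝ | 0 < p.1} → hh p.1 p.2.1 p.2.2 ^ 3 ≠ 0 :=
    fun p hp => pow_ne_zero _ (hh_ne hp _ _)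
  refine flux (a := 0) (A := Ahyp v)
    (B1 := fun s x y => 2 * (s / hh s x y) * (pt v (hh s x y) x y * p1 v (hh s x y) x y))
    (B2 := fun s x y => 2 * (s / hh s x y) * (pt v (hh s x y) x y * p2 v (hh s x y) x y))
    (D1 := fun s x y => -(2 * s * x / hh s x y ^ 3) * (pt v (hh s x y) x y * p1 v (hh s x y) x y)
      + 2 * (s / hh s x y) *
        ((pt (pt v) (hh s x y) x y * (x / hh s x y) + p1 (pt v) (hh s x y) x y) * p1 v (hh s x y) x y
        + pt v (hh s x y) x y * (pt (p1 v) (hh s x y) x y * (x / hh s x y)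
          + p1 (p1 v) (hh s x y) x y)))
    (D2 := fun s x y => -(2 * s * y / hh s x y ^ 3) * (pt v (hh s x y) x y * p2 v (hh s x y) x y)
      + 2 * (s / hh s x y) *
        ((pt (pt v) (hh s x y) x y * (y / hh s x y) + p2 (pt v) (hh s x y) x y) * p2 v (hh s x y) x y
        + pt v (hh s x y) x y * (pt (p2 v) (hh s x y) x y * (y / hh s x y)
          + p2 (p2 v) (hh s x y) x y)))
    (C := fun s x y => 2 * (s / hh s x y) * pt v (hh s x y) x y * dAlembert v (hh s x y) x y)
    ?_ (Ahyp_cont hv) ?_ ?_ ?_ ?_ ?_ (by linarith) hs ?_ ?_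
  · intro s hs x y
    have e : (fun s => Ahyp v s x y) =ᶠ[𝓝 s] (fun s => pt v (hh s x y) x y ^ 2
        + p1 v (hh s x y) x y ^ 2 + p2 v (hh s x y) x y ^ 2
        + 2 * (x / hh s x y) * (pt v (hh s x y) x y * p1 v (hh s x y) x y)
        + 2 * (y / hh s x y) * (pt v (hh s x y) x y * p2 v (hh s x y) x y)) := by
      filter_upwards [lt_mem_nhds (show (0 : ℝ) < s from hs)] with s' hs'
      have hp := hh_ne hs' x y
      unfold Ahyp
      rw [L0_apply, L1_apply, div_pow, div_pow, div_pow,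
        show s' ^ 2 = hh s' x y ^ 2 - x ^ 2 - y ^ 2 by rw [hh_sq]; ring]
      field_simp
      ring
    refine HasDerivAt.congr_of_eventuallyEq ?_ e
    have d1 := hyp_s (smooth_pt hv) hs x y
    have d2 := hyp_s (smooth_p1 hv) hs x y
    have d3 := hyp_s (smooth_p2 hv) hs x y
    have dx := (((hasDerivAt_const s x).div (hh_hds hs x y) (hh_ne hs x y)).const_mul 2).mul
      (d1.mul d2)
    have dy := (((hasDerivAt_const s y).div (hh_hds hs x y) (hh_ne hs x y)).const_mul 2).mul
      (d1.mul d3)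
    refine (((((d1.pow 2).add (d2.pow 2)).add (d3.pow 2)).add dx).add dy).congr_deriv ?_
    have hp := hh_ne hs x y
    simp only [dAlembert, Pi.div_apply, Pi.mul_apply]
    rw [p1_pt hv, p2_pt hv]
    push_cast
    field_simp
    ring
  · exact (((continuousOn_const.mul (continuous_fst.continuousOn.div c0.continuousOn hne))).mul
      v1.continuousOn).mul vb.continuousOn
  · have q1 : ContinuousOn (fun p : ℝ × ℝ × ℝ => 2 * p.1 * p.2.1 / hh p.1 p.2.1 p.2.2 ^ 3)
        {p | 0 < p.1} :=
      ContinuousOn.div (by fun_prop) (c0.continuousOn.pow 3) hne3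
    have q2 : ContinuousOn (fun p : ℝ × ℝ × ℝ => p.1 / hh p.1 p.2.1 p.2.2) {p | 0 < p.1} :=
      ContinuousOn.div (by fun_prop) c0.continuousOn hne
    have q3 : ContinuousOn (fun p : ℝ × ℝ × ℝ => p.2.1 / hh p.1 p.2.1 p.2.2) {p | 0 < p.1} :=
      ContinuousOn.div (by fun_prop) c0.continuousOn hne
    exact (q1.neg.mul (v1.continuousOn.mul v2.continuousOn)).add ((continuousOn_const.mul q2).mul
      ((((v11.continuousOn.mul q3).add v12.continuousOn).mul v2.continuousOn).add
        (v1.continuousOn.mul ((v12'.continuousOn.mul q3).add v22.continuousOn))))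
  · have q1 : ContinuousOn (fun p : ℝ × ℝ × ℝ => 2 * p.1 * p.2.2 / hh p.1 p.2.1 p.2.2 ^ 3)
        {p | 0 < p.1} :=
      ContinuousOn.div (by fun_prop) (c0.continuousOn.pow 3) hne3
    have q2 : ContinuousOn (fun p : ℝ × ℝ × ℝ => p.1 / hh p.1 p.2.1 p.2.2) {p | 0 < p.1} :=
      ContinuousOn.div (by fun_prop) c0.continuousOn hne
    have q3 : ContinuousOn (fun p : ℝ × ℝ × ℝ => p.2.2 / hh p.1 p.2.1 p.2.2) {p | 0 < p.1} :=
      ContinuousOn.div (by fun_prop) c0.continuousOn hne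
    exact (q1.neg.mul (v1.continuousOn.mul v3.continuousOn)).add ((continuousOn_const.mul q2).mul
      ((((v11.continuousOn.mul q3).add v13.continuousOn).mul v3.continuousOn).add
        (v1.continuousOn.mul ((v13'.continuousOn.mul q3).add v33.continuousOn))))
  · intro s hs x y
    have d1 := hyp_1 (smooth_pt hv) hs x y
    have d2 := hyp_1 (smooth_p1 hv) hs x y
    refine ((((hasDerivAt_const x s).div (hh_hd1 hs x y) (hh_ne hs x y)).const_mul 2).mul
      (d1.mul d2)).congr_deriv ?_
    have hp := hh_ne hs x y
    simp only [Pi.div_apply, Pi.mul_apply]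
    field_simp
    ring
  · intro s hs x y
    have d1 := hyp_2 (smooth_pt hv) hs x y
    have d2 := hyp_2 (smooth_p2 hv) hs x y
    refine ((((hasDerivAt_const y s).div (hh_hd2 hs x y) (hh_ne hs x y)).const_mul 2).mul
      (d1.mul d2)).congr_deriv ?_
    have hp := hh_ne hs x y
    simp only [Pi.div_apply, Pi.mul_apply]
    field_simp
    ring
  · intro y
    have hρ0 : 0 < ρ := by linarith
    have z1 : pt v (hh s ρ y) ρ y = 0 :=
      hvt _ (bdry_mem hρ hsρ (Or.inl (le_abs_self ρ)))
    have z2 : pt v (hh s (-ρ) y) (-ρ) y = 0 :=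
      hvt _ (bdry_mem hρ hsρ (Or.inl (by rw [abs_neg]; exact le_abs_self ρ)))
    simp [z1, z2]
  · intro x
    have z1 : pt v (hh s x ρ) x ρ = 0 :=
      hvt _ (bdry_mem hρ hsρ (Or.inr (le_abs_self ρ)))
    have z2 : pt v (hh s x (-ρ)) x (-ρ) = 0 :=
      hvt _ (bdry_mem hρ hsρ (Or.inr (by rw [abs_neg]; exact le_abs_self ρ)))
    simp [z1, z2]

theorem Ahyp_nonneg (v : ℝ → ℝ → ℝ → ℝ) (s x y : ℝ) : 0 ≤ Ahyp v s x y := by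
  unfold Ahyp; positivity

/-- The hyperboloidal energy controls all coordinate derivatives with the weight `s/t`. -/
theorem Ahyp_coer (k : Fin 3) (v : ℝ → ℝ → ℝ → ℝ) {s : ℝ} (hs : 0 < s) (x y : ℝ) :
    (s / hh s x y) ^ 2 * P k v (hh s x y) x y ^ 2 ≤ 4 * Ahyp v s x y := by
  have hp := hh_pos hs x y
  have l1 : (s / hh s x y) ^ 2 ≤ 1 := by
    rw [div_pow, div_le_one (by positivity), hh_sq]; nlinarith [sq_nonneg x, sq_nonneg y]
  have lx : (x / hh s x y) ^ 2 ≤ 1 := by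
    rw [div_pow, div_le_one (by positivity), hh_sq]; nlinarith [sq_nonneg s, sq_nonneg y]
  have ly : (y / hh s x y) ^ 2 ≤ 1 := by
    rw [div_pow, div_le_one (by positivity), hh_sq]; nlinarith [sq_nonneg s, sq_nonneg x]
  have gen : ∀ a b c d : ℝ, a ^ 2 ≤ 1 → b ^ 2 ≤ 1 →
      a ^ 2 * (c - b * d) ^ 2 ≤ 2 * c ^ 2 + 2 * (a ^ 2 * d ^ 2) := by
    intro a b c d ha hb
    have h1 : (c - b * d) ^ 2 ≤ 2 * c ^ 2 + 2 * d ^ 2 := by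
      nlinarith [sq_nonneg (c + b * d), mul_le_mul_of_nonneg_right hb (sq_nonneg d)]
    nlinarith [mul_le_mul_of_nonneg_left h1 (sq_nonneg a),
      mul_le_mul_of_nonneg_right ha (sq_nonneg c)]
  have e : Ahyp v s x y = (s / hh s x y) ^ 2 * pt v (hh s x y) x y ^ 2
    + (L 0 v (hh s x y) x y / hh s x y) ^ 2 + (L 1 v (hh s x y) x y / hh s x y) ^ 2 := rfl
  have n1 : 0 ≤ (s / hh s x y) ^ 2 * pt v (hh s x y) x y ^ 2 := by positivity
  have n2 := sq_nonneg (L 0 v (hh s x y) x y / hh s x y)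
  have n3 := sq_nonneg (L 1 v (hh s x y) x y / hh s x y)
  fin_cases k
  · show (s / hh s x y) ^ 2 * pt v (hh s x y) x y ^ 2 ≤ _
    linarith
  · have := gen (s / hh s x y) (x / hh s x y) (L 0 v (hh s x y) x y / hh s x y)
      (pt v (hh s x y) x y) l1 lx
    have e1 : L 0 v (hh s x y) x y / hh s x y - x / hh s x y * pt v (hh s x y) x y
        = P 1 v (hh s x y) x y := by
      show _ = p1 v (hh s x y) x y
      rw [L0_apply]; field_simp; ring
    rw [e1] at this
    show (s / hh s x y) ^ 2 * P 1 v (hh s x y) x y ^ 2 ≤ _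
    linarith
  · have := gen (s / hh s x y) (y / hh s x y) (L 1 v (hh s x y) x y / hh s x y)
      (pt v (hh s x y) x y) l1 ly
    have e1 : L 1 v (hh s x y) x y / hh s x y - y / hh s x y * pt v (hh s x y) x y
        = P 2 v (hh s x y) x y := by
      show _ = p2 v (hh s x y) x y
      rw [L1_apply]; field_simp; ring
    rw [e1] at this
    show (s / hh s x y) ^ 2 * P 2 v (hh s x y) x y ^ 2 ≤ _
    linarith

/-! ### Finite speed of propagation -/

theorem mono_deriv_nonneg {f : ℝ → ℝ} (hf : Monotone f) {f' x : ℝ} (h : HasDerivAt f f' x) :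
    0 ≤ f' := by
  have := hasDerivAt_iff_tendsto_slope.1 h
  refine ge_of_tendsto this ?_
  filter_upwards [self_mem_nhdsWithin] with y hy
  rw [slope_def_field]
  rcases lt_or_gt_of_ne (show y ≠ x from hy) with h | h
  · exact div_nonneg_of_nonpos (by linarith [hf h.le]) (by linarith)
  · exact div_nonneg (by linarith [hf h.le]) (by linarith)

theorem zero_of_int_zero {f : ℝ × ℝ → ℝ} (hf : Continuous f) (h0 : ∀ z, 0 ≤ f z) {ρ : ℝ}
    (h : ∫ z in Kbox ρ, f z = 0) {z : ℝ × ℝ} (h1 : |z.1| < ρ) (h2 : |z.2| < ρ) : f z = 0 := by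
  have := (setIntegral_eq_zero_iff_of_nonneg_ae (Filter.Eventually.of_forall h0)
    (Kbox_int hf.continuousOn)).1 h
  have hs : Set.Ioo (-ρ) ρ ×ˢ Set.Ioo (-ρ) ρ ⊆ Kbox ρ :=
    Set.prod_mono Set.Ioo_subset_Icc_self Set.Ioo_subset_Icc_self
  have h3 := ae_restrict_of_ae_restrict_of_subset hs this
  exact Measure.eqOn_open_of_ae_eq (μ := (volume : Measure (ℝ × ℝ))) (g := 0) h3
    (isOpen_Ioo.prod isOpen_Ioo) hf.continuousOn continuousOn_const
    ⟨abs_lt.1 h1, abs_lt.1 h2⟩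

set_option maxHeartbeats 1600000 in
/-- Finite speed of propagation for a wave equation with dissipative right-hand side. -/
theorem finite_speed {u : ℝ → ℝ → ℝ → ℝ} (hu : Smooth3 u) {R : ℝ} (hR : 0 ≤ R)
    (hpde : ∀ t > 0, ∀ x y, pt u t x y * dAlembert u t x y ≤ 0)
    (h0 : ∀ x y, R ^ 2 < x ^ 2 + y ^ 2 → u 0 x y = 0 ∧ ∀ k, P k u 0 x y = 0) :
    ∀ t0 ≥ 0, ∀ a b, (t0 + R) ^ 2 < a ^ 2 + b ^ 2 → u t0 a b = 0 := by
  intro t0 ht0 a b hab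
  set ra := √(a ^ 2 + b ^ 2) with hra
  have hra2 : ra ^ 2 = a ^ 2 + b ^ 2 := Real.sq_sqrt (by positivity)
  have hra0 : 0 ≤ ra := Real.sqrt_nonneg _
  have hrt : t0 + R < ra := by
    by_contra! h
    nlinarith
  set T0 := ra - R with hT0
  set d := (T0 - t0) / 2 with hd
  have hdpos : 0 < d := by rw [hd, hT0]; linarith
  set ψ : ℝ → ℝ → ℝ := fun x y => √(d ^ 2 + (x - a) ^ 2 + (y - b) ^ 2) with hψ
  have hψ2 : ∀ x y, ψ x y ^ 2 = d ^ 2 + (x - a) ^ 2 + (y - b) ^ 2 := fun x y =>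
    Real.sq_sqrt (by positivity)
  have hψ0 : ∀ x y, 0 < ψ x y := fun x y => Real.sqrt_pos.2 (by positivity)
  set χ : ℝ → ℝ → ℝ → ℝ := fun t x y => expNegInvGlue (T0 - t - ψ x y) with hχ
  have sχ : Smooth3 χ := by
    have : ContDiff ℝ (⊤ : ℕ∞)
        (fun p : ℝ × ℝ × ℝ => √(d ^ 2 + (p.2.1 - a) ^ 2 + (p.2.2 - b) ^ 2)) := by
      apply ContDiff.sqrt
      · fun_prop
      · intro p; positivity
    exact expNegInvGlue.contDiff.comp ((contDiff_const.sub contDiff_fst).sub this)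
  have χ0 : ∀ t x y, 0 ≤ χ t x y := fun t x y => expNegInvGlue.nonneg _
  -- the three derivatives of the weight
  have hder : ∀ z, HasDerivAt expNegInvGlue (deriv expNegInvGlue z) z := fun z =>
    ((expNegInvGlue.contDiff (n := 1)).differentiable (by simp) z).hasDerivAt
  have hdn : ∀ z, 0 ≤ deriv expNegInvGlue z := fun z =>
    mono_deriv_nonneg expNegInvGlue.monotone (hder z)
  have dt : ∀ t x y, pt χ t x y = -deriv expNegInvGlue (T0 - t - ψ x y) := by
    intro t x y
    have := (hder (T0 - t - ψ x y)).comp t (((hasDerivAt_id t).const_sub T0).sub_const (ψ x y))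
    rw [show pt χ t x y = deriv (expNegInvGlue ∘ fun t => T0 - id t - ψ x y) t from rfl, this.deriv]
    ring
  have dψ1 : ∀ x y, HasDerivAt (fun x => ψ x y) ((x - a) / ψ x y) x := by
    intro x y
    have h := (((((hasDerivAt_id x).sub_const a).pow 2).const_add (d ^ 2)).add_const
      ((y - b) ^ 2)).sqrt (by simp only [id, Pi.pow_apply]; positivity)
    refine h.congr_deriv ?_
    have := hψ0 x y
    simp only [hψ, id, Pi.pow_apply] at this ⊢
    push_cast
    field_simp
  have dψ2 : ∀ x y, HasDerivAt (fun y => ψ x y) ((y - b) / ψ x y) y := by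
    intro x y
    have h := ((((hasDerivAt_id y).sub_const b).pow 2).const_add (d ^ 2 + (x - a) ^ 2)).sqrt
      (by simp only [id, Pi.pow_apply]; positivity)
    refine h.congr_deriv ?_
    have := hψ0 x y
    simp only [hψ, id, Pi.pow_apply] at this ⊢
    push_cast
    field_simp
  have d1 : ∀ t x y, p1 χ t x y = -deriv expNegInvGlue (T0 - t - ψ x y) * ((x - a) / ψ x y) := by
    intro t x y
    have := (hder (T0 - t - ψ x y)).comp x ((dψ1 x y).const_sub (T0 - t))
    rw [show p1 χ t x y = deriv (expNegInvGlue ∘ fun x => T0 - t - ψ x y) x from rfl, this.deriv]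
    ring
  have d2 : ∀ t x y, p2 χ t x y = -deriv expNegInvGlue (T0 - t - ψ x y) * ((y - b) / ψ x y) := by
    intro t x y
    have := (hder (T0 - t - ψ x y)).comp y ((dψ2 x y).const_sub (T0 - t))
    rw [show p2 χ t x y = deriv (expNegInvGlue ∘ fun y => T0 - t - ψ x y) y from rfl, this.deriv]
    ring
  set ρ := ra + T0 + 1 with hρ
  have ha : |a| ≤ ra := abs_le_of_sq_le_sq (by rw [hra2]; nlinarith [sq_nonneg b]) hra0
  have hb : |b| ≤ ra := abs_le_of_sq_le_sq (by rw [hra2]; nlinarith [sq_nonneg a]) hra0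
  have hρ0 : 0 < ρ := by rw [hρ, hT0]; linarith
  rw [abs_le] at ha hb
  have χb : ∀ s > 0, ∀ x y, (x = ρ ∨ x = -ρ ∨ y = ρ ∨ y = -ρ) → χ s x y = 0 := by
    intro s hs x y h
    apply expNegInvGlue.zero_of_nonpos
    have : T0 + 1 ≤ ψ x y := by
      apply Real.le_sqrt_of_sq_le
      have hT : 0 < T0 := by linarith
      have e1 : T0 + 1 ≤ ρ - a := by rw [hρ]; linarith [ha.2]
      have e2 : T0 + 1 ≤ ρ + a := by rw [hρ]; linarith [ha.1]
      have e3 : T0 + 1 ≤ ρ - b := by rw [hρ]; linarith [hb.2]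
      have e4 : T0 + 1 ≤ ρ + b := by rw [hρ]; linarith [hb.1]
      rcases h with h | h | h | h
      · nlinarith [sq_nonneg (y - b), sq_nonneg d]
      · nlinarith [sq_nonneg (y - b), sq_nonneg d]
      · nlinarith [sq_nonneg (x - a), sq_nonneg d]
      · nlinarith [sq_nonneg (x - a), sq_nonneg d]
    linarith
  set e : ℝ → ℝ → ℝ → ℝ := fun s x y => χ s x y * (pt u s x y ^ 2 + p1 u s x y ^ 2 + p2 u s x y ^ 2)
    with he
  have ce : Continuous (fun p : ℝ × ℝ × ℝ => e p.1 p.2.1 p.2.2) := by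
    have a0 := smooth_cont sχ
    have v1 := smooth_cont (smooth_pt hu)
    have v2 := smooth_cont (smooth_p1 hu)
    have v3 := smooth_cont (smooth_p2 hu)
    fun_prop
  have e0 : ∀ s x y, 0 ≤ e s x y := fun s x y => mul_nonneg (χ0 s x y) (by positivity)
  set E : ℝ → ℝ := fun s => ∫ z in Kbox ρ, e s z.1 z.2 with hE
  have cE : Continuous E := by
    exact continuous_parametric_integral_of_continuous (f := fun s (z : ℝ × ℝ) => e s z.1 z.2) ce
      (Kbox_compact ρ)
  have hE' : ∀ s > 0, ∃ E', HasDerivAt E E' s ∧ E' ≤ 0 := by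
    intro s hs
    refine ⟨_, flat_flux sχ hu hρ0 ?_ ?_, ?_⟩
    · intro y; rw [χb s hs _ _ (Or.inl rfl), χb s hs _ _ (Or.inr (Or.inl rfl))]; simp
    · intro x
      rw [χb s hs _ _ (Or.inr (Or.inr (Or.inl rfl))), χb s hs _ _ (Or.inr (Or.inr (Or.inr rfl)))]
      simp
    · apply integral_nonpos
      intro z
      obtain ⟨x, y⟩ := z
      show 2 * χ s x y * pt u s x y * dAlembert u s x y
        + (pt χ s x y * (pt u s x y ^ 2 + p1 u s x y ^ 2 + p2 u s x y ^ 2)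
        - 2 * pt u s x y * (p1 χ s x y * p1 u s x y + p2 χ s x y * p2 u s x y)) ≤ 0
      have q1 : χ s x y * (pt u s x y * dAlembert u s x y) ≤ 0 :=
        mul_nonpos_of_nonneg_of_nonpos (χ0 _ _ _) (hpde s hs x y)
      rw [dt, d1, d2]
      set D := deriv expNegInvGlue (T0 - s - ψ x y)
      have hD : 0 ≤ D := hdn _
      set α := (x - a) / ψ x y
      set β := (y - b) / ψ x y
      have hαβ : α ^ 2 + β ^ 2 ≤ 1 := by
        have := hψ0 x y
        simp only [α, β, div_pow]
        rw [← add_div, div_le_one (by positivity), hψ2]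
        nlinarith [sq_nonneg d]
      set X := pt u s x y
      set Y := p1 u s x y
      set Z := p2 u s x y
      have q2 : 2 * X * (α * Y + β * Z) ≤ X ^ 2 + Y ^ 2 + Z ^ 2 := by
        nlinarith [sq_nonneg (Y - α * X), sq_nonneg (Z - β * X),
          mul_le_mul_of_nonneg_left hαβ (sq_nonneg X)]
      nlinarith [mul_le_mul_of_nonneg_left q2 hD]
  have hanti : AntitoneOn E (Set.Icc 0 t0) := by
    refine antitoneOn_of_deriv_nonpos (convex_Icc 0 t0) cE.continuousOn ?_ ?_
    · intro s hs
      rw [interior_Icc] at hs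
      obtain ⟨_, h, _⟩ := hE' s hs.1
      exact h.differentiableAt.differentiableWithinAt
    · intro s hs
      rw [interior_Icc] at hs
      obtain ⟨_, h, h'⟩ := hE' s hs.1
      rw [h.deriv]; exact h'
  have hE0 : E 0 = 0 := by
    have : ∀ z : ℝ × ℝ, e 0 z.1 z.2 = 0 := by
      rintro ⟨x, y⟩
      show χ 0 x y * (pt u 0 x y ^ 2 + p1 u 0 x y ^ 2 + p2 u 0 x y ^ 2) = 0
      by_cases h : R ^ 2 < x ^ 2 + y ^ 2
      · have k0 := (h0 x y h).2 0
        have k1 := (h0 x y h).2 1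
        have k2 := (h0 x y h).2 2
        change pt u 0 x y = 0 at k0
        change p1 u 0 x y = 0 at k1
        change p2 u 0 x y = 0 at k2
        rw [k0, k1, k2]; ring
      · have : χ 0 x y = 0 := by
          apply expNegInvGlue.zero_of_nonpos
          have hr : √(x ^ 2 + y ^ 2) ≤ R := Real.sqrt_le_iff.2 ⟨hR, not_lt.1 h⟩
          have hr0 := Real.sqrt_nonneg (x ^ 2 + y ^ 2)
          have hr2 : √(x ^ 2 + y ^ 2) ^ 2 = x ^ 2 + y ^ 2 := Real.sq_sqrt (by positivity)
          set r := √(x ^ 2 + y ^ 2)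
          have hcs : x * a + y * b ≤ r * ra := by
            apply le_of_abs_le
            apply abs_le_of_sq_le_sq _ (by positivity)
            rw [mul_pow, hr2, hra2]
            nlinarith [sq_nonneg (x * b - y * a)]
          have : T0 ≤ ψ x y := by
            apply Real.le_sqrt_of_sq_le
            have h3 : (ra - r) ^ 2 ≤ (x - a) ^ 2 + (y - b) ^ 2 := by
              have : (ra - r) ^ 2 = ra ^ 2 + r ^ 2 - 2 * (r * ra) := by ring
              rw [this, hr2, hra2]
              linarith
            have h4 : T0 ^ 2 ≤ (ra - r) ^ 2 := by
              apply pow_le_pow_left₀ (by linarith)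
              linarith
            linarith [sq_nonneg d]
          linarith
        rw [this, zero_mul]
    simp only [hE, this, integral_zero]
  have hEz : ∀ s ∈ Set.Icc 0 t0, E s = 0 := by
    intro s hs
    apply le_antisymm
    · rw [← hE0]; exact hanti ⟨le_rfl, ht0⟩ hs hs.1
    · exact integral_nonneg fun z => e0 _ _ _
  have hut : ∀ s ∈ Set.Icc 0 t0, pt u s a b = 0 := by
    intro s hs
    have h := zero_of_int_zero (f := fun z => e s z.1 z.2) (ce.comp (by fun_prop :
      Continuous fun z : ℝ × ℝ => (s, z.1, z.2))) (fun z => e0 _ _ _) (hEz s hs) (z := (a, b))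
      (abs_lt.2 ⟨by linarith, by linarith⟩) (abs_lt.2 ⟨by linarith, by linarith⟩)
    change χ s a b * (pt u s a b ^ 2 + p1 u s a b ^ 2 + p2 u s a b ^ 2) = 0 at h
    have hχp : 0 < χ s a b := by
      apply expNegInvGlue.pos_of_pos
      have : ψ a b = d := by
        simp only [hψ, sub_self]
        rw [show d ^ 2 + 0 ^ 2 + 0 ^ 2 = d ^ 2 by ring, Real.sqrt_sq hdpos.le]
      rw [this]; linarith [hs.2]
    have := (mul_eq_zero.1 h).resolve_left hχp.ne'
    nlinarith [sq_nonneg (pt u s a b), sq_nonneg (p1 u s a b), sq_nonneg (p2 u s a b)]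
  have hconst : u t0 a b = u 0 a b := by
    refine constant_of_has_deriv_right_zero (f := fun s => u s a b) (a := 0) (b := t0) ?_ ?_ t0
      ⟨ht0, le_rfl⟩
    · exact fun s _ => (pt_hd hu s a b).continuousAt.continuousWithinAt
    · intro s hs
      have := pt_hd hu s a b
      rw [hut s ⟨hs.1, hs.2.le⟩] at this
      exact this.hasDerivWithinAt
  rw [hconst]
  exact (h0 a b (by nlinarith)).1

/-! ### The translated system and its data -/

/-- The system after a translation in time: `u` solves the equations for `t > T` and vanishes on
`{t > T, |x| > t - 1}`. -/
structure Sol (T : ℝ) (u : Fin 2 → ℝ → ℝ → ℝ → ℝ) : Prop where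
  smooth : ∀ c, Smooth3 (u c)
  pde : ∀ c t x y, T < t →
    dAlembert (u c) t x y = -(pt (u (c + 1)) t x y) ^ 2 * pt (u c) t x y
  supp : ∀ c, VanishOn (Oset T) (u c)

/-- The cubic nonlinearity of the `c`-th equation, up to sign. -/
def cub (u : Fin 2 → ℝ → ℝ → ℝ → ℝ) (c : Fin 2) : ℝ → ℝ → ℝ → ℝ :=
  pt (u (c + 1)) * pt (u (c + 1)) * pt (u c)

theorem smooth_cub {T : ℝ} {u : Fin 2 → ℝ → ℝ → ℝ → ℝ} (h : Sol T u) (c : Fin 2) :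
    Smooth3 (cub u c) :=
  smooth_mul (smooth_mul (smooth_pt (h.smooth _)) (smooth_pt (h.smooth _))) (smooth_pt (h.smooth _))

theorem isOpen_after (T : ℝ) : IsOpen {p : ℝ × ℝ × ℝ | T < p.1} :=
  isOpen_lt continuous_const continuous_fst

theorem closure_after (T t x y : ℝ) (h : T ≤ t) :
    (t, x, y) ∈ closure {p : ℝ × ℝ × ℝ | T < p.1} := by
  have : {p : ℝ × ℝ × ℝ | T < p.1} = Set.Ioi T ×ˢ (Set.univ : Set (ℝ × ℝ)) := by
    ext p; simp
  rw [this, closure_prod_eq, closure_Ioi, closure_univ]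
  exact ⟨h, Set.mem_univ _⟩

/-- Commuting vector fields with the equation; by continuity this holds up to `t = T`. -/
theorem Sol.comm {T : ℝ} {u : Fin 2 → ℝ → ℝ → ℝ → ℝ} (h : Sol T u) {ι : Type}
    {Z : ι → (ℝ → ℝ → ℝ → ℝ) → (ℝ → ℝ → ℝ → ℝ)} (hZ : CommFam Z) (w : List ι) (c : Fin 2)
    (t x y : ℝ) (ht : T ≤ t) :
    dAlembert (Zw Z w (u c)) t x y = -Zw Z w (cub u c) t x y := by
  have hs : Smooth3 (dAlembert (u c) + cub u c) :=
    smooth_add (smooth_box (h.smooth c)) (smooth_cub h c)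
  have h0 : VanishOn {p : ℝ × ℝ × ℝ | T < p.1} (dAlembert (u c) + cub u c) := by
    intro p hp
    show dAlembert (u c) p.1 p.2.1 p.2.2 + pt (u (c + 1)) p.1 p.2.1 p.2.2
      * pt (u (c + 1)) p.1 p.2.1 p.2.2 * pt (u c) p.1 p.2.1 p.2.2 = 0
    rw [h.pde c _ _ _ hp]; ring
  have h1 := vanish_closure (Zw_smooth hZ w hs) (Zw_vanish hZ w (isOpen_after T) hs h0)
    (t, x, y) (closure_after T t x y ht)
  rw [Zw_add hZ w (smooth_box (h.smooth c)) (smooth_cub h c), Zw_box hZ w (h.smooth c)] at h1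
  change dAlembert (Zw Z w (u c)) t x y + Zw Z w (cub u c) t x y = 0 at h1
  linarith

/-- Partial derivatives may be applied in any order. -/
theorem Zw_perm {w w' : List (Fin 3)} (h : w.Perm w') :
    ∀ {u : ℝ → ℝ → ℝ → ℝ}, Smooth3 u → Zw P w u = Zw P w' u := by
  induction h with
  | nil => intros; rfl
  | cons a _ ih => intro u hu; exact ih (smooth_P a hu)
  | swap a b l =>
    intro u hu
    show Zw P l (P a (P b u)) = Zw P l (P b (P a u))
    rw [P_comm a b hu]
  | trans _ _ ih1 ih2 => intro u hu; rw [ih1 hu, ih2 hu]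

/-- Space derivatives at `t = T` only depend on the restriction to that slice. -/
theorem slice_P {v v' : ℝ → ℝ → ℝ → ℝ} {T e : ℝ} (h : ∀ x y, v T x y = e * v' T x y)
    (hv' : Smooth3 v') (k : Fin 3) (hk : k ≠ 0) (x y : ℝ) : P k v T x y = e * P k v' T x y := by
  fin_cases k
  · exact absurd rfl hk
  · show deriv (fun a => v T a y) x = _
    rw [funext fun a => h a y]
    exact ((p1_hd hv' T x y).const_mul e).deriv
  · show deriv (fun a => v T x a) y = _
    rw [funext fun a => h x a]
    exact ((p2_hd hv' T x y).const_mul e).deriv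

theorem slice_Zw {T e : ℝ} (w : List (Fin 3)) (hw : 0 ∉ w) :
    ∀ {v v' : ℝ → ℝ → ℝ → ℝ}, (∀ x y, v T x y = e * v' T x y) → Smooth3 v' →
      ∀ x y, Zw P w v T x y = e * Zw P w v' T x y := by
  induction w with
  | nil => intro v v' h _ x y; exact h x y
  | cons a w ih =>
    intro v v' h hv' x y
    simp only [List.mem_cons, not_or] at hw
    exact ih hw.2 (slice_P h hv' a (Ne.symm hw.1)) (smooth_P a hv') x y

/-- Every derivative of a smooth function independent of `t` and compactly supported in `x` is
bounded. -/
theorem static_bound {f : ℝ → ℝ → ℝ} (hf : ContDiff ℝ (⊤ : ℕ∞) (fun p : ℝ × ℝ => f p.1 p.2))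
    {R : ℝ} (hR : ∀ x y, R ^ 2 < x ^ 2 + y ^ 2 → f x y = 0) (T : ℝ) (w : List (Fin 3)) :
    Smooth3 (fun _ x y => f x y) ∧ ∃ C, ∀ x y, |Zw P w (fun _ x y => f x y) T x y| ≤ C := by
  have hs : Smooth3 (fun _ x y => f x y) := hf.comp contDiff_snd
  refine ⟨hs, ?_⟩
  have hO : IsOpen {p : ℝ × ℝ × ℝ | R ^ 2 < p.2.1 ^ 2 + p.2.2 ^ 2} :=
    isOpen_lt continuous_const (by fun_prop)
  have hv : VanishOn {p : ℝ × ℝ × ℝ | R ^ 2 < p.2.1 ^ 2 + p.2.2 ^ 2}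
    (Zw P w (fun _ x y => f x y)) :=
    Zw_vanish commFam_P w hO hs fun p hp => hR _ _ hp
  have hc : ContinuousOn (fun z : ℝ × ℝ => Zw P w (fun _ x y => f x y) T z.1 z.2) (Kbox |R|) :=
    (smooth_comp_cont (Zw_smooth commFam_P w hs) continuous_const continuous_fst
      continuous_snd).continuousOn
  obtain ⟨C, hC⟩ := (Kbox_compact |R|).exists_bound_of_continuousOn hc
  refine ⟨max C 0, fun x y => ?_⟩
  by_cases h : R ^ 2 < x ^ 2 + y ^ 2
  · have := hv (T, x, y) h
    change Zw P w (fun _ x y => f x y) T x y = 0 at this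
    rw [this]; simp
  · refine le_trans (hC (x, y) ?_) (le_max_left _ _)
    have h1 : |x| ≤ |R| := sq_le_sq.1 (by nlinarith [sq_nonneg y])
    have h2 : |y| ≤ |R| := sq_le_sq.1 (by nlinarith [sq_nonneg x])
    exact ⟨abs_le.1 h1, abs_le.1 h2⟩

/-- All words of length at most `n`. -/
def words (ι : Type) [Finite ι] (n : ℕ) : Finset (List ι) := (List.finite_length_le ι n).toFinset

theorem mem_words {ι : Type} [Finite ι] {n : ℕ} {w : List ι} : w ∈ words ι n ↔ w.length ≤ n := by
  simp [words]

/-- A uniform bound for finitely many words. -/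
theorem unif_words {ι : Type} [Finite ι] (n : ℕ) {Q : List ι → ℝ → Prop}
    (hm : ∀ w C C', C ≤ C' → Q w C → Q w C') (h : ∀ w : List ι, w.length ≤ n → ∃ C, Q w C) :
    ∃ C, 0 < C ∧ ∀ w : List ι, w.length ≤ n → Q w C := by
  choose! C hC using h
  refine ⟨1 + ∑ w ∈ words ι n, |C w|, by positivity, fun w hw => hm w (C w) _ ?_ (hC w hw)⟩
  have := Finset.single_le_sum (f := fun w => |C w|) (fun i _ => abs_nonneg _) (mem_words.2 hw)
  have h2 := le_abs_self (C w)
  linarith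

/-- All derivatives of the solution are `O(ε)` at `t = T`: time derivatives of order at least two
are traded for space derivatives through the equation. -/
theorem data_bound (f g : Fin 2 → ℝ → ℝ → ℝ)
    (hf : ∀ c, ContDiff ℝ (⊤ : ℕ∞) (fun p : ℝ × ℝ => f c p.1 p.2))
    (hg : ∀ c, ContDiff ℝ (⊤ : ℕ∞) (fun p : ℝ × ℝ => g c p.1 p.2)) {R : ℝ}
    (hfR : ∀ c x y, R ^ 2 < x ^ 2 + y ^ 2 → f c x y = 0)
    (hgR : ∀ c x y, R ^ 2 < x ^ 2 + y ^ 2 → g c x y = 0) (T : ℝ) (N : ℕ) :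
    ∃ C, 0 < C ∧ ∀ ε, 0 < ε → ε ≤ 1 → ∀ u, Sol T u →
      (∀ c x y, u c T x y = ε * f c x y) → (∀ c x y, pt (u c) T x y = ε * g c x y) →
      ∀ w : List (Fin 3), w.length ≤ N → ∀ c x y, |Zw P w (u c) T x y| ≤ C * ε := by
  set Q : List (Fin 3) → ℝ → Prop := fun w C => ∀ ε, 0 < ε → ε ≤ 1 → ∀ u, Sol T u →
      (∀ c x y, u c T x y = ε * f c x y) → (∀ c x y, pt (u c) T x y = ε * g c x y) →
      ∀ c x y, |Zw P w (u c) T x y| ≤ C * ε with hQ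
  have hm : ∀ w C C', C ≤ C' → Q w C → Q w C' := by
    intro w C C' h h1 ε hε hε1 u hu a b c x y
    exact (h1 ε hε hε1 u hu a b c x y).trans (mul_le_mul_of_nonneg_right h hε.le)
  suffices H : ∀ n, ∀ w : List (Fin 3), w.length ≤ n → ∃ C, Q w C by
    obtain ⟨C, hC, h⟩ := unif_words N hm (H N)
    exact ⟨C, hC, fun ε hε hε1 u hu a b w hw => h w hw ε hε hε1 u hu a b⟩
  -- words without time derivatives, applied to the two data
  have base : ∀ s : List (Fin 3), 0 ∉ s → (∃ C, Q s C) ∧ ∃ C, Q (0 :: s) C := by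
    intro s hs
    constructor
    · choose hsm B hB using fun c => static_bound (hf c) (hfR c) T s
      refine ⟨|B 0| + |B 1|, fun ε hε hε1 u hu a b c x y => ?_⟩
      rw [slice_Zw s hs (v' := fun _ x y => f c x y) (a c) (hsm c) x y, abs_mul, abs_of_pos hε,
        mul_comm]
      gcongr
      refine (hB c x y).trans ((le_abs_self _).trans ?_)
      fin_cases c
      · exact le_add_of_nonneg_right (abs_nonneg _)
      · exact le_add_of_nonneg_left (abs_nonneg _)
    · choose hsm B hB using fun c => static_bound (hg c) (hgR c) T s
      refine ⟨|B 0| + |B 1|, fun ε hε hε1 u hu a b c x y => ?_⟩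
      show |Zw P s (pt (u c)) T x y| ≤ _
      rw [slice_Zw s hs (v' := fun _ x y => g c x y) (b c) (hsm c) x y, abs_mul, abs_of_pos hε,
        mul_comm]
      gcongr
      refine (hB c x y).trans ((le_abs_self _).trans ?_)
      fin_cases c
      · exact le_add_of_nonneg_right (abs_nonneg _)
      · exact le_add_of_nonneg_left (abs_nonneg _)
  have Qperm : ∀ {w w' : List (Fin 3)}, w.Perm w' → ∀ {C}, Q w' C → Q w C := by
    intro w w' h C hw ε hε hε1 u hu a b c x y
    rw [Zw_perm h (hu.smooth c)]
    exact hw ε hε hε1 u hu a b c x y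
  intro n
  induction n with
  | zero =>
    intro w hw
    rw [List.eq_nil_of_length_eq_zero (Nat.le_zero.1 hw)]
    exact (base [] (by simp)).1
  | succ n ih =>
    obtain ⟨B, hB0, hB⟩ := unif_words n hm ih
    -- induction on the number of time derivatives
    suffices H : ∀ j, ∀ w : List (Fin 3), w.length ≤ n + 1 → w.count 0 ≤ j → ∃ C, Q w C from
      fun w hw => H _ w hw le_rfl
    intro j
    induction j using Nat.strong_induction_on with
    | _ j ihj =>
    intro w hw hj
    by_cases h0 : (0 : Fin 3) ∈ w
    swap
    · exact (base w h0).1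
    have hp := List.perm_cons_erase h0
    by_cases h1 : (0 : Fin 3) ∈ w.erase 0
    swap
    · obtain ⟨C, hC⟩ := (base _ h1).2
      exact ⟨C, Qperm hp hC⟩
    have hp2 : w.Perm (0 :: 0 :: (w.erase 0).erase 0) :=
      hp.trans ((List.perm_cons_erase h1).cons 0)
    set s := (w.erase 0).erase 0 with hs
    have hlen : s.length + 2 ≤ n + 1 := by
      have := hp2.length_eq
      simp only [List.length_cons] at this
      omega
    have hcnt : s.count 0 + 2 ≤ j := by
      have := hp2.count_eq 0
      simp only [List.count_cons_self] at this
      omega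
    have hc1 : List.count (0 : Fin 3) (1 :: 1 :: s) = s.count 0 := by
      rw [List.count_cons_of_ne (by decide), List.count_cons_of_ne (by decide)]
    have hc2 : List.count (0 : Fin 3) (2 :: 2 :: s) = s.count 0 := by
      rw [List.count_cons_of_ne (by decide), List.count_cons_of_ne (by decide)]
    obtain ⟨C1, hC1⟩ := ihj (s.count 0) (by omega) (1 :: 1 :: s) (by simpa using hlen) hc1.le
    obtain ⟨C2, hC2⟩ := ihj (s.count 0) (by omega) (2 :: 2 :: s) (by simpa using hlen) hc2.le
    refine ⟨C1 + C2 + 3 ^ s.length * B ^ 3, Qperm hp2 ?_⟩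
    intro ε hε hε1 u hu a b c x y
    have e1 := hC1 ε hε hε1 u hu a b c x y
    have e2 := hC2 ε hε hε1 u hu a b c x y
    have hbox := hu.comm commFam_P s c T x y le_rfl
    rw [← Zw_box commFam_P s (hu.smooth c), box_eq] at hbox
    have q0 := hu.smooth c
    have q1 := smooth_P 0 (smooth_P 0 q0)
    have q2 := smooth_P 1 (smooth_P 1 q0)
    have q3 := smooth_P 2 (smooth_P 2 q0)
    have hsplit : P 0 (P 0 (u c)) = (P 0 (P 0 (u c)) - P 1 (P 1 (u c)) - P 2 (P 2 (u c)))
        + (P 1 (P 1 (u c)) + P 2 (P 2 (u c))) := by ring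
    have h3 : Zw P (0 :: 0 :: s) (u c) T x y = -Zw P s (cub u c) T x y
        + (Zw P (1 :: 1 :: s) (u c) T x y + Zw P (2 :: 2 :: s) (u c) T x y) := by
      rw [← hbox]
      show Zw P s (P 0 (P 0 (u c))) T x y = _
      have := congrArg (Zw P s) hsplit
      rw [Zw_add commFam_P s (smooth_sub (smooth_sub q1 q2) q3) (smooth_add q2 q3),
        Zw_add commFam_P s q2 q3] at this
      rw [this]
      rfl
    have h4 : |Zw P s (cub u c) T x y| ≤ 3 ^ s.length * (B ^ 3 * ε) := by
      have hB' : ∀ a' : List (Fin 3), a'.length ≤ s.length → ∀ c', |Zw P a' (pt (u c')) T x y|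
          ≤ B * ε := fun a' ha' c' =>
        hB (0 :: a') (by simp only [List.length_cons]; omega) ε hε hε1 u hu a b c' x y
      refine Zw_mul3_bound commFam_P s (smooth_pt (hu.smooth _)) (smooth_pt (hu.smooth _))
        (smooth_pt (hu.smooth _)) T x y (B ^ 3 * ε) ?_
      intro a' b' c' hl
      rw [abs_mul, abs_mul]
      calc _ ≤ (B * ε) * (B * ε) * (B * ε) := by
            gcongr <;> apply hB' <;> omega
        _ = B ^ 3 * ε * (ε * ε) := by ring
        _ ≤ B ^ 3 * ε * 1 := by
            gcongr; nlinarith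
        _ = _ := by ring
    rw [h3]
    calc |_| ≤ |Zw P s (cub u c) T x y| + (C1 * ε + C2 * ε) := by
          refine (abs_add_le _ _).trans ?_
          rw [abs_neg]
          gcongr
          exact (abs_add_le _ _).trans (add_le_add e1 e2)
      _ ≤ 3 ^ s.length * (B ^ 3 * ε) + (C1 * ε + C2 * ε) := by gcongr
      _ = _ := by ring

/-! ### Local energy estimates on a slab -/

theorem Oset_closure {T t x y : ℝ} (h : T ≤ t) (hx : (t - 1) ^ 2 < x ^ 2 + y ^ 2) :
    (t, x, y) ∈ closure (Oset T) := by
  have h1 : Tendsto (fun s : ℝ => (s, x, y)) (𝓝[>] t) (𝓝 (t, x, y)) :=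
    ((by fun_prop : Continuous fun s : ℝ => (s, x, y)).tendsto t).mono_left nhdsWithin_le_nhds
  refine mem_closure_of_tendsto h1 ?_
  have h2 : ∀ᶠ s in 𝓝[>] t, (s - 1) ^ 2 < x ^ 2 + y ^ 2 :=
    (((by fun_prop : Continuous fun s : ℝ => (s - 1) ^ 2).tendsto t).mono_left
      nhdsWithin_le_nhds).eventually_lt_const hx
  filter_upwards [h2, self_mem_nhdsWithin] with s hs hs'
  exact ⟨lt_of_le_of_lt h hs', hs⟩

/-- The solution and its commuted derivatives vanish outside the light cone, up to `t = T` by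
continuity. -/
theorem Sol.zero {T : ℝ} {u : Fin 2 → ℝ → ℝ → ℝ → ℝ} (h : Sol T u) {ι : Type}
    {Z : ι → (ℝ → ℝ → ℝ → ℝ) → (ℝ → ℝ → ℝ → ℝ)} (hZ : CommFam Z) (w : List ι) (c : Fin 2)
    {t x y : ℝ} (ht : T ≤ t) (hx : (t - 1) ^ 2 < x ^ 2 + y ^ 2) :
    Zw Z w (u c) t x y = 0 ∧ ∀ k, P k (Zw Z w (u c)) t x y = 0 := by
  have h1 := Zw_vanish hZ w (Oset_open T) (h.smooth c) (h.supp c)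
  have h2 := Zw_smooth hZ w (h.smooth c)
  exact ⟨vanish_closure h2 h1 _ (Oset_closure ht hx), fun k =>
    vanish_closure (smooth_P k h2) (P_vanish k (Oset_open T) h2 h1) _ (Oset_closure ht hx)⟩

/-- Grönwall's inequality for a family of energies controlled by their weighted sum. -/
theorem weighted_gronwall {I : Type} (S : Finset I) (p p' E : I → ℝ → ℝ) (κ l : ℝ → ℝ) {a b : ℝ}
    (hab : a ≤ b) (hp : ∀ i, ∀ t ∈ Set.Icc a b, HasDerivAt (p i) (p' i t) t)
    (hp' : ∀ i, ∀ t ∈ Set.Ioo a b, p' i t ≤ -κ t * p i t)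
    (hE0 : ∀ i t, 0 ≤ E i t) (hp0 : ∀ i, ∀ t ∈ Set.Icc a b, 0 ≤ p i t)
    (hEc : ∀ i, ContinuousOn (E i) (Set.Icc a b))
    (hE : ∀ t ∈ Set.Ioo a b, ∀ i ∈ S, ∃ d, HasDerivAt (E i) d t ∧
      p i t * d ≤ l t * ∑ j ∈ S, p j t * E j t)
    (hl : ∀ t ∈ Set.Ioo a b, (S.card : ℝ) * l t ≤ κ t) :
    ∑ i ∈ S, p i b * E i b ≤ ∑ i ∈ S, p i a * E i a := by
  have hd : ∀ t ∈ Set.Ioo a b, ∃ d, HasDerivAt (fun t => ∑ i ∈ S, p i t * E i t) d t ∧ d ≤ 0 := by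
    intro t ht
    have ht' := Set.Ioo_subset_Icc_self ht
    choose! d hd using hE t ht
    refine ⟨∑ i ∈ S, (p' i t * E i t + p i t * d i), ?_, ?_⟩
    · exact HasDerivAt.fun_sum fun i hi => (hp i t ht').mul (hd i hi).1
    · rw [Finset.sum_add_distrib]
      set W := ∑ j ∈ S, p j t * E j t with hW
      have hW0 : 0 ≤ W := Finset.sum_nonneg fun i _ => mul_nonneg (hp0 i t ht') (hE0 i t)
      have h1 : ∑ i ∈ S, p' i t * E i t ≤ -κ t * W := by
        rw [hW, Finset.mul_sum]
        refine Finset.sum_le_sum fun i _ => ?_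
        rw [← mul_assoc]
        exact mul_le_mul_of_nonneg_right (hp' i t ht) (hE0 i t)
      have h2 : ∑ i ∈ S, p i t * d i ≤ (S.card : ℝ) * l t * W := by
        refine (Finset.sum_le_sum fun i hi => (hd i hi).2).trans ?_
        rw [Finset.sum_const, nsmul_eq_mul, mul_assoc]
      nlinarith [mul_le_mul_of_nonneg_right (hl t ht) hW0]
  have := antitoneOn_of_deriv_nonpos (convex_Icc a b) (f := fun t => ∑ i ∈ S, p i t * E i t)
    (continuousOn_finsetSum _ fun i _ => ContinuousOn.mul
      (fun t ht => (hp i t ht).continuousAt.continuousWithinAt) (hEc i)) ?_ ?_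
  · exact this ⟨le_rfl, hab⟩ ⟨hab, le_rfl⟩ hab
  · intro t ht
    rw [interior_Icc] at ht
    obtain ⟨_, h, _⟩ := hd t ht
    exact h.differentiableAt.differentiableWithinAt
  · intro t ht
    rw [interior_Icc] at ht
    obtain ⟨_, h, hneg⟩ := hd t ht
    rw [h.deriv]; exact hneg

/-- The sum of the squares of the first derivatives. -/
def e3 (v : ℝ → ℝ → ℝ → ℝ) (t x y : ℝ) : ℝ := pt v t x y ^ 2 + p1 v t x y ^ 2 + p2 v t x y ^ 2

theorem e3_nonneg (v : ℝ → ℝ → ℝ → ℝ) (t x y : ℝ) : 0 ≤ e3 v t x y := by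
  unfold e3; positivity

theorem P_sq_le_e3 (k : Fin 3) (v : ℝ → ℝ → ℝ → ℝ) (t x y : ℝ) :
    P k v t x y ^ 2 ≤ e3 v t x y := by
  unfold e3
  fin_cases k
  · show pt v t x y ^ 2 ≤ _; nlinarith [sq_nonneg (p1 v t x y), sq_nonneg (p2 v t x y)]
  · show p1 v t x y ^ 2 ≤ _; nlinarith [sq_nonneg (pt v t x y), sq_nonneg (p2 v t x y)]
  · show p2 v t x y ^ 2 ≤ _; nlinarith [sq_nonneg (pt v t x y), sq_nonneg (p1 v t x y)]

theorem e3_cont {v : ℝ → ℝ → ℝ → ℝ} (hv : Smooth3 v) :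
    Continuous (fun p : ℝ × ℝ × ℝ => e3 v p.1 p.2.1 p.2.2) := by
  have a0 := smooth_cont (smooth_pt hv)
  have a1 := smooth_cont (smooth_p1 hv)
  have a2 := smooth_cont (smooth_p2 hv)
  unfold e3
  fun_prop

theorem e3_cont2 {v : ℝ → ℝ → ℝ → ℝ} (hv : Smooth3 v) (t : ℝ) :
    Continuous (fun z : ℝ × ℝ => e3 v t z.1 z.2) :=
  (e3_cont hv).comp (by fun_prop : Continuous fun z : ℝ × ℝ => (t, z.1, z.2))

/-- Indices of the commuted unknowns: a word of length at most `n` and a component. -/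
def idx (ι : Type) [Finite ι] (n : ℕ) : Finset (List ι × Fin 2) := words ι n ×ˢ Finset.univ

theorem mem_idx {ι : Type} [Finite ι] {n : ℕ} {i : List ι × Fin 2} :
    i ∈ idx ι n ↔ i.1.length ≤ n := by
  simp [idx, mem_words]

/-- Energy identity on the slices `t = const`; the solution vanishes near the boundary of the
square. -/
theorem flat_energy {T : ℝ} (hT : 1 ≤ T) {v : ℝ → ℝ → ℝ → ℝ} (hv : Smooth3 v)
    (h0 : VanishOn (Oset T) v) {ρ t : ℝ} (ht : T < t) (hρ : t ≤ ρ) :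
    HasDerivAt (fun t => ∫ z in Kbox ρ, e3 v t z.1 z.2)
      (∫ z in Kbox ρ, 2 * pt v t z.1 z.2 * dAlembert v t z.1 z.2) t := by
  have hz : ∀ x y, (x = ρ ∨ x = -ρ ∨ y = ρ ∨ y = -ρ) → pt v t x y = 0 := by
    intro x y h
    refine P_vanish 0 (Oset_open T) hv h0 (t, x, y) ⟨ht, ?_⟩
    show (t - 1) ^ 2 < x ^ 2 + y ^ 2
    rcases h with rfl | rfl | rfl | rfl
    · nlinarith [sq_nonneg y]
    · nlinarith [sq_nonneg y]
    · nlinarith [sq_nonneg x]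
    · nlinarith [sq_nonneg x]
  have h1 : Smooth3 (fun _ _ _ => (1 : ℝ)) := contDiff_const
  have e0 : pt (fun _ _ _ => (1 : ℝ)) = 0 := by funext t x y; simp [pt]
  have e1 : p1 (fun _ _ _ => (1 : ℝ)) = 0 := by funext t x y; simp [p1]
  have e2 : p2 (fun _ _ _ => (1 : ℝ)) = 0 := by funext t x y; simp [p2]
  have := flat_flux (s := t) h1 hv (ρ := ρ) (by linarith)
    (fun y => by rw [hz ρ y (by simp), hz (-ρ) y (by simp)]; simp)
    (fun x => by rw [hz x ρ (by simp), hz x (-ρ) (by simp)]; simp)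
  rw [e0, e1, e2] at this
  simpa [e3] using this

/-- The Sobolev inequality on a slice `t = const`. -/
theorem flat_sob {u : ℝ → ℝ → ℝ → ℝ} (hu : Smooth3 u) (F : ℝ → ℝ → ℝ) (t : ℝ) (N : ℕ)
    (hF : ∀ w : List (Fin 3), w.length ≤ N + 2 → ∀ x y, e3 (Zw P w u) t x y ≤ F x y)
    (cF : Continuous (fun z : ℝ × ℝ => F z.1 z.2)) {ρ : ℝ} (w : List (Fin 3)) (hw : w.length ≤ N)
    (k : Fin 3) {x y : ℝ} (hx : |x| ≤ ρ - 1) (hy : |y| ≤ ρ - 1) :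
    P k (Zw P w u) t x y ^ 2 ≤ 16 * ∫ z in Kbox ρ, F z.1 z.2 := by
  have hz := Zw_smooth commFam_P w hu
  have hv := smooth_P k hz
  have hv1 := smooth_P 1 hv
  have hv2 := smooth_P 2 hv
  have hv12 := smooth_P 2 hv1
  have key : ∀ s : List (Fin 3), s.length ≤ 2 → ∀ x y,
      Zw P s (P k (Zw P w u)) t x y ^ 2 ≤ F x y := by
    intro s hs x y
    have : Zw P s (P k (Zw P w u)) = P k (Zw P (w ++ s) u) := by
      rw [Zw_append]
      have : P k (Zw P s (Zw P w u)) = Zw P (s ++ [k]) (Zw P w u) := by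
        rw [Zw_append]; rfl
      rw [this]
      exact Zw_perm (List.perm_append_singleton k s).symm hz
    rw [this]
    exact (P_sq_le_e3 _ _ _ _ _).trans (hF _ (by rw [List.length_append]; omega) x y)
  rw [abs_le] at hx hy
  have h := sob2 (w := fun x y => P k (Zw P w u) t x y)
    (w1 := fun x y => P 1 (P k (Zw P w u)) t x y) (w2 := fun x y => P 2 (P k (Zw P w u)) t x y)
    (w12 := fun x y => P 2 (P 1 (P k (Zw P w u))) t x y) (G := fun x y => 4 * F x y)
    (fun x y => p1_hd hv t x y) (fun x y => p2_hd hv t x y) (fun x y => p2_hd hv1 t x y)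
    (smooth_comp_cont hv continuous_const continuous_fst continuous_snd)
    (smooth_comp_cont hv1 continuous_const continuous_fst continuous_snd)
    (smooth_comp_cont hv2 continuous_const continuous_fst continuous_snd)
    (smooth_comp_cont hv12 continuous_const continuous_fst continuous_snd)
    (continuous_const.mul cF) (a := x) (b := y) (l := 1) (ρ := ρ) one_pos
    ⟨by linarith, by linarith⟩ ⟨by linarith, by linarith⟩
    (fun x y => mul_nonneg (by norm_num) ((e3_nonneg _ _ _ _).trans (hF [] (by simp) x y)))
    (fun x _ y _ => by
      have a0 := key [] (by simp) x y
      have a1 := key [1] (by simp) x y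
      have a2 := key [2] (by simp) x y
      have a3 := key [1, 2] (by simp) x y
      simp only [Zw] at a0 a1 a2 a3
      linarith)
  rw [integral_const_mul] at h
  linarith

set_option maxHeartbeats 1000000 in
/-- Bounds for all derivatives on a slab of finite height. -/
theorem slab {T T2 : ℝ} (hT : 1 ≤ T) (hT2 : T ≤ T2) {C0 : ℝ} (hC0 : 0 < C0) :
    ∃ ε0 C, 0 < ε0 ∧ 0 < C ∧ ∀ ε, 0 < ε → ε ≤ ε0 → ∀ u, Sol T u →
      (∀ w : List (Fin 3), w.length ≤ 8 → ∀ c x y, |Zw P w (u c) T x y| ≤ C0 * ε) →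
      ∀ t ∈ Set.Icc T T2, ∀ w : List (Fin 3), w.length ≤ 5 → ∀ k c x y,
        |P k (Zw P w (u c)) t x y| ≤ C * ε := by
  set ρ := T2 + 2 with hρ
  set I := idx (Fin 3) 7 with hI
  set n : ℝ := (I.card : ℝ) with hn
  set D : ℝ := n * (3 * C0 ^ 2 * volume.real (Kbox ρ)) with hD
  have hn0 : 0 ≤ n := by positivity
  have hD0 : 0 ≤ D := by positivity
  set B : ℝ := √(16 * Real.exp 1 * D + 1) with hB
  have hB2 : B ^ 2 = 16 * Real.exp 1 * D + 1 := Real.sq_sqrt (by positivity)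
  have hB0 : 0 < B := Real.sqrt_pos.2 (by positivity)
  -- smallness makes the exponential growth factor on the slab at most `e`
  set q : ℝ := 2 * 24 ^ 7 * B ^ 2 * n * (T2 - T) with hq
  have hq0 : 0 ≤ q := by
    have : 0 ≤ T2 - T := by linarith
    positivity
  refine ⟨1 / (1 + q), B, by positivity, hB0, ?_⟩
  intro ε hε hεle u hu hdata
  have hε1 : ε ≤ 1 := hεle.trans (by rw [div_le_one (by positivity)]; linarith)
  have hεq : q * ε ^ 2 ≤ 1 := by
    have h1 : ε * (1 + q) ≤ 1 := by rwa [le_div_iff₀ (by positivity)] at hεle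
    nlinarith [mul_nonneg hq0 hε.le]
  have hsm : ∀ i : List (Fin 3) × Fin 2, Smooth3 (Zw P i.1 (u i.2)) := fun i =>
    Zw_smooth commFam_P _ (hu.smooth _)
  set F : ℝ → ℝ → ℝ → ℝ := fun t x y => ∑ i ∈ I, e3 (Zw P i.1 (u i.2)) t x y with hF
  have hFle : ∀ c (w : List (Fin 3)), w.length ≤ 7 → ∀ t x y, e3 (Zw P w (u c)) t x y ≤ F t x y :=
    fun c w hw t x y => Finset.single_le_sum (f := fun i : List (Fin 3) × Fin 2 =>
      e3 (Zw P i.1 (u i.2)) t x y) (fun i _ => e3_nonneg _ _ _ _)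
      (mem_idx.2 hw : (w, c) ∈ I)
  have cF : ∀ t, Continuous (fun z : ℝ × ℝ => F t z.1 z.2) := fun t =>
    continuous_finsetSum _ fun i _ => e3_cont2 (hsm i) t
  have F0 : ∀ t x y, 0 ≤ F t x y := fun t x y => Finset.sum_nonneg fun i _ => e3_nonneg _ _ _ _
  set E : List (Fin 3) × Fin 2 → ℝ → ℝ := fun i t => ∫ z in Kbox ρ, e3 (Zw P i.1 (u i.2)) t z.1 z.2
    with hE
  have cE : ∀ i, Continuous (E i) := fun i => continuous_parametric_integral_of_continuous
    (f := fun t (z : ℝ × ℝ) => e3 (Zw P i.1 (u i.2)) t z.1 z.2) (e3_cont (hsm i)) (Kbox_compact ρ)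
  have E0 : ∀ i t, 0 ≤ E i t := fun i t => integral_nonneg fun z => e3_nonneg _ _ _ _
  have hFE : ∀ t, ∫ z in Kbox ρ, F t z.1 z.2 = ∑ i ∈ I, E i t := fun t =>
    integral_finsetSum _ fun i _ => Kbox_int (e3_cont2 (hsm i) t).continuousOn
  have hdat0 : ∑ i ∈ I, E i T ≤ D * ε ^ 2 := by
    have : ∀ i ∈ I, E i T ≤ 3 * C0 ^ 2 * volume.real (Kbox ρ) * ε ^ 2 := by
      intro i hi
      have hb := norm_setIntegral_le_of_norm_le_const (μ := volume) (s := Kbox ρ)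
        (f := fun z : ℝ × ℝ => e3 (Zw P i.1 (u i.2)) T z.1 z.2) (C := 3 * C0 ^ 2 * ε ^ 2)
        (Kbox_compact ρ).measure_lt_top (fun z _ => by
          rw [Real.norm_of_nonneg (e3_nonneg _ _ _ _)]
          have hk : ∀ k, P k (Zw P i.1 (u i.2)) T z.1 z.2 ^ 2 ≤ (C0 * ε) ^ 2 := by
            intro k
            have := hdata (i.1 ++ [k]) (by
              rw [List.length_append]; have := mem_idx.1 hi; simp; omega) i.2 z.1 z.2
            rw [Zw_append] at this
            exact sq_le_sq' (abs_le.1 this).1 (abs_le.1 this).2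
          have k0 := hk 0
          have k1 := hk 1
          have k2 := hk 2
          unfold e3
          simp only [P] at k0 k1 k2
          linarith)
      refine (le_abs_self _).trans (hb.trans (le_of_eq (by ring)))
    refine (Finset.sum_le_sum this).trans (le_of_eq ?_)
    rw [Finset.sum_const, nsmul_eq_mul, hD]; ring
  -- pointwise bounds inside the box extend everywhere by finite speed of propagation
  have hout : ∀ t ∈ Set.Icc T T2, ∀ w k c x y, ¬ (|x| ≤ ρ - 1 ∧ |y| ≤ ρ - 1) →
      P k (Zw P w (u c)) t x y = 0 := by
    intro t ht w k c x y h
    refine (hu.zero commFam_P w c ht.1 ?_).2 k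
    rw [not_and_or, not_le, not_le] at h
    have h1 : t - 1 < ρ - 1 := by linarith [ht.2]
    have h2 : 0 ≤ t - 1 := by linarith [ht.1]
    rcases h with h | h
    · nlinarith [sq_nonneg y, sq_abs x]
    · nlinarith [sq_nonneg x, sq_abs y]
  -- the energy estimate under pointwise bounds for low order derivatives
  have energy : ∀ s1 ∈ Set.Icc T T2, (∀ s ∈ Set.Ico T s1, ∀ w : List (Fin 3), w.length ≤ 3 →
      ∀ k c x y, |P k (Zw P w (u c)) s x y| ≤ B * ε) → ∑ i ∈ I, E i s1 ≤ Real.exp 1 * D * ε ^ 2 := by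
    intro s1 hs1 hb
    set κ : ℝ := 2 * 24 ^ 7 * B ^ 2 * ε ^ 2 * n with hκ
    have hκ0 : 0 ≤ κ := by positivity
    have hg := weighted_gronwall I (fun _ t => Real.exp (-κ * t))
      (fun _ t => Real.exp (-κ * t) * -κ) E (fun _ => κ) (fun _ => 2 * 24 ^ 7 * B ^ 2 * ε ^ 2)
      hs1.1 (fun _ t _ => ((hasDerivAt_id t).const_mul (-κ)).exp.congr_deriv (by simp))
      (fun _ t _ => by linarith) E0 (fun _ t _ => (Real.exp_pos _).le)
      (fun i => (cE i).continuousOn) ?_ ?_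
    · rw [← Finset.mul_sum, ← Finset.mul_sum] at hg
      have h1 : ∑ i ∈ I, E i s1 ≤ Real.exp (κ * (s1 - T)) * ∑ i ∈ I, E i T := by
        have := mul_le_mul_of_nonneg_left hg (Real.exp_pos (κ * s1)).le
        rw [← mul_assoc, ← mul_assoc, ← Real.exp_add, ← Real.exp_add] at this
        rwa [show κ * s1 + -κ * s1 = 0 by ring, Real.exp_zero, one_mul,
          show κ * s1 + -κ * T = κ * (s1 - T) by ring] at this
      have h2 : Real.exp (κ * (s1 - T)) ≤ Real.exp 1 := by
        apply Real.exp_le_exp.2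
        refine le_trans ?_ hεq
        calc κ * (s1 - T) ≤ κ * (T2 - T) := by gcongr; exact hs1.2
          _ = q * ε ^ 2 := by rw [hκ, hq]; ring
      calc _ ≤ _ := h1
        _ ≤ Real.exp 1 * (D * ε ^ 2) := by
            gcongr
            exact Finset.sum_nonneg fun i _ => E0 i T
        _ = _ := by ring
    · intro t ht i hi
      have hi' : i.1.length ≤ 7 := mem_idx.1 hi
      refine ⟨_, flat_energy hT (hsm i) (Zw_vanish commFam_P _ (Oset_open T) (hu.smooth _)
        (hu.supp _)) ht.1 (by linarith [ht.2, hs1.2]), ?_⟩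
      rw [← Finset.mul_sum, mul_left_comm]
      refine mul_le_mul_of_nonneg_left ?_ (Real.exp_pos _).le
      rw [← hFE, ← integral_const_mul]
      refine setIntegral_mono_on (Kbox_int ?_) (Kbox_int ?_) (Kbox_meas ρ) ?_
      · exact ((continuous_const.mul (smooth_comp_cont (smooth_pt (hsm i)) continuous_const
          continuous_fst continuous_snd)).mul (smooth_comp_cont (smooth_box (hsm i))
          continuous_const continuous_fst continuous_snd)).continuousOn
      · exact (continuous_const.mul (cF t)).continuousOn
      · rintro ⟨x, y⟩ _
        show 2 * pt (Zw P i.1 (u i.2)) t x y * dAlembert (Zw P i.1 (u i.2)) t x y ≤ _ * F t x y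
        have hM : ∀ c (w : List (Fin 3)), w.length ≤ 7 → ∀ k,
            |P k (Zw P w (u c)) t x y| ≤ √(F t x y) := fun c w hw k =>
          Real.abs_le_sqrt ((P_sq_le_e3 _ _ _ _ _).trans (hFle c w hw t x y))
        have hcub := cubic_bound commFam_P 3 (hu.smooth i.2) (hu.smooth (i.2 + 1)) t x y (B * ε)
          (√(F t x y)) 1 le_rfl (by positivity) (Real.sqrt_nonneg _) i.1 (by omega)
          (fun w hw k => by rw [one_pow, mul_one]; exact hb t ⟨ht.1.le, ht.2⟩ w hw k _ x y)
          (fun w hw k => by rw [one_pow, mul_one]; exact hb t ⟨ht.1.le, ht.2⟩ w hw k _ x y)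
          (fun w hw k => by rw [one_pow, mul_one]; exact hM _ w (by omega) k)
          (fun w hw k => by rw [one_pow, mul_one]; exact hM _ w (by omega) k)
        rw [hu.comm commFam_P i.1 i.2 t x y ht.1.le]
        have h1 := hM i.2 i.1 hi' 0
        change |pt (Zw P i.1 (u i.2)) t x y| ≤ _ at h1
        change |Zw P i.1 (cub u i.2) t x y| ≤ _ at hcub
        set a := pt (Zw P i.1 (u i.2)) t x y
        set b := Zw P i.1 (cub u i.2) t x y
        have h2 : (24 : ℝ) ^ i.1.length ≤ 24 ^ 7 := pow_le_pow_right₀ (by norm_num) hi'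
        have hs2 : √(F t x y) * √(F t x y) = F t x y := Real.mul_self_sqrt (F0 t x y)
        calc 2 * a * -b ≤ 2 * (|a| * |b|) := by
              rw [← abs_mul]
              nlinarith [neg_abs_le (a * b)]
          _ ≤ 2 * (√(F t x y) * (24 ^ 7 * ((B * ε) ^ 2 * √(F t x y)))) := by
              rw [one_pow, mul_one] at hcub
              gcongr
              exact hcub.trans (by gcongr)
          _ = 2 * 24 ^ 7 * B ^ 2 * ε ^ 2 * (√(F t x y) * √(F t x y)) := by ring
          _ = _ := by rw [hs2]
    · intro t _
      exact le_of_eq (by rw [hκ]; ring)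
  have hsob : ∀ s w k c x y, w.length ≤ 5 → |x| ≤ ρ - 1 → |y| ≤ ρ - 1 →
      P k (Zw P w (u c)) s x y ^ 2 ≤ 16 * ∑ i ∈ I, E i s := by
    intro s w k c x y hw hx hy
    rw [← hFE]
    exact flat_sob (hu.smooth c) (F s) s 5 (fun w hw x y => hFle c w hw s x y) (cF s) w hw k hx hy
  have hstrict : ∀ s, ∑ i ∈ I, E i s ≤ Real.exp 1 * D * ε ^ 2 →
      16 * ∑ i ∈ I, E i s < (B * ε) ^ 2 := by
    intro s h
    rw [mul_pow, hB2]
    have : 0 < ε ^ 2 := by positivity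
    nlinarith
  have : Finite {w : List (Fin 3) // w.length ≤ 3} := (List.finite_length_le _ 3).to_subtype
  have hboot := bootstrap (Kbox_compact (ρ - 1))
    (fun (j : {w : List (Fin 3) // w.length ≤ 3} × Fin 3 × Fin 2) s (z : ℝ × ℝ) =>
      P j.2.1 (Zw P j.1.1 (u j.2.2)) s z.1 z.2 ^ 2 - (B * ε) ^ 2) T T2 ?_ ?_
  · intro t ht w hw k c x y
    have hlow : ∀ s ∈ Set.Ico T t, ∀ w : List (Fin 3), w.length ≤ 3 →
        ∀ k c x y, |P k (Zw P w (u c)) s x y| ≤ B * ε := by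
      intro s hs w hw k c x y
      have hs' : s ∈ Set.Icc T T2 := ⟨hs.1, hs.2.le.trans ht.2⟩
      by_cases h : |x| ≤ ρ - 1 ∧ |y| ≤ ρ - 1
      · have := hboot s hs' (⟨w, hw⟩, k, c) (x, y) ⟨abs_le.1 h.1, abs_le.1 h.2⟩
        exact abs_le_of_sq_le_sq (sub_neg.1 this).le (by positivity)
      · rw [hout s hs' w k c x y h, abs_zero]; positivity
    by_cases h : |x| ≤ ρ - 1 ∧ |y| ≤ ρ - 1
    · exact abs_le_of_sq_le_sq ((hsob t w k c x y hw h.1 h.2).trans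
        (hstrict t (energy t ht hlow)).le) (by positivity)
    · rw [hout t ht w k c x y h, abs_zero]; positivity
  · intro j
    refine Continuous.continuousOn ?_
    have := smooth_cont (smooth_P j.2.1 (hsm (j.1.1, j.2.2)))
    exact (this.pow 2).sub continuous_const
  · intro s1 hs1 hprev j z hz
    have hlow : ∀ s ∈ Set.Ico T s1, ∀ w : List (Fin 3), w.length ≤ 3 →
        ∀ k c x y, |P k (Zw P w (u c)) s x y| ≤ B * ε := by
      intro s hs w hw k c x y
      have hs' : s ∈ Set.Icc T T2 := ⟨hs.1, hs.2.le.trans hs1.2⟩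
      by_cases h : |x| ≤ ρ - 1 ∧ |y| ≤ ρ - 1
      · have := hprev s hs (⟨w, hw⟩, k, c) (x, y) ⟨abs_le.1 h.1, abs_le.1 h.2⟩
        exact abs_le_of_sq_le_sq (sub_neg.1 this).le (by positivity)
      · rw [hout s hs' w k c x y h, abs_zero]; positivity
    have hx : |z.1| ≤ ρ - 1 := abs_le.2 hz.1
    have hy : |z.2| ≤ ρ - 1 := abs_le.2 hz.2
    have hj : j.1.1.length ≤ 5 := j.1.2.trans (by norm_num)
    exact sub_neg.2 ((hsob s1 _ j.2.1 j.2.2 _ _ hj hx hy).trans_lt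
      (hstrict s1 (energy s1 hs1 hlow)))

/-! ### Boosts on bounded sets and the hyperboloidal Sobolev inequality -/

/-- On bounded sets, boosts are controlled by translations. -/
theorem boost_word_bound1 (a : Fin 2) {t x y ρ D : ℝ} (ht : |t| ≤ ρ) (hx : |x| ≤ ρ) (hy : |y| ≤ ρ)
    (hD : 0 ≤ D) (z : List (Fin 3)) : ∀ {v : ℝ → ℝ → ℝ → ℝ}, Smooth3 v →
    (∀ z' : List (Fin 3), 1 ≤ z'.length → z'.length ≤ z.length + 1 → |Zw P z' v t x y| ≤ D) →
    |Zw P z (L a v) t x y| ≤ (2 * ρ + z.length) * D := by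
  have hρ : 0 ≤ ρ := (abs_nonneg t).trans ht
  induction z with
  | nil =>
    intro v hv h
    have b0 : |pt v t x y| ≤ D := h [0] (by simp) (by simp)
    have b1 : |p1 v t x y| ≤ D := h [1] (by simp) (by simp)
    have b2 : |p2 v t x y| ≤ D := h [2] (by simp) (by simp)
    show |L a v t x y| ≤ _
    have key : ∀ {s s' d d' : ℝ}, |s| ≤ ρ → |s'| ≤ ρ → |d| ≤ D → |d'| ≤ D →
        |s * d + s' * d'| ≤ 2 * ρ * D := by
      intro s s' d d' h1 h2 h3 h4
      calc _ ≤ |s| * |d| + |s'| * |d'| := by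
            rw [← abs_mul, ← abs_mul]; exact abs_add_le _ _
        _ ≤ ρ * D + ρ * D := by gcongr
        _ = _ := by ring
    have : (2 * ρ + (([] : List (Fin 3)).length : ℝ)) * D = 2 * ρ * D := by simp
    rw [this]
    fin_cases a
    · show |L 0 v t x y| ≤ _
      rw [L0_apply]; exact key ht hx b1 b0
    · show |L 1 v t x y| ≤ _
      rw [L1_apply]; exact key ht hy b2 b0
  | cons j z ih =>
    intro v hv h
    obtain ⟨κ, k, hκ, he⟩ := commFam_L.comm a j v hv
    have he' : P j (L a v) = L a (P j v) + (-κ) • P k v := by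
      rw [he, neg_smul]; ring
    show |Zw P z (P j (L a v)) t x y| ≤ _
    rw [he', Zw_add commFam_P z (smooth_L a (smooth_P j hv)) (smooth_smul _ (smooth_P k hv)),
      Zw_smul commFam_P z _ (smooth_P k hv)]
    show |Zw P z (L a (P j v)) t x y + -κ * Zw P z (P k v) t x y| ≤ _
    have h1 := ih (smooth_P j hv) (fun z' h1 h2 => h (j :: z') (by simp) (by
      simp only [List.length_cons]; omega))
    have h2 : |Zw P z (P k v) t x y| ≤ D := h (k :: z) (by simp) (by simp)
    calc _ ≤ |Zw P z (L a (P j v)) t x y| + |κ| * |Zw P z (P k v) t x y| := by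
          refine (abs_add_le _ _).trans ?_
          rw [abs_mul, abs_neg]
      _ ≤ (2 * ρ + z.length) * D + 1 * D := by gcongr
      _ = _ := by push_cast [List.length_cons]; ring

/-- On bounded sets, first derivatives of boosted functions are controlled by translations. -/
theorem boost_word_bound {t x y ρ : ℝ} (ht : |t| ≤ ρ) (hx : |x| ≤ ρ) (hy : |y| ≤ ρ)
    (w : List (Fin 2)) (hw : w.length ≤ 5) : ∀ {D : ℝ}, 0 ≤ D → ∀ {v : ℝ → ℝ → ℝ → ℝ}, Smooth3 v →
    (∀ z : List (Fin 3), 1 ≤ z.length → z.length ≤ w.length + 1 → |Zw P z v t x y| ≤ D) →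
    ∀ k, |P k (Zw L w v) t x y| ≤ (2 * ρ + 10) ^ w.length * D := by
  have hρ : 0 ≤ ρ := (abs_nonneg t).trans ht
  induction w with
  | nil => intro D hD v hv h k; simpa [Zw] using h [k] (by simp) (by simp)
  | cons a w ih =>
    intro D hD v hv h k
    simp only [List.length_cons] at hw h
    have h1 : ∀ z : List (Fin 3), 1 ≤ z.length → z.length ≤ w.length + 1 →
        |Zw P z (L a v) t x y| ≤ (2 * ρ + 10) * D := by
      intro z h1 h2
      refine (boost_word_bound1 a ht hx hy hD z hv fun z' h3 h4 => h z' h3 (by omega)).trans ?_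
      have : (z.length : ℝ) ≤ 10 := by exact_mod_cast (by omega : z.length ≤ 10)
      gcongr
    have := ih (by omega) (D := (2 * ρ + 10) * D) (by positivity) (smooth_L a hv) h1 k
    refine this.trans (le_of_eq ?_)
    rw [List.length_cons]; ring

/-- The Sobolev inequality on the hyperboloid `t = √(s² + |x|²)`, on a square of side comparable
to `t`. -/
theorem hyp_sob0 {v : ℝ → ℝ → ℝ → ℝ} (hv : Smooth3 v) {s ρ x y : ℝ} (hs : 0 < s)
    (hx : |x| + hh s x y ≤ ρ) (hy : |y| + hh s x y ≤ ρ) {G : ℝ → ℝ → ℝ}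
    (cG : Continuous (fun z : ℝ × ℝ => G z.1 z.2)) (G0 : ∀ x y, 0 ≤ G x y)
    (hG : ∀ x' y', hh s x' y' ≤ 2 * hh s x y → ∀ z ∈ ([[], [0], [1], [0, 1]] : List (List (Fin 2))),
      Zw L z v (hh s x' y') x' y' ^ 2 ≤ G x' y') :
    hh s x y ^ 2 * v (hh s x y) x y ^ 2 ≤ 2048 * ∫ z in Kbox ρ, G z.1 z.2 := by
  set h0 := hh s x y with hh0
  have hpos : 0 < h0 := hh_pos hs x y
  have hne := fun x y => hh_ne hs x y
  have sL0 := smooth_L 0 hv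
  have sL1 := smooth_L 1 hv
  have sL10 := smooth_L 1 sL0
  have d1 : ∀ x y, HasDerivAt (fun x => v (hh s x y) x y) (L 0 v (hh s x y) x y / hh s x y) x := by
    intro x y
    refine (hyp_1 hv hs x y).congr_deriv ?_
    have := hne x y
    rw [L0_apply]; field_simp; ring
  have d2 : ∀ x y, HasDerivAt (fun y => v (hh s x y) x y) (L 1 v (hh s x y) x y / hh s x y) y := by
    intro x y
    refine (hyp_2 hv hs x y).congr_deriv ?_
    have := hne x y
    rw [L1_apply]; field_simp; ring
  have d12 : ∀ x y, HasDerivAt (fun y => L 0 v (hh s x y) x y / hh s x y)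
      (L 1 (L 0 v) (hh s x y) x y / hh s x y ^ 2
        - L 0 v (hh s x y) x y * y / hh s x y ^ 3) y := by
    intro x y
    refine ((hyp_2 sL0 hs x y).div (hh_hd2 hs x y) (hne x y)).congr_deriv ?_
    have := hne x y
    rw [L1_apply]; field_simp; ring
  have ch : Continuous (fun z : ℝ × ℝ => hh s z.1 z.2) :=
    hh_cont.comp (by fun_prop : Continuous fun z : ℝ × ℝ => (s, z.1, z.2))
  have cv : ∀ {f : ℝ → ℝ → ℝ → ℝ}, Smooth3 f →
      Continuous (fun z : ℝ × ℝ => f (hh s z.1 z.2) z.1 z.2) := fun hf =>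
    smooth_comp_cont hf ch continuous_fst continuous_snd
  have hxb := abs_le.1 (show |x| ≤ ρ - h0 by linarith)
  have hyb := abs_le.1 (show |y| ≤ ρ - h0 by linarith)
  have h := sob2 (w := fun x y => v (hh s x y) x y) (G := fun x y => 8 * G x y) d1 d2 d12 (cv hv)
    ((cv sL0).div ch fun z => hne _ _) ((cv sL1).div ch fun z => hne _ _)
    (((cv sL10).div (ch.pow 2) fun z => pow_ne_zero 2 (hne _ _)).sub
      (((cv sL0).mul continuous_snd).div (ch.pow 3) fun z => pow_ne_zero 3 (hne _ _)))
    (continuous_const.mul cG) (a := x) (b := y) (l := h0 / 8) (ρ := ρ) (by positivity)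
    ⟨by linarith, by linarith⟩ ⟨by linarith, by linarith⟩
    (fun x y => mul_nonneg (by norm_num) (G0 x y)) ?_
  · rw [integral_const_mul] at h
    have e : (h0 / 8) ^ 2 * v (hh s x y) x y ^ 2 = (h0 ^ 2 * v h0 x y ^ 2) / 64 := by
      rw [← hh0]; ring
    simp only [e] at h
    linarith
  · intro x' hx' y' hy'
    set h' := hh s x' y' with hh'
    have hp' : 0 < h' := hh_pos hs x' y'
    have q0 : h0 ^ 2 = s ^ 2 + x ^ 2 + y ^ 2 := hh_sq s x y
    have q1 : h' ^ 2 = s ^ 2 + x' ^ 2 + y' ^ 2 := hh_sq s x' y'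
    have a1 := abs_le.1 (hh_ge1 s x y)
    have a2 := abs_le.1 (hh_ge2 s x y)
    rw [← hh0] at a1 a2
    obtain ⟨u1, u2⟩ := hx'
    obtain ⟨v1, v2⟩ := hy'
    have hup : h' ≤ 2 * h0 := by
      apply le_of_abs_le
      apply abs_le_of_sq_le_sq _ (by positivity)
      nlinarith
    have hlow : h0 ^ 2 ≤ 4 * h' ^ 2 := by nlinarith
    have hy1 := hh_ge2 s x' y'
    have hy2 : y' ^ 2 ≤ h' ^ 2 := sq_le_sq.2 (hy1.trans (le_abs_self _))
    have g0 := hG x' y' hup [] (by simp)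
    have g1 := hG x' y' hup [0] (by simp)
    have g2 := hG x' y' hup [1] (by simp)
    have g3 := hG x' y' hup [0, 1] (by simp)
    simp only [Zw] at g0 g1 g2 g3
    rw [← hh'] at g0 g1 g2 g3
    set A := L 0 v h' x' y'
    set B := L 1 v h' x' y'
    set D := L 1 (L 0 v) h' x' y'
    have r : (h0 / 8) ^ 2 / h' ^ 2 ≤ 1 := by
      rw [div_le_one (by positivity)]; nlinarith
    have r0 : 0 ≤ (h0 / 8) ^ 2 / h' ^ 2 := by positivity
    have t1 : (h0 / 8) ^ 2 * (A / h') ^ 2 ≤ A ^ 2 := by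
      rw [show (h0 / 8) ^ 2 * (A / h') ^ 2 = ((h0 / 8) ^ 2 / h' ^ 2) * A ^ 2 by ring]
      exact mul_le_of_le_one_left (sq_nonneg _) r
    have t2 : (h0 / 8) ^ 2 * (B / h') ^ 2 ≤ B ^ 2 := by
      rw [show (h0 / 8) ^ 2 * (B / h') ^ 2 = ((h0 / 8) ^ 2 / h' ^ 2) * B ^ 2 by ring]
      exact mul_le_of_le_one_left (sq_nonneg _) r
    have t3 : (h0 / 8) ^ 4 * (D / h' ^ 2 - A * y' / h' ^ 3) ^ 2 ≤ 2 * D ^ 2 + 2 * A ^ 2 := by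
      have e : (h0 / 8) ^ 4 * (D / h' ^ 2 - A * y' / h' ^ 3) ^ 2
          = ((h0 / 8) ^ 2 / h' ^ 2) ^ 2 * (D - A * (y' / h')) ^ 2 := by
        field_simp
      have e2 : (y' / h') ^ 2 ≤ 1 := by
        rw [div_pow, div_le_one (by positivity)]; exact hy2
      have e3 : (D - A * (y' / h')) ^ 2 ≤ 2 * D ^ 2 + 2 * A ^ 2 := by
        nlinarith [sq_nonneg (D + A * (y' / h')), mul_le_mul_of_nonneg_left e2 (sq_nonneg A)]
      rw [e]
      have e4 : ((h0 / 8) ^ 2 / h' ^ 2) ^ 2 ≤ 1 := pow_le_one₀ r0 r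
      exact (mul_le_of_le_one_left (sq_nonneg _) e4).trans e3
    linarith only [G0 x' y', g0, g1, g2, g3, t1, t2, t3]

/-- Pointwise decay from energies on a hyperboloid. -/
theorem hyp_sob {T : ℝ} {u : Fin 2 → ℝ → ℝ → ℝ → ℝ} (hu : Sol T u) {s ρ x y : ℝ} (hs : 0 < s)
    (hx : |x| + hh s x y ≤ ρ) (hy : |y| + hh s x y ≤ ρ) (w : List (Fin 2)) (hw : w.length ≤ 3)
    (c : Fin 2) :
    (∀ k, s ^ 2 * P k (Zw L w (u c)) (hh s x y) x y ^ 2 ≤ 2000 ^ 2 *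
      ∑ i ∈ idx (Fin 2) 5, ∫ z in Kbox ρ, Ahyp (Zw L i.1 (u i.2)) s z.1 z.2) ∧
    (∀ a, L a (Zw L w (u c)) (hh s x y) x y ^ 2 ≤ 2000 ^ 2 *
      ∑ i ∈ idx (Fin 2) 5, ∫ z in Kbox ρ, Ahyp (Zw L i.1 (u i.2)) s z.1 z.2) := by
  set I := idx (Fin 2) 5 with hI
  set h0 := hh s x y with hh0
  have hpos : 0 < h0 := hh_pos hs x y
  have hsm : ∀ i : List (Fin 2) × Fin 2, Smooth3 (Zw L i.1 (u i.2)) := fun i =>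
    Zw_smooth commFam_L _ (hu.smooth _)
  have cA : ∀ i : List (Fin 2) × Fin 2, Continuous
      (fun z : ℝ × ℝ => Ahyp (Zw L i.1 (u i.2)) s z.1 z.2) := fun i =>
    (Ahyp_cont (hsm i)).comp_continuous (by fun_prop : Continuous fun z : ℝ × ℝ => (s, z.1, z.2))
      fun _ => hs
  set F : ℝ → ℝ → ℝ := fun x y => ∑ i ∈ I, Ahyp (Zw L i.1 (u i.2)) s x y with hF
  have cF : Continuous (fun z : ℝ × ℝ => F z.1 z.2) := continuous_finsetSum _ fun i _ => cA i
  have F0 : ∀ x y, 0 ≤ F x y := fun x y => Finset.sum_nonneg fun i _ => Ahyp_nonneg _ _ _ _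
  have hFE : ∫ z in Kbox ρ, F z.1 z.2 = ∑ i ∈ I, ∫ z in Kbox ρ, Ahyp (Zw L i.1 (u i.2)) s z.1 z.2 :=
    integral_finsetSum _ fun i _ => Kbox_int (cA i).continuousOn
  have hle : ∀ w : List (Fin 2), w.length ≤ 5 → ∀ x y, Ahyp (Zw L w (u c)) s x y ≤ F x y :=
    fun w hw x y => Finset.single_le_sum (f := fun i : List (Fin 2) × Fin 2 =>
      Ahyp (Zw L i.1 (u i.2)) s x y) (fun i _ => Ahyp_nonneg _ _ _ _)
      (mem_idx.2 hw : (w, c) ∈ I)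
  rw [← hFE]
  have hz2 : ∀ z ∈ ([[], [0], [1], [0, 1]] : List (List (Fin 2))), z.length ≤ 2 := by
    intro z hz; fin_cases hz <;> simp
  have hI0 : 0 ≤ ∫ z in Kbox ρ, F z.1 z.2 := integral_nonneg fun z => F0 _ _
  constructor
  · intro k
    have h := hyp_sob0 (smooth_P k (Zw_smooth commFam_L w (hu.smooth c))) hs hx hy
      (G := fun x y => 16 * (4 * (2 * h0 / s) ^ 2 * F x y)) (continuous_const.mul
        (continuous_const.mul cF))
      (fun x y => by have := F0 x y; positivity) ?_
    · rw [integral_const_mul, integral_const_mul, ← hh0] at h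
      have e : 2048 * (16 * (4 * (2 * h0 / s) ^ 2 * ∫ z in Kbox ρ, F z.1 z.2))
        = h0 ^ 2 * (524288 / s ^ 2 * ∫ z in Kbox ρ, F z.1 z.2) := by ring
      rw [e] at h
      have h2 := le_of_mul_le_mul_left h (by positivity)
      calc _ ≤ s ^ 2 * (524288 / s ^ 2 * ∫ z in Kbox ρ, F z.1 z.2) := by gcongr
        _ = 524288 * ∫ z in Kbox ρ, F z.1 z.2 := by field_simp
        _ ≤ _ := by nlinarith
    · intro x' y' hxy z hz
      have hzl := hz2 z hz
      set h' := hh s x' y'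
      have hp' : 0 < h' := hh_pos hs x' y'
      set Y := √(4 * (2 * h0 / s) ^ 2 * F x' y') with hY
      have hb := Zw_P_bound commFam_L z (Zw_smooth commFam_L w (hu.smooth c)) h' x' y' Y 1 le_rfl
        (Real.sqrt_nonneg _) (fun w' hw' k => by
          rw [one_pow, mul_one, ← Zw_append]
          apply Real.abs_le_sqrt
          have hc := Ahyp_coer k (Zw L (w ++ w') (u c)) hs x' y'
          have hl := hle (w ++ w') (by rw [List.length_append]; omega) x' y'
          change (s / h') ^ 2 * P k (Zw L (w ++ w') (u c)) h' x' y' ^ 2 ≤ _ at hc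
          set p := P k (Zw L (w ++ w') (u c)) h' x' y' ^ 2
          have e : p = (h' / s) ^ 2 * ((s / h') ^ 2 * p) := by field_simp
          rw [e]
          have hxy' : h' ≤ 2 * h0 := hxy
          calc _ ≤ (2 * h0 / s) ^ 2 * (4 * F x' y') :=
                mul_le_mul (by gcongr) (by linarith) (by positivity) (by positivity)
            _ = _ := by ring) k
      rw [one_pow, mul_one] at hb
      have h4 : (2 : ℝ) ^ z.length ≤ 4 := by
        calc (2 : ℝ) ^ z.length ≤ 2 ^ 2 := pow_le_pow_right₀ (by norm_num) hzl
          _ = 4 := by norm_num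
      have hY2 : Y ^ 2 = 4 * (2 * h0 / s) ^ 2 * F x' y' := Real.sq_sqrt (by
        have := F0 x' y'; positivity)
      have hb2 : |Zw L z (P k (Zw L w (u c))) h' x' y'| ≤ 4 * Y :=
        hb.trans (by gcongr)
      rw [← sq_abs]
      calc _ ≤ (4 * Y) ^ 2 := by gcongr
        _ = _ := by rw [mul_pow, hY2]; norm_num
  · intro a
    have h := hyp_sob0 (smooth_L a (Zw_smooth commFam_L w (hu.smooth c))) hs hx hy
      (G := fun x y => (2 * h0) ^ 2 * F x y) (continuous_const.mul cF)
      (fun x y => by have := F0 x y; positivity) ?_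
    · rw [integral_const_mul, ← hh0] at h
      have e : 2048 * ((2 * h0) ^ 2 * ∫ z in Kbox ρ, F z.1 z.2)
        = h0 ^ 2 * (8192 * ∫ z in Kbox ρ, F z.1 z.2) := by ring
      rw [e] at h
      have h2 := le_of_mul_le_mul_left h (by positivity)
      nlinarith
    · intro x' y' hxy z hz
      have hzl := hz2 z hz
      set h' := hh s x' y' with hh'
      have hp' : 0 < h' := hh_pos hs _ _
      -- the last letter of the word is a boost applied to a word of length at most five
      have hlast : ∃ (b : Fin 2) (w' : List (Fin 2)), w'.length ≤ 5 ∧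
          Zw L z (L a (Zw L w (u c))) = L b (Zw L w' (u c)) := by
        have e : Zw L z (L a (Zw L w (u c))) = Zw L (w ++ a :: z) (u c) := by
          rw [Zw_append]; rfl
        have hne : w ++ a :: z ≠ [] := by simp
        refine ⟨(w ++ a :: z).getLast hne, (w ++ a :: z).dropLast, ?_, ?_⟩
        · rw [List.length_dropLast, List.length_append, List.length_cons]; omega
        · rw [e]
          conv_lhs => rw [← List.dropLast_append_getLast hne]
          rw [Zw_append]; rfl
      obtain ⟨b, w', hw', e⟩ := hlast
      rw [e]
      have hA : (L b (Zw L w' (u c)) h' x' y' / h') ^ 2 ≤ Ahyp (Zw L w' (u c)) s x' y' := by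
        unfold Ahyp
        rw [← hh']
        fin_cases b
        · show (L 0 (Zw L w' (u c)) h' x' y' / h') ^ 2 ≤ _
          nlinarith [sq_nonneg (L 1 (Zw L w' (u c)) h' x' y' / h'),
            mul_nonneg (sq_nonneg (s / h')) (sq_nonneg (pt (Zw L w' (u c)) h' x' y'))]
        · show (L 1 (Zw L w' (u c)) h' x' y' / h') ^ 2 ≤ _
          nlinarith [sq_nonneg (L 0 (Zw L w' (u c)) h' x' y' / h'),
            mul_nonneg (sq_nonneg (s / h')) (sq_nonneg (pt (Zw L w' (u c)) h' x' y'))]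
      have hl := hle w' hw' x' y'
      set p := L b (Zw L w' (u c)) h' x' y'
      have e2 : p ^ 2 = h' ^ 2 * (p / h') ^ 2 := by field_simp
      rw [e2]
      calc _ ≤ (2 * h0) ^ 2 * F x' y' := by
            gcongr
            exact hA.trans hl
        _ = _ := rfl

/-! ### Energies on hyperboloids -/

/-- Points of the hyperboloid of parameter `s` at height greater than `s² + 1` lie outside the
light cone. -/
theorem hyp_zero {T : ℝ} {u : Fin 2 → ℝ → ℝ → ℝ → ℝ} (hu : Sol T u) {s x y : ℝ} (hs : T ≤ s)
    (h : s ^ 2 + 1 < 2 * hh s x y) (w : List (Fin 2)) (c : Fin 2) :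
    Zw L w (u c) (hh s x y) x y = 0 ∧ ∀ k, P k (Zw L w (u c)) (hh s x y) x y = 0 := by
  refine hu.zero commFam_L w c (hs.trans (hh_ge x y)) ?_
  have := hh_sq s x y
  nlinarith

theorem Ahyp_le {v : ℝ → ℝ → ℝ → ℝ} {s x y D : ℝ} (hs : 0 < s)
    (h : ∀ k, |P k v (hh s x y) x y| ≤ D) : Ahyp v s x y ≤ 9 * D ^ 2 := by
  have hp := hh_pos hs x y
  have h0 : |pt v (hh s x y) x y| ≤ D := h 0
  have h1 : |p1 v (hh s x y) x y| ≤ D := h 1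
  have h2 : |p2 v (hh s x y) x y| ≤ D := h 2
  have hx := hh_ge1 s x y
  have hy := hh_ge2 s x y
  have hss := hh_ge (s := s) x y
  unfold Ahyp
  rw [L0_apply, L1_apply]
  set t := hh s x y
  have hD : 0 ≤ D := (abs_nonneg _).trans h0
  have key : ∀ {z d : ℝ}, |z| ≤ t → |d| ≤ D →
      ((t * d + z * pt v t x y) / t) ^ 2 ≤ 4 * D ^ 2 := by
    intro z d hz hd
    have e : |(t * d + z * pt v t x y) / t| ≤ 2 * D := by
      rw [abs_div, abs_of_pos hp, div_le_iff₀ hp]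
      calc _ ≤ |t| * |d| + |z| * |pt v t x y| := by
            rw [← abs_mul, ← abs_mul]; exact abs_add_le _ _
        _ ≤ t * D + t * D := by rw [abs_of_pos hp]; gcongr
        _ = _ := by ring
    rw [← sq_abs]
    calc _ ≤ (2 * D) ^ 2 := by gcongr
      _ = _ := by ring
  have k0 : (s / t) ^ 2 * pt v t x y ^ 2 ≤ 1 * D ^ 2 := by
    rw [← sq_abs (pt v t x y)]
    have : s / t ≤ 1 := (div_le_one hp).2 hss
    have : (s / t) ^ 2 ≤ 1 := pow_le_one₀ (by positivity) this
    gcongr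
  have := key hx h1
  have := key hy h2
  linarith

/-- Smallness on the initial hyperboloid of parameter `T + 1`. -/
theorem hyp_initial {T : ℝ} (hT : 2 ≤ T) {C0 : ℝ} (hC0 : 0 < C0) :
    ∃ ε0 C, 0 < ε0 ∧ 0 < C ∧ ∀ ε, 0 < ε → ε ≤ ε0 → ∀ u, Sol T u →
      (∀ w : List (Fin 3), w.length ≤ 8 → ∀ c x y, |Zw P w (u c) T x y| ≤ C0 * ε) →
      (∀ w : List (Fin 2), w.length ≤ 5 → ∀ k c x y,
        |P k (Zw L w (u c)) (hh (T + 1) x y) x y| ≤ C * ε) ∧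
      ∀ ρ, (T + 1) ^ 2 + 1 ≤ ρ → ∑ i ∈ idx (Fin 2) 5,
        ∫ z in Kbox ρ, Ahyp (Zw L i.1 (u i.2)) (T + 1) z.1 z.2 ≤ C * ε ^ 2 := by
  set s0 := T + 1 with hs0
  set T2 := s0 ^ 2 + 1 with hT2
  have hTT : T ≤ T2 := by nlinarith
  obtain ⟨ε0, C1, h0, hC1, H⟩ := slab (by linarith : 1 ≤ T) hTT hC0
  set D := (2 * T2 + 10) ^ 5 * C1 with hD
  have hD0 : 0 < D := by positivity
  set N := ((idx (Fin 2) 5).card : ℝ) * (9 * D ^ 2 * volume.real (Kbox T2)) with hN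
  have hN0 : 0 ≤ N := by positivity
  refine ⟨ε0, D + N, h0, by positivity, fun ε he hee u hu hd => ?_⟩
  have hsl := H ε he hee u hu hd
  have key : ∀ w : List (Fin 2), w.length ≤ 5 → ∀ k c x y,
      |P k (Zw L w (u c)) (hh s0 x y) x y| ≤ D * ε := by
    intro w hw k c x y
    rcases le_or_gt (hh s0 x y) T2 with h | h
    · have hge := hh_ge (s := s0) x y
      have b := boost_word_bound (t := hh s0 x y) (x := x) (y := y) (ρ := T2)
        (by rw [abs_of_nonneg (hh_nonneg _ _ _)]; exact h) ((hh_ge1 s0 x y).trans h)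
        ((hh_ge2 s0 x y).trans h) w hw (D := C1 * ε) (by positivity) (hu.smooth c) (by
          intro z hz1 hz2
          have hne : z ≠ [] := by intro h; rw [h] at hz1; simp at hz1
          rw [← List.dropLast_append_getLast hne, Zw_append]
          exact hsl (hh s0 x y) ⟨by linarith, h⟩ _
            (by rw [List.length_dropLast]; omega) _ c x y) k
      refine b.trans ?_
      rw [hD, mul_assoc]
      have : 1 ≤ 2 * T2 + 10 := by nlinarith
      gcongr
    · rw [(hyp_zero hu (by linarith) (by nlinarith) w c).2 k, abs_zero]
      positivity
  constructor
  · intro w hw k c x y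
    refine (key w hw k c x y).trans ?_
    gcongr; linarith
  · intro ρ hρ
    have hE : ∀ i ∈ idx (Fin 2) 5, ∫ z in Kbox ρ, Ahyp (Zw L i.1 (u i.2)) s0 z.1 z.2
        ≤ 9 * D ^ 2 * volume.real (Kbox T2) * ε ^ 2 := by
      intro i hi
      have hi5 := mem_idx.1 hi
      have e : ∫ z in Kbox ρ, Ahyp (Zw L i.1 (u i.2)) s0 z.1 z.2
          = ∫ z in Kbox T2, Ahyp (Zw L i.1 (u i.2)) s0 z.1 z.2 := by
        refine setIntegral_eq_of_subset_of_forall_sdiff_eq_zero (Kbox_meas _)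
          (Set.prod_mono (Set.Icc_subset_Icc (by linarith) (by linarith))
            (Set.Icc_subset_Icc (by linarith) (by linarith))) ?_
        rintro ⟨x, y⟩ ⟨-, hz⟩
        have hbig : T2 < hh s0 x y := by
          by_contra hcon
          push Not at hcon
          exact hz ⟨abs_le.1 ((hh_ge1 s0 x y).trans hcon), abs_le.1 ((hh_ge2 s0 x y).trans hcon)⟩
        have hz := (hyp_zero hu (by linarith : T ≤ s0) (x := x) (y := y) (by nlinarith) i.1 i.2).2
        have := Ahyp_le (v := Zw L i.1 (u i.2)) (s := s0) (x := x) (y := y) (D := 0)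
          (by linarith) fun k => by rw [hz k, abs_zero]
        exact le_antisymm (by simpa using this) (Ahyp_nonneg _ _ _ _)
      rw [e]
      have := norm_setIntegral_le_of_norm_le_const (μ := volume) (s := Kbox T2)
        (f := fun z => Ahyp (Zw L i.1 (u i.2)) s0 z.1 z.2) (C := 9 * (D * ε) ^ 2)
        (Kbox_compact _).measure_lt_top fun z _ => by
          rw [Real.norm_of_nonneg (Ahyp_nonneg _ _ _ _)]
          exact Ahyp_le (by linarith) fun k => key i.1 hi5 k i.2 z.1 z.2
      refine (le_abs_self _).trans (this.trans (le_of_eq ?_))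
      ring
    calc _ ≤ ∑ i ∈ idx (Fin 2) 5, 9 * D ^ 2 * volume.real (Kbox T2) * ε ^ 2 := Finset.sum_le_sum hE
      _ = N * ε ^ 2 := by rw [Finset.sum_const, nsmul_eq_mul, hN]; ring
      _ ≤ _ := by gcongr; linarith

/-- Slow growth of the hyperbolic energies under a sharp decay assumption on low derivatives. -/
theorem hyp_energy {T : ℝ} (hT : 2 ≤ T) {u : Fin 2 → ℝ → ℝ → ℝ → ℝ} (hu : Sol T u)
    {b0 η ρ a b : ℝ} (hη : 0 < η) (hb0 : 0 ≤ b0)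
    (hcard : ((idx (Fin 2) 5).card : ℝ) * (24 ^ 6 * b0 ^ 2) ≤ 2 * η) (hTa : T ≤ a) (hab : a ≤ b)
    (hρ : T < ρ) (hbρ : b ^ 2 + 1 < 2 * ρ)
    (hpt : ∀ s ∈ Set.Ioo a b, ∀ w : List (Fin 2), w.length ≤ 2 → ∀ k c x y,
      |P k (Zw L w (u c)) (hh s x y) x y| ≤ b0 * (√(hh s x y))⁻¹ * (s ^ η) ^ w.length) :
    ∑ i ∈ idx (Fin 2) 5, ∫ z in Kbox ρ, Ahyp (Zw L i.1 (u i.2)) b z.1 z.2 ≤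
      b ^ (12 * η) * ∑ i ∈ idx (Fin 2) 5, ∫ z in Kbox ρ, Ahyp (Zw L i.1 (u i.2)) a z.1 z.2 := by
  set I := idx (Fin 2) 5 with hI
  have ha0 : 0 < a := by linarith
  have hsm : ∀ i : List (Fin 2) × Fin 2, Smooth3 (Zw L i.1 (u i.2)) := fun i =>
    Zw_smooth commFam_L _ (hu.smooth _)
  -- the weights `s^{-(2|w|+2)η}` absorb the loss `s^η` per boost in the low-order bounds
  set p : List (Fin 2) × Fin 2 → ℝ → ℝ := fun i s => s ^ (-((2 * i.1.length + 2) * η)) with hp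
  set E : List (Fin 2) × Fin 2 → ℝ → ℝ :=
    fun i s => ∫ z in Kbox ρ, Ahyp (Zw L i.1 (u i.2)) s z.1 z.2 with hE
  have hfl : ∀ i, ∀ s ∈ Set.Icc a b, HasDerivAt (E i) _ s := fun i s hs =>
    hyp_flux hT (hsm i) (Zw_vanish commFam_L i.1 (Oset_open T) (hu.smooth _) (hu.supp _)) hρ
      (by linarith [hs.1]) (by nlinarith [hs.1, hs.2])
  have pE : ∀ i s, 0 < s → p i s = ((s ^ η) ^ (2 * i.1.length + 2))⁻¹ := by
    intro i s hs
    simp only [hp]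
    rw [Real.rpow_neg hs.le, ← Real.rpow_natCast, ← Real.rpow_mul hs.le]
    congr 2; push_cast; ring
  have main := weighted_gronwall I p
    (fun i s => -((2 * i.1.length + 2) * η) * s ^ (-((2 * i.1.length + 2) * η) - 1)) E
    (fun s => 2 * η / s) (fun s => 24 ^ 6 * b0 ^ 2 / s) hab
    (fun i s hs => Real.hasDerivAt_rpow_const (Or.inl (by linarith [hs.1])))
    (fun i s hs => by
      have hs0 : 0 < s := by linarith [hs.1]
      simp only [hp]
      rw [Real.rpow_sub_one hs0.ne']
      have : 0 ≤ s ^ (-((2 * (i.1.length : ℝ) + 2) * η)) := by positivity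
      have h2 : 0 ≤ 2 * (i.1.length : ℝ) * η * s ^ (-((2 * (i.1.length : ℝ) + 2) * η)) / s := by
        positivity
      have e : -(2 * η / s) * s ^ (-((2 * (i.1.length : ℝ) + 2) * η)) -
        -((2 * (i.1.length : ℝ) + 2) * η) * (s ^ (-((2 * (i.1.length : ℝ) + 2) * η)) / s)
        = 2 * (i.1.length : ℝ) * η * s ^ (-((2 * (i.1.length : ℝ) + 2) * η)) / s := by ring
      linarith)
    (fun i t => integral_nonneg fun z => Ahyp_nonneg _ _ _ _)
    (fun i s hs => by simp only [hp]; have : 0 < s := by linarith [hs.1]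
                      positivity)
    (fun i s hs => (hfl i s hs).continuousAt.continuousWithinAt) ?_ ?_
  · -- unweighting
    have hb1 : 1 ≤ b := by linarith
    have ha1 : 1 ≤ a := by linarith
    have hE0 : ∀ i s, 0 ≤ E i s := fun i t => integral_nonneg fun z => Ahyp_nonneg _ _ _ _
    have h1 : b ^ (-(12 * η)) * ∑ i ∈ I, E i b ≤ ∑ i ∈ I, p i b * E i b := by
      rw [Finset.mul_sum]
      refine Finset.sum_le_sum fun i hi => ?_
      have hl : (i.1.length : ℝ) ≤ 5 := by exact_mod_cast mem_idx.1 hi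
      have : b ^ (-(12 * η)) ≤ p i b :=
        Real.rpow_le_rpow_of_exponent_le hb1 (by nlinarith)
      exact mul_le_mul_of_nonneg_right this (hE0 i b)
    have h2 : ∑ i ∈ I, p i a * E i a ≤ ∑ i ∈ I, E i a := by
      refine Finset.sum_le_sum fun i hi => mul_le_of_le_one_left (hE0 i a) ?_
      refine Real.rpow_le_one_of_one_le_of_nonpos ha1 ?_
      have : 0 ≤ (2 * (i.1.length : ℝ) + 2) * η := by positivity
      linarith
    have h3 := h1.trans (main.trans h2)
    have hbp : 0 < b := by linarith
    rw [Real.rpow_neg hbp.le, inv_mul_le_iff₀ (by positivity)] at h3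
    exact h3
  · intro s hs i hi
    have hs0 : 0 < s := by linarith [hs.1]
    refine ⟨_, hfl i s ⟨hs.1.le, hs.2.le⟩, ?_⟩
    set q := s ^ η with hq
    have hq1 : 1 ≤ q := Real.one_le_rpow (by linarith [hs.1]) hη.le
    have hq0 : 0 < q := by linarith
    have cA : ∀ i : List (Fin 2) × Fin 2, Continuous
        (fun z : ℝ × ℝ => Ahyp (Zw L i.1 (u i.2)) s z.1 z.2) := fun i =>
      (Ahyp_cont (hsm i)).comp_continuous (by fun_prop : Continuous fun z : ℝ × ℝ => (s, z.1, z.2))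
        fun _ => hs0
    set N : ℝ × ℝ → ℝ := fun z => ∑ j ∈ I, p j s * Ahyp (Zw L j.1 (u j.2)) s z.1 z.2 with hN
    have cN : Continuous N := continuous_finsetSum _ fun j _ => continuous_const.mul (cA j)
    have hN0 : ∀ z, 0 ≤ N z := fun z => Finset.sum_nonneg fun j _ =>
      mul_nonneg (by rw [pE j s hs0]; positivity) (Ahyp_nonneg _ _ _ _)
    have iN : ∫ z in Kbox ρ, N z = ∑ j ∈ I, p j s * E j s := by
      refine (integral_finsetSum _ fun j _ =>
        Kbox_int (continuous_const.mul (cA j)).continuousOn).trans ?_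
      exact Finset.sum_congr rfl fun j _ => integral_const_mul _ _
    rw [← iN, ← integral_const_mul, ← integral_const_mul]
    have ch : Continuous (fun z : ℝ × ℝ => hh s z.1 z.2) :=
      hh_cont.comp (by fun_prop : Continuous fun z : ℝ × ℝ => (s, z.1, z.2))
    have cv : ∀ {f : ℝ → ℝ → ℝ → ℝ}, Smooth3 f →
        Continuous (fun z : ℝ × ℝ => f (hh s z.1 z.2) z.1 z.2) := fun hf =>
      smooth_comp_cont hf ch continuous_fst continuous_snd
    refine setIntegral_mono_on (Kbox_int (Continuous.continuousOn ?_))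
      (Kbox_int (continuous_const.mul cN).continuousOn) (Kbox_meas _) ?_
    · exact continuous_const.mul (((continuous_const.mul (continuous_const.div ch
        fun z => hh_ne hs0 _ _)).mul (cv (smooth_pt (hsm i)))).mul (cv (smooth_box (hsm i))))
    rintro ⟨x, y⟩ -
    simp only
    set t := hh s x y with ht
    have htp : 0 < t := hh_pos hs0 x y
    have htT : T < t := by linarith [hs.1, hh_ge (s := s) x y]
    -- all first derivatives of the commuted unknowns at the point
    set M := 2 * (t / s) * q * √(N (x, y)) with hM
    have hM0 : 0 ≤ M := by positivity
    have hM2 : M ^ 2 = 4 * (t / s) ^ 2 * q ^ 2 * N (x, y) := by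
      rw [hM, mul_pow, Real.sq_sqrt (hN0 _)]; ring
    have hPM : ∀ w : List (Fin 2), w.length ≤ 5 → ∀ k c,
        |P k (Zw L w (u c)) t x y| ≤ M * q ^ w.length := by
      intro w hw k c
      have hc := Ahyp_coer k (Zw L w (u c)) hs0 x y
      have hl : p (w, c) s * Ahyp (Zw L w (u c)) s x y ≤ N (x, y) :=
        Finset.single_le_sum (f := fun j : List (Fin 2) × Fin 2 =>
          p j s * Ahyp (Zw L j.1 (u j.2)) s x y) (fun j _ =>
            mul_nonneg (by rw [pE j s hs0]; positivity) (Ahyp_nonneg _ _ _ _))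
          (mem_idx.2 hw : (w, c) ∈ I)
      rw [pE _ s hs0, inv_mul_le_iff₀ (by positivity)] at hl
      apply abs_le_of_sq_le_sq _ (by positivity)
      rw [mul_pow, hM2]
      change (s / t) ^ 2 * P k (Zw L w (u c)) t x y ^ 2 ≤ _ at hc
      set f := P k (Zw L w (u c)) t x y
      have e : f ^ 2 = (t / s) ^ 2 * ((s / t) ^ 2 * f ^ 2) := by field_simp
      rw [e]
      calc _ ≤ (t / s) ^ 2 * (4 * (q ^ (2 * w.length + 2) * N (x, y))) :=
            mul_le_mul_of_nonneg_left (by linarith) (by positivity)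
        _ = _ := by ring
    have hi5 := mem_idx.1 hi
    have hcub := cubic_bound commFam_L 2 (hu.smooth i.2) (hu.smooth (i.2 + 1)) t x y
      (b0 * (√t)⁻¹) M q hq1 (by positivity) hM0 i.1 (by omega)
      (fun w' hw' k => hpt s hs w' hw' k _ x y) (fun w' hw' k => hpt s hs w' hw' k _ x y)
      (fun w' hw' k => hPM w' (by omega) k _) (fun w' hw' k => hPM w' (by omega) k _)
    have hbox : |dAlembert (Zw L i.1 (u i.2)) t x y| ≤
        24 ^ 5 * ((b0 * (√t)⁻¹) ^ 2 * M * q ^ i.1.length) := by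
      rw [hu.comm commFam_L i.1 i.2 t x y htT.le, abs_neg]
      refine hcub.trans ?_
      have : (24 : ℝ) ^ i.1.length ≤ 24 ^ 5 := pow_le_pow_right₀ (by norm_num) hi5
      gcongr
    have hvt : |pt (Zw L i.1 (u i.2)) t x y| ≤ M * q ^ i.1.length := hPM i.1 hi5 0 i.2
    have hsq : (√t)⁻¹ ^ 2 = t⁻¹ := by rw [inv_pow, Real.sq_sqrt htp.le]
    rw [pE i s hs0]
    set d := pt (Zw L i.1 (u i.2)) t x y
    set e := dAlembert (Zw L i.1 (u i.2)) t x y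
    set n := i.1.length
    calc (q ^ (2 * n + 2))⁻¹ * (2 * (s / t) * d * e)
        ≤ (q ^ (2 * n + 2))⁻¹ * (2 * (s / t) * (|d| * |e|)) := by
          have : d * e ≤ |d| * |e| := by rw [← abs_mul]; exact le_abs_self _
          have h2 : 2 * (s / t) * (d * e) ≤ 2 * (s / t) * (|d| * |e|) := by gcongr
          rw [mul_assoc (2 * (s / t))]
          gcongr
      _ ≤ (q ^ (2 * n + 2))⁻¹ * (2 * (s / t) * ((M * q ^ n) *
            (24 ^ 5 * ((b0 * (√t)⁻¹) ^ 2 * M * q ^ n)))) := by gcongr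
      _ = 2 * 24 ^ 5 * b0 ^ 2 * (s / t) * ((√t)⁻¹ ^ 2) * M ^ 2 * (q ^ 2)⁻¹ := by
          field_simp
          ring
      _ = 8 * 24 ^ 5 * b0 ^ 2 / s * N (x, y) := by
          rw [hsq, hM2]
          field_simp
          ring
      _ ≤ 24 ^ 6 * b0 ^ 2 / s * N (x, y) := by
          have := hN0 (x, y)
          gcongr
          norm_num
  · intro s hs
    have hs0 : 0 < s := by linarith [hs.1]
    rw [← mul_div_assoc]
    gcongr

/-! ### Scalar ODEs, rotations and the outgoing derivative -/

/-- A barrier argument for a damped scalar ODE. -/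
theorem ode_barrier {f f' φ φ' α e : ℝ → ℝ} {a b : ℝ} (hab : a ≤ b)
    (hf : ∀ t ∈ Set.Icc a b, HasDerivAt f (f' t) t) (hφ : ∀ t ∈ Set.Icc a b, HasDerivAt φ (φ' t) t)
    (hode : ∀ t ∈ Set.Ico a b, f' t = -α t * f t + e t) (hα : ∀ t ∈ Set.Ico a b, 0 ≤ α t)
    (hφ0 : ∀ t ∈ Set.Ico a b, 0 ≤ φ t) (he : ∀ t ∈ Set.Ico a b, |e t| < φ' t)
    (h0 : |f a| ≤ φ a) : |f b| ≤ φ b := by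
  have cf : ContinuousOn f (Set.Icc a b) := fun t ht => (hf t ht).continuousAt.continuousWithinAt
  have cφ : ContinuousOn φ (Set.Icc a b) := fun t ht => (hφ t ht).continuousAt.continuousWithinAt
  have h1 := abs_le.1 h0
  have hb : b ∈ Set.Icc a b := ⟨hab, le_rfl⟩
  refine abs_le.2 ⟨?_, ?_⟩
  · have := image_le_of_deriv_right_lt_deriv_boundary' (f := fun t => -f t) (f' := fun t => -f' t)
      (B := φ) (B' := φ') cf.neg
      (fun t ht => ((hf t ⟨ht.1, ht.2.le⟩).neg).hasDerivWithinAt) (by linarith) cφ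
      (fun t ht => (hφ t ⟨ht.1, ht.2.le⟩).hasDerivWithinAt) (fun t ht h => by
        have h2 := (abs_lt.1 (he t ht)).1
        have h3 := mul_nonneg (hα t ht) (hφ0 t ht)
        have h4 : f t = -φ t := by linarith
        rw [hode t ht, h4]
        linarith) hb
    linarith
  · exact image_le_of_deriv_right_lt_deriv_boundary' cf
      (fun t ht => (hf t ⟨ht.1, ht.2.le⟩).hasDerivWithinAt) (by linarith) cφ
      (fun t ht => (hφ t ⟨ht.1, ht.2.le⟩).hasDerivWithinAt) (fun t ht h => by
        have h2 := (abs_lt.1 (he t ht)).2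
        have h3 := mul_nonneg (hα t ht) (hφ0 t ht)
        rw [hode t ht, h]
        linarith) hb

theorem rot_eq (v : ℝ → ℝ → ℝ → ℝ) : rot v = c1 * p2 v - c2 * p1 v := rfl

theorem smooth_rot {v : ℝ → ℝ → ℝ → ℝ} (hv : Smooth3 v) : Smooth3 (rot v) :=
  smooth_sub (smooth_mul smooth_c1 (smooth_p2 hv)) (smooth_mul smooth_c2 (smooth_p1 hv))

theorem rot_rot_apply {v : ℝ → ℝ → ℝ → ℝ} (hv : Smooth3 v) (t x y : ℝ) :
    rot (rot v) t x y = x ^ 2 * p2 (p2 v) t x y - 2 * x * y * p1 (p2 v) t x y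
      + y ^ 2 * p1 (p1 v) t x y - x * p1 v t x y - y * p2 v t x y := by
  have e1 : p1 (rot v) t x y = p2 v t x y + x * p1 (p2 v) t x y - y * p1 (p1 v) t x y :=
    (((hasDerivAt_id x).mul (p1_hd (smooth_p2 hv) t x y)).sub
      ((p1_hd (smooth_p1 hv) t x y).const_mul y)).deriv.trans (by simp)
  have e2 : p2 (rot v) t x y = x * p2 (p2 v) t x y - p1 v t x y - y * p1 (p2 v) t x y := by
    refine (((p2_hd (smooth_p2 hv) t x y).const_mul x).sub
      ((hasDerivAt_id y).mul (p2_hd (smooth_p1 hv) t x y))).deriv.trans ?_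
    rw [p2_p1 hv]; simp; ring
  show x * p2 (rot v) t x y - y * p1 (rot v) t x y = _
  rw [e1, e2]; ring

/-- The rotations are combinations of boosts. -/
theorem rot_rot_boost {v : ℝ → ℝ → ℝ → ℝ} (hv : Smooth3 v) (t x y : ℝ) :
    t ^ 2 * rot (rot v) t x y = x ^ 2 * L 1 (L 1 v) t x y
      - x * y * (L 0 (L 1 v) t x y + L 1 (L 0 v) t x y) + y ^ 2 * L 0 (L 0 v) t x y
      - t * (x * L 0 v t x y + y * L 1 v t x y) := by
  have q00 : pt (L 0 v) t x y = (t * p1 (pt v) t x y + x * pt (pt v) t x y) + p1 v t x y :=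
    congrFun (congrFun (congrFun (P0_L0 hv) t) x) y
  have q10 : p1 (L 0 v) t x y = (t * p1 (p1 v) t x y + x * pt (p1 v) t x y) + pt v t x y :=
    congrFun (congrFun (congrFun (P1_L0 hv) t) x) y
  have q20 : p2 (L 0 v) t x y = (t * p1 (p2 v) t x y + x * pt (p2 v) t x y) :=
    congrFun (congrFun (congrFun (P2_L0 hv) t) x) y
  have q01 : pt (L 1 v) t x y = (t * p2 (pt v) t x y + y * pt (pt v) t x y) + p2 v t x y :=
    congrFun (congrFun (congrFun (P0_L1 hv) t) x) y
  have q11 : p1 (L 1 v) t x y = (t * p2 (p1 v) t x y + y * pt (p1 v) t x y) :=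
    congrFun (congrFun (congrFun (P1_L1 hv) t) x) y
  have q21 : p2 (L 1 v) t x y = (t * p2 (p2 v) t x y + y * pt (p2 v) t x y) + pt v t x y :=
    congrFun (congrFun (congrFun (P2_L1 hv) t) x) y
  rw [rot_rot_apply hv, L1_apply (L 1 v), L0_apply (L 1 v), L1_apply (L 0 v), L0_apply (L 0 v),
    q00, q10, q20, q01, q11, q21, L0_apply, L1_apply, p1_pt hv, p2_pt hv, p2_p1 hv]
  ring

theorem rot_rot_bound {v : ℝ → ℝ → ℝ → ℝ} (hv : Smooth3 v) {t x y Y : ℝ} (ht : 0 < t)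
    (hx : |x| ≤ t) (hy : |y| ≤ t) (h1 : ∀ a, |L a v t x y| ≤ Y)
    (h2 : ∀ a b, |L a (L b v) t x y| ≤ Y) : |rot (rot v) t x y| ≤ 6 * Y := by
  have hY : 0 ≤ Y := (abs_nonneg _).trans (h1 0)
  have e := rot_rot_boost hv t x y
  have k : ∀ {a b d : ℝ}, |a| ≤ t → |b| ≤ t → |d| ≤ Y → |a * b * d| ≤ t ^ 2 * Y := by
    intro a b d ha hb hd
    rw [abs_mul, abs_mul]
    calc _ ≤ t * t * Y := by gcongr
      _ = _ := by ring
  have ht' : |t| ≤ t := (abs_of_pos ht).le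
  have k1 := abs_le.1 (k hx hx (h2 1 1))
  have k2 := abs_le.1 (k hx hy (h2 0 1))
  have k3 := abs_le.1 (k hx hy (h2 1 0))
  have k4 := abs_le.1 (k hy hy (h2 0 0))
  have k5 := abs_le.1 (k ht' hx (h1 0))
  have k6 := abs_le.1 (k ht' hy (h1 1))
  have : |t ^ 2 * rot (rot v) t x y| ≤ t ^ 2 * (6 * Y) := by
    rw [e]
    exact abs_le.2 ⟨by nlinarith, by nlinarith⟩
  rw [abs_mul, abs_of_pos (by positivity : 0 < t ^ 2)] at this
  exact le_of_mul_le_mul_left this (by positivity)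

/-- The outgoing derivative `∂ₜ + ∂ᵣ` is controlled by the boosts. -/
theorem outgoing {v : ℝ → ℝ → ℝ → ℝ} {t c ω1 ω2 Y Z : ℝ} (ht : 0 < t) (hω : ω1 ^ 2 + ω2 ^ 2 = 1)
    (hc : 0 ≤ c) (h1 : ∀ a, |L a v t ((t - c) * ω1) ((t - c) * ω2)| ≤ Y)
    (h2 : |pt v t ((t - c) * ω1) ((t - c) * ω2)| ≤ Z) :
    |ω1 * p1 v t ((t - c) * ω1) ((t - c) * ω2) + ω2 * p2 v t ((t - c) * ω1) ((t - c) * ω2)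
      + pt v t ((t - c) * ω1) ((t - c) * ω2)| ≤ (2 * Y + c * Z) / t := by
  have a0 := h1 0
  have a1 := h1 1
  rw [L0_apply] at a0
  rw [L1_apply] at a1
  set d0 := pt v t ((t - c) * ω1) ((t - c) * ω2)
  set d1 := p1 v t ((t - c) * ω1) ((t - c) * ω2)
  set d2 := p2 v t ((t - c) * ω1) ((t - c) * ω2)
  have hω1 : |ω1| ≤ 1 := abs_le_of_sq_le_sq (by nlinarith [sq_nonneg ω2]) zero_le_one
  have hω2 : |ω2| ≤ 1 := abs_le_of_sq_le_sq (by nlinarith [sq_nonneg ω1]) zero_le_one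
  rw [le_div_iff₀ ht, ← abs_of_pos ht, ← abs_mul]
  have e : (ω1 * d1 + ω2 * d2 + d0) * t = ω1 * (t * d1 + (t - c) * ω1 * d0)
      + ω2 * (t * d2 + (t - c) * ω2 * d0) + c * d0 := by
    linear_combination (-(t - c) * d0) * hω
  rw [e]
  have k : ∀ {a d : ℝ}, |a| ≤ 1 → |d| ≤ Y → |a * d| ≤ Y := fun ha hd => by
    rw [abs_mul]
    exact (mul_le_of_le_one_left (abs_nonneg _) ha).trans hd
  have b0 := k hω1 a0
  have b1 := k hω2 a1
  have b2 : |c * d0| ≤ c * Z := by rw [abs_mul, abs_of_nonneg hc]; gcongr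
  refine (abs_add_three _ _ _).trans (by linarith)

/-- The transport equation of the radiation field along outgoing characteristics. -/
theorem char_deriv {v : ℝ → ℝ → ℝ → ℝ} (hv : Smooth3 v) {c ω1 ω2 τ : ℝ} (hω : ω1 ^ 2 + ω2 ^ 2 = 1)
    (hτ : c < τ) : HasDerivAt (fun τ => 1 / 2 * √(τ - c) *
        (ω1 * p1 v τ ((τ - c) * ω1) ((τ - c) * ω2) + ω2 * p2 v τ ((τ - c) * ω1) ((τ - c) * ω2)
          - pt v τ ((τ - c) * ω1) ((τ - c) * ω2)))
      (-(1 / 2) * √(τ - c) * dAlembert v τ ((τ - c) * ω1) ((τ - c) * ω2)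
        - 1 / 2 * ((τ - c) * √(τ - c))⁻¹ * rot (rot v) τ ((τ - c) * ω1) ((τ - c) * ω2)
        - 1 / 4 * (√(τ - c))⁻¹ * (ω1 * p1 v τ ((τ - c) * ω1) ((τ - c) * ω2)
          + ω2 * p2 v τ ((τ - c) * ω1) ((τ - c) * ω2)
          + pt v τ ((τ - c) * ω1) ((τ - c) * ω2))) τ := by
  have hr : 0 < τ - c := by linarith
  have ha : HasDerivAt (fun τ : ℝ => τ) 1 τ := hasDerivAt_id τ
  have hb : HasDerivAt (fun τ : ℝ => (τ - c) * ω1) (1 * ω1) τ := (ha.sub_const c).mul_const ω1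
  have hd : HasDerivAt (fun τ : ℝ => (τ - c) * ω2) (1 * ω2) τ := (ha.sub_const c).mul_const ω2
  have k0 := chain (smooth_pt hv) ha hb hd
  have k1 := chain (smooth_p1 hv) ha hb hd
  have k2 := chain (smooth_p2 hv) ha hb hd
  have ks : HasDerivAt (fun τ : ℝ => √(τ - c)) (1 / (2 * √(τ - c))) τ :=
    (ha.sub_const c).sqrt hr.ne'
  refine ((ks.const_mul (1 / 2)).mul (((k1.const_mul ω1).add (k2.const_mul ω2)).sub k0)).congr_deriv
    ?_
  rw [rot_rot_apply hv, p1_pt hv, p2_pt hv, p2_p1 hv]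
  unfold dAlembert
  simp only [Pi.add_apply, Pi.sub_apply]
  have hs : √(τ - c) ^ 2 = τ - c := Real.sq_sqrt hr.le
  have hsp : 0 < √(τ - c) := Real.sqrt_pos.2 hr
  set q := √(τ - c)
  generalize p1 v τ ((τ - c) * ω1) ((τ - c) * ω2) = d1
  generalize p2 v τ ((τ - c) * ω1) ((τ - c) * ω2) = d2
  generalize pt v τ ((τ - c) * ω1) ((τ - c) * ω2) = d0
  generalize pt (pt v) τ ((τ - c) * ω1) ((τ - c) * ω2) = d00
  generalize pt (p1 v) τ ((τ - c) * ω1) ((τ - c) * ω2) = d01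
  generalize pt (p2 v) τ ((τ - c) * ω1) ((τ - c) * ω2) = d02
  generalize p1 (p1 v) τ ((τ - c) * ω1) ((τ - c) * ω2) = d11
  generalize p1 (p2 v) τ ((τ - c) * ω1) ((τ - c) * ω2) = d12
  generalize p2 (p2 v) τ ((τ - c) * ω1) ((τ - c) * ω2) = d22
  rw [← hs]
  field_simp
  linear_combination (8 * q ^ 2 * (d11 + d22)) * hω

/-! ### The radiation field along characteristics -/

/-- A damped scalar ODE with an integrable error and one of size `G s^κ/t`, where
`s = √(2 * c * t - c²)` is the hyperbolic parameter on the characteristic `r = t - c`; the second error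
integrates to a multiple of `s^κ/κ`. -/
theorem ode_final {f f' α e : ℝ → ℝ} {a b c D G κ : ℝ} (hc : 1 ≤ c) (ha : 2 * c ≤ a) (hab : a ≤ b)
    (hD : 0 < D) (hG : 0 ≤ G) (hκ : 0 < κ)
    (hf : ∀ t ∈ Set.Icc a b, HasDerivAt f (f' t) t)
    (hode : ∀ t ∈ Set.Ico a b, f' t = -α t * f t + e t) (hα : ∀ t ∈ Set.Ico a b, 0 ≤ α t)
    (he : ∀ t ∈ Set.Ico a b,
      |e t| ≤ D * t ^ (-(5 / 4) : ℝ) + G * t⁻¹ * √(2 * c * t - c ^ 2) ^ κ) :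
    |f b| ≤ |f a| + 8 * D + 2 * G / κ * √(2 * c * b - c ^ 2) ^ κ := by
  have hs : ∀ t ∈ Set.Icc a b, 0 < 2 * c * t - c ^ 2 := fun t ht => by nlinarith [ht.1]
  have ht1 : ∀ t ∈ Set.Icc a b, 1 ≤ t := fun t ht => by linarith [ht.1]
  have key := ode_barrier (φ := fun t => |f a| + 8 * D * (1 - t ^ (-(1 / 4) : ℝ))
      + 2 * G / κ * √(2 * c * t - c ^ 2) ^ κ)
    (φ' := fun t => 8 * D * (-((-(1 / 4)) * t ^ (-(1 / 4) - 1 : ℝ)))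
      + 2 * G / κ * (2 * c / (2 * √(2 * c * t - c ^ 2)) * κ * √(2 * c * t - c ^ 2) ^ (κ - 1)))
    hab hf ?_ hode hα ?_ ?_ ?_
  · have hb := ht1 b ⟨hab, le_rfl⟩
    have : 0 ≤ b ^ (-(1 / 4) : ℝ) := by positivity
    refine key.trans ?_
    nlinarith
  · intro t ht
    have h1 : HasDerivAt (fun t : ℝ => 2 * c * t - c ^ 2) (2 * c) t := by
      simpa using ((hasDerivAt_id t).const_mul (2 * c)).sub_const (c ^ 2)
    have h2 := (h1.sqrt (hs t ht).ne').rpow_const (p := κ)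
      (Or.inl (Real.sqrt_pos.2 (hs t ht)).ne')
    have h3 : HasDerivAt (fun t : ℝ => t ^ (-(1 / 4) : ℝ)) (-(1 / 4) * t ^ (-(1 / 4) - 1 : ℝ)) t :=
      Real.hasDerivAt_rpow_const (Or.inl (by linarith [ht1 t ht]))
    exact (((h3.const_sub 1).const_mul (8 * D)).const_add |f a|).add (h2.const_mul (2 * G / κ))
  · intro t ht
    have h1 : t ^ (-(1 / 4) : ℝ) ≤ 1 :=
      Real.rpow_le_one_of_one_le_of_nonpos (ht1 t ⟨ht.1, ht.2.le⟩) (by norm_num)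
    have : 0 ≤ 8 * D * (1 - t ^ (-(1 / 4) : ℝ)) := mul_nonneg (by linarith) (by linarith)
    positivity
  · intro t ht
    have ht' : t ∈ Set.Icc a b := ⟨ht.1, ht.2.le⟩
    have ht0 : 0 < t := by linarith [ht1 t ht']
    refine (he t ht).trans_lt ?_
    have hs' := hs t ht'
    have hsq : √(2 * c * t - c ^ 2) ^ 2 = 2 * c * t - c ^ 2 := Real.sq_sqrt hs'.le
    have hsp : 0 < √(2 * c * t - c ^ 2) := Real.sqrt_pos.2 hs'
    set s := √(2 * c * t - c ^ 2)
    have e1 : (-(1 / 4) - 1 : ℝ) = -(5 / 4) := by norm_num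
    rw [Real.rpow_sub_one hsp.ne', e1]
    have hz : 0 < t ^ (-(5 / 4) : ℝ) := by positivity
    have hw : 0 < s ^ κ := by positivity
    set z := t ^ (-(5 / 4) : ℝ)
    set w := s ^ κ
    have e2 : 2 * G / κ * (2 * c / (2 * s) * κ * (w / s)) = G * w * (2 * c / s ^ 2) := by
      field_simp
    rw [e2]
    have e3 : t⁻¹ ≤ 2 * c / s ^ 2 := by
      rw [inv_eq_one_div, div_le_div_iff₀ ht0 (by positivity)]
      nlinarith
    have : G * t⁻¹ * w ≤ G * w * (2 * c / s ^ 2) := by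
      rw [mul_right_comm]; gcongr
    nlinarith
  · have h1 : a ^ (-(1 / 4) : ℝ) ≤ 1 :=
      Real.rpow_le_one_of_one_le_of_nonpos (ht1 a ⟨le_rfl, hab⟩) (by norm_num)
    have : 0 ≤ 8 * D * (1 - a ^ (-(1 / 4) : ℝ)) := mul_nonneg (by linarith) (by linarith)
    have : 0 ≤ 2 * G / κ * √(2 * c * a - c ^ 2) ^ κ := by positivity
    linarith

theorem hh_eq {s x y t : ℝ} (ht : 0 ≤ t) (h : s ^ 2 + x ^ 2 + y ^ 2 = t ^ 2) : hh s x y = t := by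
  unfold hh; rw [h]; exact Real.sqrt_sq ht

/-- The radiation field `½√r(∂ᵣ − ∂ₜ)v` along the outgoing characteristic `r = τ − c`. -/
def radf (v : ℝ → ℝ → ℝ → ℝ) (c ω1 ω2 τ : ℝ) : ℝ :=
  1 / 2 * √(τ - c) *
    (ω1 * p1 v τ ((τ - c) * ω1) ((τ - c) * ω2) + ω2 * p2 v τ ((τ - c) * ω1) ((τ - c) * ω2)
      - pt v τ ((τ - c) * ω1) ((τ - c) * ω2))

/-- The weak decay provided by the energies, on hyperboloids with parameter in `[s0, s1]`. -/
structure Weak (u : Fin 2 → ℝ → ℝ → ℝ → ℝ) (Y0 δ s0 s1 : ℝ) : Prop where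
  der : ∀ s ∈ Set.Icc s0 s1, ∀ w : List (Fin 2), w.length ≤ 3 → ∀ k c x y,
    |P k (Zw L w (u c)) (hh s x y) x y| ≤ Y0 * s ^ δ / s
  boost : ∀ s ∈ Set.Icc s0 s1, ∀ w : List (Fin 2), w.length ≤ 3 → ∀ a c x y,
    |L a (Zw L w (u c)) (hh s x y) x y| ≤ Y0 * s ^ δ

/-- Bounds along characteristics implied by the weak decay. Here `m = τ^{1/4}`. -/
theorem char_facts {u : Fin 2 → ℝ → ℝ → ℝ → ℝ} (hsm : ∀ c, Smooth3 (u c)) {Y0 δ s0 s1 : ℝ}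
    (hs0 : 1 ≤ s0) (hY0 : 0 < Y0) (hδ0 : 0 ≤ δ) (hδ : δ ≤ 1 / 4) (hW : Weak u Y0 δ s0 s1)
    {c τ ω1 ω2 s m : ℝ} (hω : ω1 ^ 2 + ω2 ^ 2 = 1) (hc : 1 ≤ c) (hτ : 2 * c ≤ τ)
    (hs : s ∈ Set.Icc s0 s1) (hsτ : s ^ 2 = 2 * c * τ - c ^ 2) (hm : m = τ ^ (1 / 4 : ℝ))
    (w : List (Fin 2)) (hw : w.length ≤ 2) (i : Fin 2) :
    (∀ a, |L a (Zw L w (u i)) τ ((τ - c) * ω1) ((τ - c) * ω2)| ≤ Y0 * m) ∧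
    |rot (rot (Zw L w (u i))) τ ((τ - c) * ω1) ((τ - c) * ω2)| ≤ 6 * (Y0 * m) ∧
    |ω1 * p1 (Zw L w (u i)) τ ((τ - c) * ω1) ((τ - c) * ω2)
      + ω2 * p2 (Zw L w (u i)) τ ((τ - c) * ω1) ((τ - c) * ω2)
      + pt (Zw L w (u i)) τ ((τ - c) * ω1) ((τ - c) * ω2)| ≤ 3 * (Y0 * m) / τ := by
  have hs1 : 1 ≤ s := hs0.trans hs.1
  have hsp : 0 < s := by linarith
  have hτ0 : 0 < τ := by linarith
  have hsle : s ≤ τ := by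
    apply le_of_abs_le; apply abs_le_of_sq_le_sq _ hτ0.le; nlinarith [sq_nonneg (τ - c)]
  have hcs : c ≤ s := by
    apply le_of_abs_le; apply abs_le_of_sq_le_sq _ hsp.le; nlinarith
  have hh' : hh s ((τ - c) * ω1) ((τ - c) * ω2) = τ := by
    apply hh_eq hτ0.le
    rw [hsτ]
    linear_combination (τ - c) ^ 2 * hω
  have hY : Y0 * s ^ δ ≤ Y0 * m := by
    have h1 : s ^ δ ≤ τ ^ (1 / 4 : ℝ) := (Real.rpow_le_rpow hsp.le hsle hδ0).trans
      (Real.rpow_le_rpow_of_exponent_le (by linarith) hδ)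
    rw [hm]; gcongr
  have hv := Zw_smooth commFam_L w (hsm i)
  have B1 : ∀ a, |L a (Zw L w (u i)) τ ((τ - c) * ω1) ((τ - c) * ω2)| ≤ Y0 * m := fun a => by
    have := hW.boost s hs w (by omega) a i ((τ - c) * ω1) ((τ - c) * ω2)
    rw [hh'] at this
    exact this.trans hY
  have B2 : ∀ a b, |L a (L b (Zw L w (u i))) τ ((τ - c) * ω1) ((τ - c) * ω2)| ≤ Y0 * m :=
    fun a b => by
    have := hW.boost s hs (w ++ [b]) (by simp; omega) a i ((τ - c) * ω1) ((τ - c) * ω2)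
    rw [hh', Zw_append] at this
    exact this.trans hY
  have B3 : |pt (Zw L w (u i)) τ ((τ - c) * ω1) ((τ - c) * ω2)| ≤ Y0 * m / s := by
    have := hW.der s hs w (by omega) 0 i ((τ - c) * ω1) ((τ - c) * ω2)
    rw [hh'] at this
    exact this.trans (by gcongr)
  have hx : |(τ - c) * ω1| ≤ τ := by
    have := hh_ge1 s ((τ - c) * ω1) ((τ - c) * ω2)
    rwa [hh'] at this
  have hy : |(τ - c) * ω2| ≤ τ := by
    have := hh_ge2 s ((τ - c) * ω1) ((τ - c) * ω2)
    rwa [hh'] at this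
  refine ⟨B1, rot_rot_bound hv hτ0 hx hy B1 B2, (outgoing hτ0 hω (by linarith) B1 B3).trans ?_⟩
  have hYm : 0 ≤ Y0 * m := by rw [hm]; positivity
  have : c * (Y0 * m / s) ≤ Y0 * m := by
    rw [mul_div_assoc', div_le_iff₀ hsp]; nlinarith
  gcongr
  linarith

/-- Powers of `τ` in terms of `m = τ^{1/4}`. -/
theorem quarter {τ m : ℝ} (hτ : 0 < τ) (hm : m = τ ^ (1 / 4 : ℝ)) :
    0 < m ∧ τ = m ^ 4 ∧ √τ = m ^ 2 ∧ τ ^ (-(5 / 4) : ℝ) = (m ^ 5)⁻¹ := by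
  have h0 : 0 < m := by rw [hm]; positivity
  have h4 : τ = m ^ 4 := by
    rw [hm, ← Real.rpow_natCast, ← Real.rpow_mul hτ.le]; norm_num
  refine ⟨h0, h4, ?_, ?_⟩
  · rw [h4, show m ^ 4 = (m ^ 2) ^ 2 by ring, Real.sqrt_sq (by positivity)]
  · rw [hm, ← Real.rpow_natCast, ← Real.rpow_mul hτ.le, ← Real.rpow_neg hτ.le]; norm_num

/-- Square roots of `r = τ - c` and `τ` are comparable for `τ ≥ 2 * c`. -/
theorem sqrt_comp {τ c m : ℝ} (hτ : 0 < τ) (h2 : 2 * c ≤ τ) (hm : m = τ ^ (1 / 4 : ℝ))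
    (hc : 0 ≤ c) : 0 < √(τ - c) ∧ √(τ - c) ≤ m ^ 2 ∧ (√(τ - c))⁻¹ ≤ 3 / 2 * (m ^ 2)⁻¹ ∧
      ((τ - c) * √(τ - c))⁻¹ ≤ 3 * (m ^ 6)⁻¹ := by
  obtain ⟨h0, h4, hq, -⟩ := quarter hτ hm
  have hr : 0 < τ - c := by linarith
  have hp : 0 < √(τ - c) := Real.sqrt_pos.2 hr
  have hlow : 2 / 3 * m ^ 2 ≤ √(τ - c) := Real.le_sqrt_of_sq_le (by nlinarith)
  have k : (√(τ - c))⁻¹ ≤ 3 / 2 * (m ^ 2)⁻¹ := by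
    calc _ ≤ (2 / 3 * m ^ 2)⁻¹ := by gcongr
      _ = _ := by rw [mul_inv]; norm_num
  refine ⟨hp, ?_, k, ?_⟩
  · rw [← hq]; exact Real.sqrt_le_sqrt (by linarith)
  · rw [mul_inv]
    calc _ ≤ (τ / 2)⁻¹ * (3 / 2 * (m ^ 2)⁻¹) := by gcongr; linarith
      _ = _ := by rw [h4]; field_simp

theorem cub_apply (u : Fin 2 → ℝ → ℝ → ℝ → ℝ) (i : Fin 2) (t x y : ℝ) :
    cub u i t x y = pt (u (i + 1)) t x y * pt (u (i + 1)) t x y * pt (u i) t x y := rfl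

/-- Growth of the radiation field along a characteristic. -/
theorem char_f {T : ℝ} {u : Fin 2 → ℝ → ℝ → ℝ → ℝ} (hu : Sol T u) {Y0 b0 η δ s0 s1 : ℝ}
    (hs0 : 1 ≤ s0) (hTs : T ≤ s0) (hY0 : 0 < Y0) (hb0 : 0 ≤ b0) (hb1 : b0 ≤ 1) (hη : 0 < η)
    (hδ0 : 0 ≤ δ) (hδ : δ ≤ 1 / 4) (hW : Weak u Y0 δ s0 s1)
    (hB : ∀ s ∈ Set.Ico s0 s1, ∀ w : List (Fin 2), w.length ≤ 2 → ∀ k c x y,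
      |P k (Zw L w (u c)) (hh s x y) x y| ≤ b0 * (√(hh s x y))⁻¹ * (s ^ η) ^ w.length)
    (w : List (Fin 2)) (hw : w.length ≤ 2) (i : Fin 2) {c a t1 ω1 ω2 : ℝ}
    (hω : ω1 ^ 2 + ω2 ^ 2 = 1) (hc : 1 ≤ c) (ha : 2 * c ≤ a) (hsa : s0 ^ 2 ≤ 2 * c * a - c ^ 2)
    (hs1 : 0 ≤ s1) (hs1t : s1 ^ 2 = 2 * c * t1 - c ^ 2) (hat : a ≤ t1) :
    |radf (Zw L w (u i)) c ω1 ω2 t1| ≤ |radf (Zw L w (u i)) c ω1 ω2 a| + 96 * Y0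
      + 576 * b0 ^ 3 / η * (s1 ^ η) ^ w.length := by
  have hv := Zw_smooth commFam_L w (hu.smooth i)
  set v := Zw L w (u i) with hvdef
  -- the hyperbolic parameter along the characteristic
  have hs : ∀ τ ∈ Set.Icc a t1, √(2 * c * τ - c ^ 2) ∈ Set.Icc s0 s1 ∧
      √(2 * c * τ - c ^ 2) ^ 2 = 2 * c * τ - c ^ 2 := by
    intro τ hτ
    refine ⟨⟨Real.le_sqrt_of_sq_le (by nlinarith [hτ.1]), ?_⟩,
      Real.sq_sqrt (by nlinarith [hτ.1, sq_nonneg s0])⟩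
    rw [Real.sqrt_le_iff]
    exact ⟨hs1, by nlinarith [hτ.2]⟩
  have hs' : ∀ τ ∈ Set.Ico a t1, √(2 * c * τ - c ^ 2) ∈ Set.Ico s0 s1 := by
    intro τ hτ
    refine ⟨(hs τ ⟨hτ.1, hτ.2.le⟩).1.1, ?_⟩
    by_contra hcon
    push Not at hcon
    have h1 := (hs τ ⟨hτ.1, hτ.2.le⟩).2
    nlinarith [hτ.2]
  have hder : ∀ τ ∈ Set.Icc a t1, HasDerivAt (radf v c ω1 ω2) _ τ := fun τ hτ =>
    char_deriv hv hω (by linarith [hτ.1] : c < τ)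
  have hhτ : ∀ τ ∈ Set.Icc a t1,
      hh √(2 * c * τ - c ^ 2) ((τ - c) * ω1) ((τ - c) * ω2) = τ := by
    intro τ hτ
    apply hh_eq (by linarith [hτ.1])
    rw [(hs τ hτ).2]
    linear_combination (τ - c) ^ 2 * hω
  -- the errors which do not involve the nonlinearity
  have hlin : ∀ τ ∈ Set.Icc a t1,
      |1 / 2 * ((τ - c) * √(τ - c))⁻¹ * rot (rot v) τ ((τ - c) * ω1) ((τ - c) * ω2)|
        ≤ 9 * Y0 * τ ^ (-(5 / 4) : ℝ) ∧
      |1 / 4 * (√(τ - c))⁻¹ * (ω1 * p1 v τ ((τ - c) * ω1) ((τ - c) * ω2)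
          + ω2 * p2 v τ ((τ - c) * ω1) ((τ - c) * ω2)
          + pt v τ ((τ - c) * ω1) ((τ - c) * ω2))| ≤ 9 / 8 * Y0 * τ ^ (-(5 / 4) : ℝ) := by
    intro τ hτ
    have hτ0 : 0 < τ := by linarith [hτ.1]
    have h2 : 2 * c ≤ τ := ha.trans hτ.1
    obtain ⟨m0, m4, mq, m5⟩ := quarter hτ0 rfl
    obtain ⟨r0, r1, r2, r3⟩ := sqrt_comp hτ0 h2 rfl (by linarith)
    obtain ⟨-, f2, f3⟩ := char_facts hu.smooth hs0 hY0 hδ0 hδ hW hω hc h2 (hs τ hτ).1 (hs τ hτ).2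
      rfl w hw i
    set m := τ ^ (1 / 4 : ℝ)
    have r4 : 0 < (τ - c) * √(τ - c) := mul_pos (by linarith) r0
    constructor
    · rw [abs_mul, abs_of_pos (by positivity), m5]
      calc _ ≤ 1 / 2 * (3 * (m ^ 6)⁻¹) * (6 * (Y0 * m)) := by gcongr
        _ = _ := by field_simp; ring
    · rw [abs_mul, abs_of_pos (by positivity), m5]
      calc _ ≤ 1 / 4 * (3 / 2 * (m ^ 2)⁻¹) * (3 * (Y0 * m) / τ) := by gcongr
        _ = _ := by rw [m4]; field_simp; ring
  have hbt : ∀ τ ∈ Set.Ico a t1, ∀ w' : List (Fin 2), w'.length ≤ 2 → ∀ k j,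
      |P k (Zw L w' (u j)) τ ((τ - c) * ω1) ((τ - c) * ω2)|
        ≤ b0 * (√τ)⁻¹ * (√(2 * c * τ - c ^ 2) ^ η) ^ w'.length := by
    intro τ hτ w' hw' k j
    have := hB _ (hs' τ hτ) w' hw' k j ((τ - c) * ω1) ((τ - c) * ω2)
    rwa [hhτ τ ⟨hτ.1, hτ.2.le⟩] at this
  have hs1e : √(2 * c * t1 - c ^ 2) = s1 := by rw [← hs1t]; exact Real.sqrt_sq hs1
  have hTτ : ∀ τ ∈ Set.Ico a t1, T ≤ τ := by
    intro τ hτ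
    have h1 := hs τ ⟨hτ.1, hτ.2.le⟩
    have h2 := hh_ge (s := √(2 * c * τ - c ^ 2)) ((τ - c) * ω1) ((τ - c) * ω2)
    rw [hhτ τ ⟨hτ.1, hτ.2.le⟩] at h2
    linarith [h1.1.1]
  rcases Nat.eq_zero_or_pos w.length with hn | hn
  · -- the uncommuted equation: the nonlinearity is dissipative
    have hwn : w = [] := List.length_eq_zero_iff.1 hn
    have hvu : v = u i := by rw [hvdef, hwn]; rfl
    have key := ode_final (f := radf v c ω1 ω2)
      (α := fun τ => 1 / 2 * pt (u (i + 1)) τ ((τ - c) * ω1) ((τ - c) * ω2) ^ 2)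
      (e := fun τ => 1 / 4 * √(τ - c) * pt (u (i + 1)) τ ((τ - c) * ω1) ((τ - c) * ω2) ^ 2
          * (ω1 * p1 v τ ((τ - c) * ω1) ((τ - c) * ω2)
          + ω2 * p2 v τ ((τ - c) * ω1) ((τ - c) * ω2) + pt v τ ((τ - c) * ω1) ((τ - c) * ω2))
        - 1 / 2 * ((τ - c) * √(τ - c))⁻¹ * rot (rot v) τ ((τ - c) * ω1) ((τ - c) * ω2)
        - 1 / 4 * (√(τ - c))⁻¹ * (ω1 * p1 v τ ((τ - c) * ω1) ((τ - c) * ω2)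
          + ω2 * p2 v τ ((τ - c) * ω1) ((τ - c) * ω2)
          + pt v τ ((τ - c) * ω1) ((τ - c) * ω2))) hc ha hat (D := 12 * Y0) (G := 0) (κ := η)
      (by positivity) le_rfl hη hder ?_ (fun τ _ => by positivity) ?_
    · refine key.trans ?_
      have : 0 ≤ 576 * b0 ^ 3 / η * (s1 ^ η) ^ w.length := by positivity
      simp only [mul_zero, zero_div, zero_mul]
      linarith
    · intro τ hτ
      have hbox := hu.comm commFam_L w i τ ((τ - c) * ω1) ((τ - c) * ω2) (hTτ τ hτ)
      rw [hwn] at hbox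
      simp only [Zw, cub_apply] at hbox
      rw [hvu]
      simp only [radf]
      rw [hbox]
      ring
    · intro τ hτ
      have hτ' : τ ∈ Set.Icc a t1 := ⟨hτ.1, hτ.2.le⟩
      have hτ0 : 0 < τ := by linarith [hτ.1]
      have h2 : 2 * c ≤ τ := ha.trans hτ.1
      obtain ⟨l1, l2⟩ := hlin τ hτ'
      obtain ⟨m0, m4, mq, m5⟩ := quarter hτ0 rfl
      obtain ⟨r0, r1, r2, r3⟩ := sqrt_comp hτ0 h2 rfl (by linarith)
      obtain ⟨-, -, f3⟩ := char_facts hu.smooth hs0 hY0 hδ0 hδ hW hω hc h2 (hs τ hτ').1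
        (hs τ hτ').2 rfl w hw i
      have hb : |pt (u (i + 1)) τ ((τ - c) * ω1) ((τ - c) * ω2)| ≤ b0 * (√τ)⁻¹ := by
        have := hbt τ hτ [] (by simp) 0 (i + 1)
        have h' : |P 0 (u (i + 1)) τ ((τ - c) * ω1) ((τ - c) * ω2)| ≤ b0 * (√τ)⁻¹ := by
          simpa [Zw] using this
        exact h'
      rw [← hvdef] at f3
      set g := ω1 * p1 v τ ((τ - c) * ω1) ((τ - c) * ω2)
          + ω2 * p2 v τ ((τ - c) * ω1) ((τ - c) * ω2) + pt v τ ((τ - c) * ω1) ((τ - c) * ω2)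
      have l3 : |1 / 4 * √(τ - c) * pt (u (i + 1)) τ ((τ - c) * ω1) ((τ - c) * ω2) ^ 2 * g|
          ≤ 3 / 4 * Y0 * τ ^ (-(5 / 4) : ℝ) := by
        rw [abs_mul, abs_mul, abs_of_pos (by positivity : 0 < 1 / 4 * √(τ - c)), abs_pow, m5]
        set m := τ ^ (1 / 4 : ℝ)
        calc _ ≤ 1 / 4 * m ^ 2 * (b0 * (√τ)⁻¹) ^ 2 * (3 * (Y0 * m) / τ) := by gcongr
          _ = b0 ^ 2 * (3 / 4 * Y0 * (m ^ 5)⁻¹) := by rw [mq, m4]; field_simp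
          _ ≤ _ := mul_le_of_le_one_left (by positivity) (pow_le_one₀ hb0 hb1)
      have hz : 0 < τ ^ (-(5 / 4) : ℝ) := by positivity
      simp only [zero_mul, add_zero]
      refine (abs_sub _ _).trans ?_
      have := abs_sub (1 / 4 * √(τ - c) * pt (u (i + 1)) τ ((τ - c) * ω1) ((τ - c) * ω2) ^ 2 * g)
        (1 / 2 * ((τ - c) * √(τ - c))⁻¹ * rot (rot v) τ ((τ - c) * ω1) ((τ - c) * ω2))
      have hp := mul_pos hY0 hz
      linarith only [this, l1, l2, l3, hp]
  · have key := ode_final (f := radf v c ω1 ω2) (α := fun τ => 0)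
      (e := fun τ => -(1 / 2) * √(τ - c) * dAlembert v τ ((τ - c) * ω1) ((τ - c) * ω2)
        - 1 / 2 * ((τ - c) * √(τ - c))⁻¹ * rot (rot v) τ ((τ - c) * ω1) ((τ - c) * ω2)
        - 1 / 4 * (√(τ - c))⁻¹ * (ω1 * p1 v τ ((τ - c) * ω1) ((τ - c) * ω2)
          + ω2 * p2 v τ ((τ - c) * ω1) ((τ - c) * ω2)
          + pt v τ ((τ - c) * ω1) ((τ - c) * ω2))) hc ha hat (D := 12 * Y0) (G := 288 * b0 ^ 3)
      (κ := w.length * η) (by positivity) (by positivity) (by positivity) hder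
      (fun τ _ => by rw [neg_zero, zero_mul, zero_add]) (fun τ _ => le_rfl) ?_
    · have hn1 : (1 : ℝ) ≤ w.length := by exact_mod_cast hn
      have e : s1 ^ ((w.length : ℝ) * η) = (s1 ^ η) ^ w.length := by
        rw [← Real.rpow_natCast, ← Real.rpow_mul hs1, mul_comm]
      rw [hs1e, e] at key
      refine key.trans ?_
      have : 2 * (288 * b0 ^ 3) / (w.length * η) * (s1 ^ η) ^ w.length
          ≤ 576 * b0 ^ 3 / η * (s1 ^ η) ^ w.length := by
        have : η ≤ w.length * η := by nlinarith
        have : 2 * (288 * b0 ^ 3) / (w.length * η) ≤ 2 * (288 * b0 ^ 3) / η := by gcongr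
        have h5 : 2 * (288 * b0 ^ 3) / η = 576 * b0 ^ 3 / η := by ring
        rw [← h5]
        gcongr
      linarith
    · intro τ hτ
      have hτ' : τ ∈ Set.Icc a t1 := ⟨hτ.1, hτ.2.le⟩
      have hτ0 : 0 < τ := by linarith [hτ.1]
      have h2 : 2 * c ≤ τ := ha.trans hτ.1
      obtain ⟨l1, l2⟩ := hlin τ hτ'
      obtain ⟨m0, m4, mq, m5⟩ := quarter hτ0 rfl
      obtain ⟨r0, r1, r2, r3⟩ := sqrt_comp hτ0 h2 rfl (by linarith)
      set s := √(2 * c * τ - c ^ 2) with hsd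
      have hs1' : 1 ≤ s := hs0.trans (hs τ hτ').1.1
      have e : s ^ ((w.length : ℝ) * η) = (s ^ η) ^ w.length := by
        rw [← Real.rpow_natCast, ← Real.rpow_mul (by linarith), mul_comm]
      have hq1 : 1 ≤ s ^ η := Real.one_le_rpow hs1' hη.le
      have hcub := cubic_bound commFam_L 2 (hu.smooth i) (hu.smooth (i + 1)) τ ((τ - c) * ω1)
        ((τ - c) * ω2) (b0 * (√τ)⁻¹) (b0 * (√τ)⁻¹) (s ^ η) hq1 (by positivity) (by positivity) w
        (by omega) (fun w' hw' k => hbt τ hτ w' hw' k _) (fun w' hw' k => hbt τ hτ w' hw' k _)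
        (fun w' hw' k => hbt τ hτ w' (by omega) k _) (fun w' hw' k => hbt τ hτ w' (by omega) k _)
      have l3 : |-(1 / 2) * √(τ - c) * dAlembert v τ ((τ - c) * ω1) ((τ - c) * ω2)|
          ≤ 288 * b0 ^ 3 * τ⁻¹ * (s ^ η) ^ w.length := by
        rw [hu.comm commFam_L w i _ _ _ (hTτ τ hτ), mul_neg, abs_neg, abs_mul, neg_mul, abs_neg,
          abs_of_pos (by positivity : 0 < 1 / 2 * √(τ - c))]
        have h24 : (24 : ℝ) ^ w.length ≤ 24 ^ 2 := pow_le_pow_right₀ (by norm_num) hw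
        set m := τ ^ (1 / 4 : ℝ)
        calc _ ≤ 1 / 2 * m ^ 2 * (24 ^ 2 * ((b0 * (√τ)⁻¹) ^ 2 * (b0 * (√τ)⁻¹)
              * (s ^ η) ^ w.length)) := by
              gcongr
              exact hcub.trans (by gcongr)
          _ = _ := by rw [mq, m4]; field_simp; ring
      rw [e]
      have hz : 0 < τ ^ (-(5 / 4) : ℝ) := by positivity
      refine (abs_sub _ _).trans ?_
      have := abs_sub (-(1 / 2) * √(τ - c) * dAlembert v τ ((τ - c) * ω1) ((τ - c) * ω2))
        (1 / 2 * ((τ - c) * √(τ - c))⁻¹ * rot (rot v) τ ((τ - c) * ω1) ((τ - c) * ω2))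
      have hp := mul_pos hY0 hz
      linarith only [this, l1, l2, l3, hp]

/-! ### Improved pointwise decay -/

/-- Far from the light cone the weak decay is already better than `t^{-1/2}`. -/
theorem interior_bound {u : Fin 2 → ℝ → ℝ → ℝ → ℝ} {Y0 δ s0 s1 : ℝ} (hs0 : 1 ≤ s0)
    (hY0 : 0 < Y0) (hδ : δ ≤ 1 / 4) (hW : Weak u Y0 δ s0 s1) {s : ℝ} (hs : s ∈ Set.Icc s0 s1)
    (w : List (Fin 2)) (hw : w.length ≤ 3) (i : Fin 2) (x y : ℝ) (h : hh s x y ≤ s0 * s)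
    (k : Fin 3) : |P k (Zw L w (u i)) (hh s x y) x y| ≤ s0 * Y0 * (√(hh s x y))⁻¹ := by
  have hs1 : 1 ≤ s := hs0.trans hs.1
  have hsp : 0 < s := by linarith
  have hh0 := hh_pos hsp x y
  refine (hW.der s hs w hw k i x y).trans ?_
  have hq : √(hh s x y) ≤ s0 * √s := by
    calc _ ≤ √(s0 * s) := Real.sqrt_le_sqrt h
      _ = √s0 * √s := Real.sqrt_mul (by linarith) _
      _ ≤ _ := by
        gcongr
        rw [Real.sqrt_le_iff]
        exact ⟨by linarith, by nlinarith⟩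
  have hsd : s ^ δ ≤ √s := by
    rw [Real.sqrt_eq_rpow]
    exact Real.rpow_le_rpow_of_exponent_le hs1 (by linarith)
  have hqp : 0 < √(hh s x y) := Real.sqrt_pos.2 hh0
  have hss : √s * √s = s := Real.mul_self_sqrt hsp.le
  rw [← div_eq_mul_inv, div_le_div_iff₀ hsp hqp]
  calc Y0 * s ^ δ * √(hh s x y) ≤ Y0 * √s * (s0 * √s) := by gcongr
    _ = s0 * Y0 * (√s * √s) := by ring
    _ = _ := by rw [hss]

/-- A bound for the radiation field gives a bound for all first derivatives. -/
theorem recover {u : Fin 2 → ℝ → ℝ → ℝ → ℝ} (hsm : ∀ c, Smooth3 (u c)) {Y0 δ s0 s1 : ℝ}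
    (hs0 : 1 ≤ s0) (hY0 : 0 < Y0) (hδ0 : 0 ≤ δ) (hδ : δ ≤ 1 / 4) (hW : Weak u Y0 δ s0 s1)
    {c τ ω1 ω2 s F : ℝ} (hω : ω1 ^ 2 + ω2 ^ 2 = 1) (hc : 1 ≤ c) (hτ : 2 * c ≤ τ)
    (hs : s ∈ Set.Icc s0 s1) (hsτ : s ^ 2 = 2 * c * τ - c ^ 2)
    (w : List (Fin 2)) (hw : w.length ≤ 2) (i : Fin 2)
    (hF : |radf (Zw L w (u i)) c ω1 ω2 τ| ≤ F) (k : Fin 3) :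
    |P k (Zw L w (u i)) τ ((τ - c) * ω1) ((τ - c) * ω2)| ≤ (5 / 2 * Y0 + 3 / 2 * F) * (√τ)⁻¹ := by
  have hτ0 : 0 < τ := by linarith
  obtain ⟨m0, m4, mq, -⟩ := quarter hτ0 rfl
  obtain ⟨r0, -, r2, -⟩ := sqrt_comp hτ0 hτ rfl (by linarith)
  obtain ⟨f1, -, f3⟩ := char_facts hsm hs0 hY0 hδ0 hδ hW hω hc hτ hs hsτ rfl w hw i
  have hm1 : 1 ≤ τ ^ (1 / 4 : ℝ) := Real.one_le_rpow (by linarith) (by norm_num)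
  set m := τ ^ (1 / 4 : ℝ)
  set v := Zw L w (u i)
  set x := (τ - c) * ω1 with hx
  set y := (τ - c) * ω2 with hy
  have hF0 : 0 ≤ F := (abs_nonneg _).trans hF
  have hYm : Y0 * m / τ ≤ Y0 * (m ^ 2)⁻¹ := by
    rw [m4, ← div_eq_mul_inv, div_le_div_iff₀ (by positivity) (by positivity)]
    have : m ^ 3 * 1 ≤ m ^ 3 * m := by gcongr
    nlinarith
  have hz : 0 < (m ^ 2)⁻¹ := by positivity
  have hxt : x ^ 2 + y ^ 2 ≤ τ ^ 2 := by
    have : x ^ 2 + y ^ 2 = (τ - c) ^ 2 := by rw [hx, hy]; linear_combination (τ - c) ^ 2 * hω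
    nlinarith
  -- the time derivative
  have h0 : |pt v τ x y| ≤ (3 / 2 * Y0 + 3 / 2 * F) * (m ^ 2)⁻¹ := by
    have e : pt v τ x y = 1 / 2 * (ω1 * p1 v τ x y + ω2 * p2 v τ x y + pt v τ x y)
        - (√(τ - c))⁻¹ * radf v c ω1 ω2 τ := by
      unfold radf
      rw [← hx, ← hy]
      field_simp
      ring
    have h1 : |(√(τ - c))⁻¹ * radf v c ω1 ω2 τ| ≤ 3 / 2 * (m ^ 2)⁻¹ * F := by
      rw [abs_mul, abs_of_pos (by positivity : 0 < (√(τ - c))⁻¹)]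
      gcongr
    have h2 : |1 / 2 * (ω1 * p1 v τ x y + ω2 * p2 v τ x y + pt v τ x y)|
        ≤ 1 / 2 * (3 * (Y0 * m) / τ) := by
      rw [abs_mul, abs_of_pos (by norm_num : (0 : ℝ) < 1 / 2)]
      gcongr
    have h3 : 3 * (Y0 * m) / τ = 3 * (Y0 * m / τ) := by ring
    rw [e]
    refine (abs_sub _ _).trans ?_
    rw [h3] at h2
    linarith only [h1, h2, hYm]
  have hsp : ∀ d l z : ℝ, l = τ * d + z * pt v τ x y → |l| ≤ Y0 * m → z ^ 2 ≤ τ ^ 2 →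
      |d| ≤ (5 / 2 * Y0 + 3 / 2 * F) * (m ^ 2)⁻¹ := by
    intro d l z hl hlb hz2
    have hz1 : |z| ≤ τ := abs_le_of_sq_le_sq hz2 hτ0.le
    have h1 : τ * |d| ≤ Y0 * m + τ * |pt v τ x y| := by
      have : τ * |d| = |l - z * pt v τ x y| := by
        rw [show l - z * pt v τ x y = τ * d by linarith, abs_mul, abs_of_pos hτ0]
      rw [this]
      refine (abs_sub _ _).trans ?_
      rw [abs_mul]
      gcongr
    have h2 : |d| ≤ Y0 * m / τ + |pt v τ x y| := by
      rw [← sub_le_iff_le_add, le_div_iff₀ hτ0]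
      linarith
    linarith only [h2, hYm, h0]
  rw [mq]
  fin_cases k
  · refine h0.trans ?_
    gcongr
    norm_num
  · exact hsp (p1 v τ x y) _ x (L0_apply v τ x y) (f1 0) (by nlinarith [sq_nonneg y])
  · exact hsp (p2 v τ x y) _ y (L1_apply v τ x y) (f1 1) (by nlinarith [sq_nonneg x])

set_option maxHeartbeats 1000000 in
/-- Improved pointwise decay, obtained by integrating along characteristics. -/
theorem char_bound {T : ℝ} {u : Fin 2 → ℝ → ℝ → ℝ → ℝ} (hu : Sol T u) {Y0 b0 η δ s0 s1 : ℝ}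
    (hs0 : 2 ≤ s0) (hTs : T ≤ s0) (hY0 : 0 < Y0) (hb0 : 0 ≤ b0) (hb1 : b0 ≤ 1) (hη : 0 < η)
    (hδ0 : 0 ≤ δ) (hδ : δ ≤ 1 / 4) (hs01 : s0 ≤ s1) (hW : Weak u Y0 δ s0 s1)
    (hB : ∀ s ∈ Set.Ico s0 s1, ∀ w : List (Fin 2), w.length ≤ 2 → ∀ k c x y,
      |P k (Zw L w (u c)) (hh s x y) x y| ≤ b0 * (√(hh s x y))⁻¹ * (s ^ η) ^ w.length)
    (w : List (Fin 2)) (hw : w.length ≤ 2) (k : Fin 3) (i : Fin 2) (x y : ℝ) :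
    |P k (Zw L w (u i)) (hh s1 x y) x y| ≤
      ((4 * s0 + 200) * Y0 + 1152 * b0 ^ 3 / η * (s1 ^ η) ^ w.length) * (√(hh s1 x y))⁻¹ := by
  have hs1p : 0 < s1 := by linarith
  have hG : 0 ≤ b0 ^ 3 / η * (s1 ^ η) ^ w.length := by positivity
  have hbig : ∀ F, F ≤ 3 / 2 * s0 * Y0 + 96 * Y0 + 576 * b0 ^ 3 / η * (s1 ^ η) ^ w.length →
      5 / 2 * Y0 + 3 / 2 * F ≤ (4 * s0 + 200) * Y0 + 1152 * b0 ^ 3 / η * (s1 ^ η) ^ w.length := by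
    intro F hF
    have e1 : 576 * b0 ^ 3 / η * (s1 ^ η) ^ w.length = 576 * (b0 ^ 3 / η * (s1 ^ η) ^ w.length) := by
      ring
    have e2 : 1152 * b0 ^ 3 / η * (s1 ^ η) ^ w.length
      = 1152 * (b0 ^ 3 / η * (s1 ^ η) ^ w.length) := by ring
    rw [e1] at hF
    rw [e2]
    have := mul_pos (by linarith : 0 < s0) hY0
    linarith only [hF, hG, hY0, this]
  have hdir : s0 * Y0 ≤ (4 * s0 + 200) * Y0 + 1152 * b0 ^ 3 / η * (s1 ^ η) ^ w.length := by
    have e2 : 1152 * b0 ^ 3 / η * (s1 ^ η) ^ w.length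
      = 1152 * (b0 ^ 3 / η * (s1 ^ η) ^ w.length) := by ring
    rw [e2]
    have := mul_pos (by linarith : 0 < s0) hY0
    linarith only [hG, hY0, this]
  have ht0 := hh_pos hs1p x y
  have hts := hh_ge (s := s1) x y
  have htsq := hh_sq s1 x y
  by_cases hout : (hh s1 x y - 1) ^ 2 < x ^ 2 + y ^ 2
  · rw [(hu.zero commFam_L w i (by linarith) hout).2 k, abs_zero]
    have : 0 ≤ s0 * Y0 := by positivity
    exact mul_nonneg (by linarith) (by positivity)
  push Not at hout
  set t := hh s1 x y with htd
  have hr0 : 0 ≤ √(x ^ 2 + y ^ 2) := Real.sqrt_nonneg _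
  have hrsq : √(x ^ 2 + y ^ 2) ^ 2 = x ^ 2 + y ^ 2 := Real.sq_sqrt (by positivity)
  have hrt : √(x ^ 2 + y ^ 2) ≤ t - 1 := by
    rw [Real.sqrt_le_iff]; exact ⟨by linarith, hout⟩
  set r := √(x ^ 2 + y ^ 2)
  obtain ⟨c, hcd⟩ : ∃ c, c = t - r := ⟨_, rfl⟩
  have hc : 1 ≤ c := by linarith
  have hs1t : s1 ^ 2 = 2 * c * t - c ^ 2 := by
    rw [hcd]; linear_combination -htsq + hrsq
  rcases lt_or_ge t (2 * c) with h2c | h2c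
  · refine (interior_bound (by linarith) hY0 hδ hW ⟨hs01, le_rfl⟩ w (by omega) i x y ?_ k).trans ?_
    · have : t ≤ 2 * s1 := by
        apply le_of_abs_le; apply abs_le_of_sq_le_sq _ (by linarith)
        have := mul_nonneg (by linarith : 0 ≤ t - c) (by linarith : 0 ≤ 2 * c - t)
        have := sq_nonneg (t - c)
        have := mul_nonneg ht0.le (by linarith : 0 ≤ 2 * c - t)
        have := mul_nonneg (by linarith : 0 ≤ c) (by linarith : 0 ≤ t - c)
        nlinarith only [hs1t, this, h2c, ht0, hc]
      refine this.trans ?_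
      gcongr
    · gcongr
  have hrp : 0 < r := by linarith
  have hω : (x / r) ^ 2 + (y / r) ^ 2 = 1 := by
    field_simp; linarith
  have hx : (t - c) * (x / r) = x := by rw [hcd, sub_sub_cancel]; field_simp
  have hy : (t - c) * (y / r) = y := by rw [hcd, sub_sub_cancel]; field_simp
  have hcp : 0 < c := by linarith
  obtain ⟨a, had⟩ : ∃ a, a = max (2 * c) ((s0 ^ 2 / c + c) / 2) := ⟨_, rfl⟩
  have ha1 : 2 * c ≤ a := by rw [had]; exact le_max_left _ _
  have ha2 : s0 ^ 2 ≤ 2 * c * a - c ^ 2 := by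
    have : (s0 ^ 2 / c + c) / 2 ≤ a := by rw [had]; exact le_max_right _ _
    have h3 : 2 * c * ((s0 ^ 2 / c + c) / 2) = s0 ^ 2 + c ^ 2 := by field_simp
    have h4 := mul_le_mul_of_nonneg_left this (by linarith : 0 ≤ 2 * c)
    linarith only [h3, h4]
  have hat : a ≤ t := by
    rw [had]
    refine max_le h2c ?_
    have h3 : 2 * c * ((s0 ^ 2 / c + c) / 2) = s0 ^ 2 + c ^ 2 := by field_simp
    have h4 : s0 ^ 2 ≤ s1 ^ 2 := by gcongr
    refine le_of_mul_le_mul_left ?_ (by linarith : 0 < 2 * c)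
    linarith only [h3, h4, hs1t]
  -- the starting point of the characteristic is far from the light cone
  have hsa : √(2 * c * a - c ^ 2) ∈ Set.Icc s0 s1 := by
    refine ⟨Real.le_sqrt_of_sq_le ha2, ?_⟩
    rw [Real.sqrt_le_iff]
    have h4 := mul_le_mul_of_nonneg_left hat (by linarith : 0 ≤ 2 * c)
    exact ⟨hs1p.le, by linarith only [h4, hs1t]⟩
  have hsasq : √(2 * c * a - c ^ 2) ^ 2 = 2 * c * a - c ^ 2 :=
    Real.sq_sqrt ((sq_nonneg s0).trans ha2)
  have ha0 : 0 < a := by linarith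
  have hha : hh √(2 * c * a - c ^ 2) ((a - c) * (x / r)) ((a - c) * (y / r)) = a := by
    apply hh_eq ha0.le
    rw [hsasq]
    linear_combination (a - c) ^ 2 * hω
  have has : a ≤ s0 * √(2 * c * a - c ^ 2) := by
    rcases max_choice (2 * c) ((s0 ^ 2 / c + c) / 2) with h | h
    · have hac : a = 2 * c := had.trans h
      apply le_of_abs_le; apply abs_le_of_sq_le_sq
      · rw [mul_pow, hsasq, hac]
        have h4 : 4 ≤ s0 ^ 2 := by nlinarith only [hs0]
        have h5 := mul_le_mul_of_nonneg_right h4 (by positivity : 0 ≤ 3 * c ^ 2)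
        have h6 : 0 ≤ c ^ 2 := sq_nonneg c
        linarith only [h5, h6]
      · have := hsa.1
        positivity
    · have hac : 2 * c * a = s0 ^ 2 + c ^ 2 := by
        rw [had, h]; field_simp
      have h5 : √(2 * c * a - c ^ 2) = s0 := by
        rw [hac, add_sub_cancel_right]; exact Real.sqrt_sq (by linarith)
      rw [h5]
      have hcs : c ≤ s0 := by
        apply le_of_abs_le; apply abs_le_of_sq_le_sq _ (by linarith)
        have h9 := mul_le_mul_of_nonneg_left ha1 hcp.le
        nlinarith only [h9, hac]
      have h6 : c ≤ s0 * s0 := by nlinarith only [hcs, hs0]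
      refine le_of_mul_le_mul_left ?_ (by linarith : 0 < 2 * c)
      rw [hac]
      have h7 : 0 ≤ (c - 1) * (s0 * s0) := mul_nonneg (by linarith) (by positivity)
      have h8 : 0 ≤ c * (s0 * s0 - c) := mul_nonneg hcp.le (by linarith)
      linarith only [h7, h8]
  have hstart : |radf (Zw L w (u i)) c (x / r) (y / r) a| ≤ 3 / 2 * s0 * Y0 := by
    have hb := fun k => interior_bound (by linarith) hY0 hδ hW hsa w (by omega) i
      ((a - c) * (x / r)) ((a - c) * (y / r)) (by rw [hha]; exact has) k
    rw [hha] at hb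
    have hb0 := hb 0
    have hb1 := hb 1
    have hb2 := hb 2
    simp only [P] at hb0 hb1 hb2
    have hsq : 0 < √a := Real.sqrt_pos.2 ha0
    have hle : √(a - c) ≤ √a := Real.sqrt_le_sqrt (by linarith)
    have hxr : |x / r| ≤ 1 := abs_le_of_sq_le_sq (by have := sq_nonneg (y / r); linarith only [this, hω]) (by norm_num)
    have hyr : |y / r| ≤ 1 := abs_le_of_sq_le_sq (by have := sq_nonneg (x / r); linarith only [this, hω]) (by norm_num)
    unfold radf
    rw [abs_mul, abs_of_nonneg (by positivity : 0 ≤ 1 / 2 * √(a - c))]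
    have hz : 0 < s0 * Y0 * (√a)⁻¹ := by
      have : 0 < s0 := by linarith
      positivity
    calc _ ≤ 1 / 2 * √a * (1 * (s0 * Y0 * (√a)⁻¹) + 1 * (s0 * Y0 * (√a)⁻¹)
          + s0 * Y0 * (√a)⁻¹) := by
          gcongr
          refine (abs_sub _ _).trans (add_le_add ((abs_add_le _ _).trans (add_le_add ?_ ?_)) hb0)
          · rw [abs_mul]; gcongr
          · rw [abs_mul]; gcongr
      _ = _ := by field_simp; ring
  have hf := char_f hu (by linarith) hTs hY0 hb0 hb1 hη hδ0 hδ hW hB w hw i hω hc ha1 ha2 hs1p.le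
    hs1t hat
  have hrec := recover hu.smooth (by linarith) hY0 hδ0 hδ hW hω hc h2c ⟨hs01, le_rfl⟩ hs1t w hw i
    hf k
  rw [hx, hy] at hrec
  have hfin := hbig (|radf (Zw L w (u i)) c (x / r) (y / r) a| + 96 * Y0
    + 576 * b0 ^ 3 / η * (s1 ^ η) ^ w.length) (by linarith only [hstart])
  exact hrec.trans (mul_le_mul_of_nonneg_right hfin (inv_nonneg.2 (Real.sqrt_nonneg _)))

/-! ### The bootstrap -/

/-- Energy bounds on one hyperboloid give the weak pointwise decay there. -/
theorem weak_at {T : ℝ} {u : Fin 2 → ℝ → ℝ → ℝ → ℝ} (hu : Sol T u) {s ρ M : ℝ} (hs : 0 < s)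
    (hT : T ≤ s) (hρ : s ^ 2 + 1 ≤ ρ) (hM : 0 ≤ M)
    (hE : 2000 ^ 2 * ∑ i ∈ idx (Fin 2) 5, ∫ z in Kbox ρ, Ahyp (Zw L i.1 (u i.2)) s z.1 z.2
      ≤ M ^ 2) (w : List (Fin 2)) (hw : w.length ≤ 3) (c : Fin 2) (x y : ℝ) :
    (∀ k, |P k (Zw L w (u c)) (hh s x y) x y| ≤ M / s) ∧
    ∀ a, |L a (Zw L w (u c)) (hh s x y) x y| ≤ M := by
  rcases lt_or_ge (s ^ 2 + 1) (2 * hh s x y) with h | h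
  · have h0 := (hyp_zero hu hT h w c).2
    constructor
    · intro k
      rw [h0 k, abs_zero]
      positivity
    · have e0 : pt (Zw L w (u c)) (hh s x y) x y = 0 := h0 0
      have e1 : p1 (Zw L w (u c)) (hh s x y) x y = 0 := h0 1
      have e2 : p2 (Zw L w (u c)) (hh s x y) x y = 0 := h0 2
      intro a
      fin_cases a
      · change |L 0 _ _ _ _| ≤ _
        rw [L0_apply, e0, e1]; simpa using hM
      · change |L 1 _ _ _ _| ≤ _
        rw [L1_apply, e0, e2]; simpa using hM
  · have hx := hh_ge1 s x y
    have hy := hh_ge2 s x y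
    obtain ⟨h1, h2⟩ := hyp_sob hu hs (ρ := ρ) (x := x) (y := y) (by linarith) (by linarith) w hw c
    constructor
    · intro k
      rw [le_div_iff₀ hs]
      have := (h1 k).trans hE
      have h3 : |P k (Zw L w (u c)) (hh s x y) x y * s| ≤ M :=
        abs_le_of_sq_le_sq (by linarith [mul_pow (P k (Zw L w (u c)) (hh s x y) x y) s 2]) hM
      rwa [abs_mul, abs_of_pos hs] at h3
    · intro a
      exact abs_le_of_sq_le_sq ((h2 a).trans hE) hM

set_option maxHeartbeats 1000000 in
/-- Global decay for small data: the bootstrap argument. -/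
theorem decay {T : ℝ} (hT : 2 ≤ T) {C0 δ : ℝ} (hC0 : 0 < C0) (hδ0 : 0 < δ) (hδ : δ ≤ 1 / 4) :
    ∃ ε0 C, 0 < ε0 ∧ 0 < C ∧ ∀ ε, 0 < ε → ε ≤ ε0 → ∀ u, Sol T u →
      (∀ w : List (Fin 3), w.length ≤ 8 → ∀ c x y, |Zw P w (u c) T x y| ≤ C0 * ε) →
      ∀ S, T + 1 ≤ S → Weak u (C * ε) δ (T + 1) S ∧
        ∀ k c x y, |P k (u c) (hh S x y) x y| ≤ C * ε * (√(hh S x y))⁻¹ := by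
  obtain ⟨e1, C1, he1, hC1, hdat0⟩ := hyp_initial hT hC0
  -- `A ε` is the size of the weak decay, from the energies on the initial hyperboloid
  obtain ⟨A, hA⟩ : ∃ A, A = 2000 * √C1 := ⟨_, rfl⟩
  have hAp : 0 < A := by rw [hA]; positivity
  have hAsq : 2000 ^ 2 * C1 = A ^ 2 := by rw [hA, mul_pow, Real.sq_sqrt hC1.le]
  set s0 := T + 1 with hs0
  -- the energies grow at most like `s^{12η} = s^{2δ}`
  obtain ⟨η, hη⟩ : ∃ η, η = δ / 6 := ⟨_, rfl⟩
  have hηp : 0 < η := by rw [hη]; positivity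
  -- the bootstrap constant: the data contribute at most a quarter of it
  obtain ⟨B, hB⟩ : ∃ B, B = 4 * ((4 * s0 + 200) * A) := ⟨_, rfl⟩
  have hAB : A ≤ B := by rw [hB]; nlinarith
  have hBp : 0 < B := by linarith
  -- `N` collects the constants of `hyp_energy` and `char_bound`
  obtain ⟨N, hN⟩ : ∃ N : ℝ, N = ((idx (Fin 2) 5).card : ℝ) * 24 ^ 6 + 2304 := ⟨_, rfl⟩
  have hNp : 0 < N := by rw [hN]; positivity
  refine ⟨min e1 (min (1 / B) (η / (B * N))), B, by positivity, hBp, ?_⟩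
  intro ε hε hεle u hu hdata
  have hε1 : ε ≤ e1 := hεle.trans (min_le_left _ _)
  have hε2 : B * ε ≤ 1 := by
    have := hεle.trans ((min_le_right _ _).trans (min_le_left _ _))
    rw [le_div_iff₀ hBp] at this; linarith
  have hε3 : B * ε * N ≤ η := by
    have := hεle.trans ((min_le_right _ _).trans (min_le_right _ _))
    rw [le_div_iff₀ (by positivity)] at this; linarith
  obtain ⟨b0, hb0⟩ : ∃ b0, b0 = B * ε := ⟨_, rfl⟩
  have hb0p : 0 < b0 := by rw [hb0]; positivity
  rw [← hb0] at hε2 hε3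
  have hbb : b0 ^ 2 * N ≤ η := by
    refine le_trans ?_ hε3
    gcongr
    nlinarith
  have hcard : ((idx (Fin 2) 5).card : ℝ) * (24 ^ 6 * b0 ^ 2) ≤ 2 * η := by
    have h : 0 ≤ 2304 * b0 ^ 2 := by positivity
    rw [hN] at hbb
    linarith
  have hcub : 1152 * b0 ^ 3 / η ≤ b0 / 2 := by
    rw [div_le_iff₀ hηp]
    have h : 0 ≤ ((idx (Fin 2) 5).card : ℝ) * (24 ^ 6 * b0 ^ 2) := by positivity
    rw [hN] at hbb
    have h2 : 2304 * b0 ^ 2 ≤ η := by linarith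
    nlinarith
  obtain ⟨-, hE0⟩ := hdat0 ε hε hε1 u hu hdata
  have hs0p : 3 ≤ s0 := by linarith
  -- the improved bound, valid as long as the bootstrap assumption holds
  have himp : ∀ s1, s0 ≤ s1 → (∀ s ∈ Set.Ico s0 s1, ∀ w : List (Fin 2), w.length ≤ 2 →
      ∀ k c x y, |P k (Zw L w (u c)) (hh s x y) x y| ≤ b0 * (√(hh s x y))⁻¹ * (s ^ η) ^ w.length) →
      Weak u (A * ε) δ s0 s1 ∧ ∀ w : List (Fin 2), w.length ≤ 2 →
      ∀ k c x y, |P k (Zw L w (u c)) (hh s1 x y) x y|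
        < b0 * (√(hh s1 x y))⁻¹ * (s1 ^ η) ^ w.length := by
    intro s1 hs1 hbt
    have hweak : Weak u (A * ε) δ s0 s1 := by
      have hen : ∀ s ∈ Set.Icc s0 s1, ∀ w : List (Fin 2), w.length ≤ 3 → ∀ c x y,
          (∀ k, |P k (Zw L w (u c)) (hh s x y) x y| ≤ A * ε * s ^ δ / s) ∧
          ∀ a, |L a (Zw L w (u c)) (hh s x y) x y| ≤ A * ε * s ^ δ := by
        intro s hs w hw c x y
        have hsp : 0 < s := by linarith [hs.1]
        have hss : s0 ^ 2 ≤ s ^ 2 := by have := hs.1; gcongr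
        have h1 := hyp_energy hT hu hηp hb0p.le hcard (a := s0) (b := s) (ρ := s ^ 2 + 2)
          (by linarith) hs.1 (by nlinarith) (by nlinarith)
          (fun s' hs' => hbt s' ⟨hs'.1.le, hs'.2.trans_le hs.2⟩)
        have h2 := hE0 (s ^ 2 + 2) (by linarith)
        refine weak_at hu hsp (by linarith [hs.1]) (by linarith : s ^ 2 + 1 ≤ s ^ 2 + 2)
          (by positivity) ?_ w hw c x y
        have e : s ^ (12 * η) = (s ^ δ) ^ 2 := by
          rw [← Real.rpow_natCast, ← Real.rpow_mul hsp.le, hη]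
          congr 1; push_cast; ring
        rw [e] at h1
        calc _ ≤ 2000 ^ 2 * ((s ^ δ) ^ 2 * (C1 * ε ^ 2)) := by
              gcongr
              exact h1.trans (by gcongr)
          _ = (2000 ^ 2 * C1) * (ε ^ 2 * (s ^ δ) ^ 2) := by ring
          _ = _ := by rw [hAsq]; ring
      exact ⟨fun s hs w hw k c x y => (hen s hs w hw c x y).1 k,
        fun s hs w hw a c x y => (hen s hs w hw c x y).2 a⟩
    refine ⟨hweak, fun w hw k c x y => ?_⟩
    refine (char_bound hu (by linarith) (by linarith) (by positivity) hb0p.le hε2 hηp hδ0.le hδ hs1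
      hweak hbt w hw k c x y).trans_lt ?_
    have hq : 1 ≤ (s1 ^ η) ^ w.length :=
      one_le_pow₀ (Real.one_le_rpow (by linarith) hηp.le)
    have hsq : 0 < (√(hh s1 x y))⁻¹ :=
      inv_pos.2 (Real.sqrt_pos.2 (hh_pos (by linarith) x y))
    rw [mul_right_comm]
    refine mul_lt_mul_of_pos_right ?_ hsq
    set q := (s1 ^ η) ^ w.length
    have e1 : (4 * s0 + 200) * (A * ε) = b0 / 4 := by rw [hb0, hB]; ring
    have e2 := mul_le_mul_of_nonneg_right hcub (by linarith : 0 ≤ q)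
    have e3 : b0 * 1 ≤ b0 * q := by gcongr
    rw [e1]
    linarith
  -- continuity argument
  have hall : ∀ S, s0 ≤ S → ∀ s ∈ Set.Icc s0 S, ∀ w : List (Fin 2), w.length ≤ 2 → ∀ k c x y,
      |P k (Zw L w (u c)) (hh s x y) x y| ≤ b0 * (√(hh s x y))⁻¹ * (s ^ η) ^ w.length := by
    intro S hS
    have hpos : ∀ s, s0 ≤ s → ∀ (w : List (Fin 2)) (x y : ℝ),
        0 ≤ b0 * (√(hh s x y))⁻¹ * (s ^ η) ^ w.length := by
      intro s hs w x y
      have : 0 ≤ s := by linarith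
      positivity
    have hconv : ∀ s ∈ Set.Icc s0 S, (∀ j : {w : List (Fin 2) // w ∈ words (Fin 2) 2} × Fin 3 × Fin 2,
        ∀ z ∈ Kbox (S ^ 2 + 2), P j.2.1 (Zw L j.1.1 (u j.2.2)) (hh s z.1 z.2) z.1 z.2 ^ 2
          - (b0 * (√(hh s z.1 z.2))⁻¹ * (s ^ η) ^ j.1.1.length) ^ 2 < 0) →
        ∀ w : List (Fin 2), w.length ≤ 2 → ∀ k c x y,
        |P k (Zw L w (u c)) (hh s x y) x y| ≤ b0 * (√(hh s x y))⁻¹ * (s ^ η) ^ w.length := by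
      intro s hs hg w hw k c x y
      have hsS : s ^ 2 ≤ S ^ 2 := by
        have := hs.2
        have : 0 ≤ s := by linarith [hs.1]
        gcongr
      rcases lt_or_ge (s ^ 2 + 1) (2 * hh s x y) with h | h
      · rw [(hyp_zero hu (by linarith [hs.1]) h w c).2 k, abs_zero]
        exact hpos s hs.1 w x y
      · have hx := hh_ge1 s x y
        have hy := hh_ge2 s x y
        have h0 := hh_nonneg s x y
        have := hg (⟨w, mem_words.2 hw⟩, k, c) (x, y)
          ⟨abs_le.1 (by linarith : |x| ≤ S ^ 2 + 2), abs_le.1 (by linarith : |y| ≤ S ^ 2 + 2)⟩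
        exact abs_le_of_sq_le_sq (by linarith) (hpos s hs.1 w x y)
    intro s hs
    refine hconv s hs (bootstrap (Kbox_compact _) (fun
      (j : {w : List (Fin 2) // w ∈ words (Fin 2) 2} × Fin 3 × Fin 2) s (z : ℝ × ℝ) =>
        P j.2.1 (Zw L j.1.1 (u j.2.2)) (hh s z.1 z.2) z.1 z.2 ^ 2
          - (b0 * (√(hh s z.1 z.2))⁻¹ * (s ^ η) ^ j.1.1.length) ^ 2) s0 S ?_ ?_ s hs)
    · intro j
      have h1 := hyp_cont (smooth_P j.2.1 (Zw_smooth commFam_L j.1.1 (hu.smooth j.2.2)))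
      have hne : ∀ p ∈ Set.Icc s0 S ×ˢ Kbox (S ^ 2 + 2), √(hh p.1 p.2.1 p.2.2) ≠ 0 := by
        intro p hp
        exact (Real.sqrt_pos.2 (hh_pos (by linarith [hp.1.1]) _ _)).ne'
      have h2 := (hh_cont.sqrt.continuousOn (s := Set.Icc s0 S ×ˢ Kbox (S ^ 2 + 2))).inv₀ hne
      have h3 : ContinuousOn (fun p : ℝ × ℝ × ℝ => p.1 ^ η) (Set.Icc s0 S ×ˢ Kbox (S ^ 2 + 2)) :=
        continuousOn_fst.rpow_const (fun p hp => Or.inr hηp.le)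
      exact (h1.continuousOn.pow 2).sub (((continuousOn_const.mul h2).mul (h3.pow _)).pow 2)
    · intro s1 hs1 hprev j z hz
      have := (himp s1 hs1.1 (fun s hs => hconv s ⟨hs.1, hs.2.le.trans hs1.2⟩ (hprev s hs))).2
        j.1.1 (mem_words.1 j.1.2) j.2.1 j.2.2 z.1 z.2
      have h2 := sq_lt_sq.2 (this.trans_le (le_abs_self _))
      linarith
  intro S hS
  obtain ⟨hw, hd⟩ := himp S hS (fun s hs => hall S hS s ⟨hs.1, hs.2.le⟩)
  have hABε : A * ε ≤ B * ε := by gcongr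
  refine ⟨⟨fun s hs w hw' k c x y => (hw.der s hs w hw' k c x y).trans ?_,
    fun s hs w hw' a c x y => (hw.boost s hs w hw' a c x y).trans ?_⟩, fun k c x y => ?_⟩
  · have : 0 < s := by linarith [hs.1]
    gcongr
  · have : 0 < s := by linarith [hs.1]
    gcongr
  · have := (hd [] (by simp) k c x y).le
    rw [List.length_nil, pow_zero, mul_one, hb0] at this
    exact this

/-! ### Estimates in the light cone for `u`, `U` and `K` -/

/-- The decay estimates of `decay`, for all times. -/
def Decays (T D δ : ℝ) (u : Fin 2 → ℝ → ℝ → ℝ → ℝ) : Prop :=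
  ∀ S, T + 1 ≤ S → Weak u D δ (T + 1) S ∧
    ∀ k c x y, |P k (u c) (hh S x y) x y| ≤ D * (√(hh S x y))⁻¹

/-- The decay estimates in terms of `t` and `r = |x|`. -/
theorem cone_facts {T D δ : ℝ} {u : Fin 2 → ℝ → ℝ → ℝ → ℝ} (hT : 2 ≤ T) (hD : 0 < D)
    (hδ0 : 0 ≤ δ) (H : Decays T D δ u) {t x y r : ℝ} (ht : (T + 1) ^ 2 ≤ t)
    (hr : 0 ≤ r) (hrr : r ^ 2 = x ^ 2 + y ^ 2) (hrt : r ≤ t - 1) (j : Fin 2) :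
    (∀ k, |P k (u j) t x y| ≤ D * (√t)⁻¹) ∧
    (∀ k, |P k (u j) t x y| ≤ D * t ^ δ * (√t * √(t - r))⁻¹) ∧
    (∀ a, |L a (u j) t x y| ≤ D * t ^ δ) ∧ ∀ a b, |L a (L b (u j)) t x y| ≤ D * t ^ δ := by
  have ht0 : 0 < t := by nlinarith
  have hpos : 0 ≤ t ^ 2 - r ^ 2 := by nlinarith
  obtain ⟨s, hs⟩ : ∃ s, s = √(t ^ 2 - r ^ 2) := ⟨_, rfl⟩
  have hss : s ^ 2 = t ^ 2 - r ^ 2 := by rw [hs]; exact Real.sq_sqrt hpos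
  have hs0 : 0 ≤ s := by rw [hs]; exact Real.sqrt_nonneg _
  have hsT : T + 1 ≤ s := by
    apply le_of_abs_le; apply abs_le_of_sq_le_sq _ hs0
    nlinarith
  have hst : s ≤ t := by
    apply le_of_abs_le; apply abs_le_of_sq_le_sq _ ht0.le
    nlinarith
  have hh' : hh s x y = t := hh_eq ht0.le (by linarith)
  obtain ⟨hw, hd⟩ := H s hsT
  have hmem : s ∈ Set.Icc (T + 1) s := ⟨hsT, le_rfl⟩
  have hsp : 0 < s := by linarith
  have hpow : D * s ^ δ ≤ D * t ^ δ := by gcongr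
  refine ⟨fun k => ?_, fun k => ?_, fun a => ?_, fun a b => ?_⟩
  · have := hd k j x y
    rwa [hh'] at this
  · have := hw.der s hmem [] (by simp) k j x y
    rw [hh'] at this
    refine this.trans ?_
    have hp : 0 < √t * √(t - r) :=
      mul_pos (Real.sqrt_pos.2 ht0) (Real.sqrt_pos.2 (by linarith))
    have hle : √t * √(t - r) ≤ s := by
      rw [← Real.sqrt_mul ht0.le, hs]
      apply Real.sqrt_le_sqrt
      nlinarith
    rw [div_eq_mul_inv]
    gcongr
  · have := hw.boost s hmem [] (by simp) a j x y
    rw [hh'] at this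
    exact this.trans hpow
  · have := hw.boost s hmem [b] (by simp) a j x y
    rw [hh'] at this
    exact this.trans hpow

/-- Integration of the derivative bound from the edge of the support. -/
theorem u_bound {T D δ : ℝ} {u : Fin 2 → ℝ → ℝ → ℝ → ℝ} (hT : 2 ≤ T) (hD : 0 < D)
    (hu : Sol T u) (hδ0 : 0 ≤ δ) (H : Decays T D δ u) {t ω1 ω2 r : ℝ} (ht : (T + 1) ^ 2 ≤ t)
    (hω : ω1 ^ 2 + ω2 ^ 2 = 1) (hr : 0 ≤ r) (hrt : r ≤ t - 1) (j : Fin 2) :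
    |u j t (r * ω1) (r * ω2)| ≤ 4 * D * t ^ δ := by
  have ht0 : 0 < t := by nlinarith
  have hTt : T ≤ t := by nlinarith
  have hsq : 0 < √t := Real.sqrt_pos.2 ht0
  obtain ⟨M, hM⟩ : ∃ M, M = 4 * D * t ^ δ * (√t)⁻¹ := ⟨_, rfl⟩
  have hM0 : 0 < M := by rw [hM]; positivity
  have hφ : ∀ q, HasDerivAt (fun q => u j t (q * ω1) (q * ω2))
      (ω1 * p1 (u j) t (q * ω1) (q * ω2) + ω2 * p2 (u j) t (q * ω1) (q * ω2)) q := fun q =>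
    (chain (hu.smooth j) (hasDerivAt_const q t) ((hasDerivAt_id q).mul_const ω1)
      ((hasDerivAt_id q).mul_const ω2)).congr_deriv (by simp; ring)
  have hΦ : ∀ q, q < t → HasDerivAt (fun q => M * √(t - q)) (M * (-1 / (2 * √(t - q)))) q :=
    fun q hq => (((hasDerivAt_id q).const_sub t).sqrt (by simpa using by linarith)).const_mul M
  have h1 : |ω1| ≤ 1 := abs_le_of_sq_le_sq (by linarith [sq_nonneg ω2]) (by norm_num)
  have h2 : |ω2| ≤ 1 := abs_le_of_sq_le_sq (by linarith [sq_nonneg ω1]) (by norm_num)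
  have hnorm : ∀ q : ℝ, (q * ω1) ^ 2 + (q * ω2) ^ 2 = q ^ 2 := fun q => by
    linear_combination q ^ 2 * hω
  have hb : ∀ q ∈ Set.Icc r (t - 1 / 2),
      |ω1 * p1 (u j) t (q * ω1) (q * ω2) + ω2 * p2 (u j) t (q * ω1) (q * ω2)|
        ≤ M / (2 * √(t - q)) := by
    intro q hq
    have hq0 : 0 < √(t - q) := Real.sqrt_pos.2 (by linarith [hq.2])
    have hsum : |ω1 * p1 (u j) t (q * ω1) (q * ω2) + ω2 * p2 (u j) t (q * ω1) (q * ω2)|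
        ≤ 1 * |p1 (u j) t (q * ω1) (q * ω2)| + 1 * |p2 (u j) t (q * ω1) (q * ω2)| := by
      refine (abs_add_le _ _).trans ?_
      rw [abs_mul, abs_mul]
      gcongr
    rcases le_or_gt q (t - 1) with h | h
    · have hc := (cone_facts hT hD hδ0 H ht (hr.trans hq.1) (hnorm q).symm h j).2.1
      have c1 : |p1 (u j) t (q * ω1) (q * ω2)| ≤ _ := hc 1
      have c2 : |p2 (u j) t (q * ω1) (q * ω2)| ≤ _ := hc 2
      refine hsum.trans ?_
      have e : M / (2 * √(t - q)) = 2 * (D * t ^ δ * (√t * √(t - q))⁻¹) := by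
        rw [hM]; field_simp; ring
      rw [e]
      linarith
    · have hz := (hu.zero commFam_P [] j hTt (x := q * ω1) (y := q * ω2)
        (by rw [hnorm]; nlinarith)).2
      have c1 : p1 (u j) t (q * ω1) (q * ω2) = 0 := hz 1
      have c2 : p2 (u j) t (q * ω1) (q * ω2) = 0 := hz 2
      rw [c1, c2]
      simp only [mul_zero, add_zero, abs_zero]
      positivity
  have hend : u j t ((t - 1 / 2) * ω1) ((t - 1 / 2) * ω2) = 0 :=
    (hu.zero commFam_P [] j hTt (by rw [hnorm]; nlinarith)).1
  -- comparison with the explicit primitive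
  have hcmp : ∀ e : ℝ, |e| = 1 → 0 ≤ M * √(t - r) + e * u j t (r * ω1) (r * ω2) := by
    intro e he
    have hder : ∀ q ∈ Set.Icc r (t - 1 / 2), HasDerivAt
        (fun q => M * √(t - q) + e * u j t (q * ω1) (q * ω2)) _ q := fun q hq =>
      (hΦ q (by linarith [hq.2])).add ((hφ q).const_mul e)
    have hanti : AntitoneOn (fun q => M * √(t - q) + e * u j t (q * ω1) (q * ω2))
        (Set.Icc r (t - 1 / 2)) := by
      refine antitoneOn_of_deriv_nonpos (convex_Icc _ _)
        (fun q hq => (hder q hq).continuousAt.continuousWithinAt)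
        (fun q hq => (hder q (interior_subset hq)).differentiableAt.differentiableWithinAt) ?_
      intro q hq
      have hq' := interior_subset hq
      rw [(hder q hq').deriv]
      have h3 := hb q hq'
      have h4 := le_abs_self (e * (ω1 * p1 (u j) t (q * ω1) (q * ω2)
        + ω2 * p2 (u j) t (q * ω1) (q * ω2)))
      rw [abs_mul, he, one_mul] at h4
      have h5 : M * (-1 / (2 * √(t - q))) = -(M / (2 * √(t - q))) := by ring
      rw [h5]
      linarith
    have := hanti ⟨le_rfl, by linarith⟩ ⟨by linarith, le_rfl⟩ (by linarith : r ≤ t - 1 / 2)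
    simp only [hend, mul_zero, add_zero] at this
    refine le_trans ?_ this
    positivity
  have hfin : M * √(t - r) ≤ 4 * D * t ^ δ := by
    have : √(t - r) ≤ √t := Real.sqrt_le_sqrt (by linarith)
    calc M * √(t - r) ≤ M * √t := by gcongr
      _ = _ := by rw [hM]; field_simp
  have k1 := hcmp 1 (by simp)
  have k2 := hcmp (-1) (by simp)
  rw [abs_le]
  constructor <;> linarith

/-- Elementary bounds for `U = ½(u/(2√r) + √r(∂ᵣu − ∂ₜu))`, in terms of `z = √t`, `y = √r` and
`κ = √c`. -/
theorem U_facts {z y κ D lam u p q U : ℝ} (hz : 0 < z) (hy : 0 < y) (hκ : 1 ≤ κ) (hD : 0 < D)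
    (hl0 : 0 ≤ lam) (hlz : lam ≤ z) (hzy : z ^ 2 ≤ 2 * y ^ 2) (hyz : y ^ 2 ≤ 2 * z ^ 2)
    (hκz : κ ^ 2 ≤ 2 * z ^ 2)
    (hU : U = 1 / 2 * (1 / 2 * y⁻¹ * u + y * (p - q)))
    (hu : |u| ≤ 8 * D * lam) (hp : |p| ≤ 2 * D / z) (hq : |q| ≤ D / z)
    (hp2 : |p| ≤ 4 * D * lam / (z * κ)) (hq2 : |q| ≤ 2 * D * lam / (z * κ))
    (hpq : |p + q| ≤ 6 * D * lam / z ^ 2) :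
    |U| ≤ 6 * D ∧ κ * |U| ≤ 9 * D * lam ∧ |q + y⁻¹ * U| ≤ 7 * D * lam / z ^ 2 := by
  have hy1 : y⁻¹ ≤ 3 / 2 * z⁻¹ := by
    have : z ≤ 3 / 2 * y := by
      apply le_of_abs_le; apply abs_le_of_sq_le_sq _ (by positivity); nlinarith
    rw [← div_eq_mul_inv, inv_eq_one_div, div_le_div_iff₀ hy hz]; linarith
  have hy2 : y ≤ 3 / 2 * z := by
    apply le_of_abs_le; apply abs_le_of_sq_le_sq _ (by positivity); nlinarith
  have hκ2 : κ ≤ 3 / 2 * z := by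
    apply le_of_abs_le; apply abs_le_of_sq_le_sq _ (by positivity); nlinarith
  have hκ0 : 0 < κ := by linarith
  have base : ∀ A, |p| + |q| ≤ A → |U| ≤ 6 * D * lam / z / 2 + 3 / 4 * z * A := by
    intro A hA
    have h1 : |1 / 2 * y⁻¹ * u| ≤ 1 / 2 * (3 / 2 * z⁻¹) * (8 * D * lam) := by
      rw [abs_mul, abs_of_pos (by positivity)]; gcongr
    have h2 : |y * (p - q)| ≤ 3 / 2 * z * A := by
      rw [abs_mul, abs_of_pos hy]
      have := (abs_sub p q).trans hA
      gcongr
    rw [hU, abs_mul, abs_of_pos (by norm_num : (0 : ℝ) < 1 / 2)]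
    have h3 := abs_add_le (1 / 2 * y⁻¹ * u) (y * (p - q))
    have e : 1 / 2 * (3 / 2 * z⁻¹) * (8 * D * lam) = 6 * D * lam / z := by field_simp; ring
    rw [e] at h1
    linarith
  refine ⟨?_, ?_, ?_⟩
  · refine (base (3 * D / z) (by rw [show 3 * D / z = 2 * D / z + D / z by ring]; linarith)).trans ?_
    have e : 3 / 4 * z * (3 * D / z) = 9 / 4 * D := by field_simp; ring
    have : 6 * D * lam / z ≤ 6 * D := by rw [div_le_iff₀ hz]; gcongr
    rw [e]
    linarith
  · have hA : |p| + |q| ≤ 6 * D * lam / (z * κ) := by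
      rw [show 6 * D * lam / (z * κ) = 4 * D * lam / (z * κ) + 2 * D * lam / (z * κ) by ring]
      linarith
    calc κ * |U| ≤ κ * (6 * D * lam / z / 2 + 3 / 4 * z * (6 * D * lam / (z * κ))) := by
          gcongr; exact base _ hA
      _ = κ * (3 * D * lam / z) + 9 / 2 * D * lam := by field_simp; ring
      _ ≤ (3 / 2 * z) * (3 * D * lam / z) + 9 / 2 * D * lam := by gcongr
      _ = _ := by field_simp; ring
  · have e : q + y⁻¹ * U = 1 / 2 * (p + q) + 1 / 4 * (y⁻¹) ^ 2 * u := by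
      rw [hU]; field_simp; ring
    have h1 : (y⁻¹) ^ 2 ≤ 2 / z ^ 2 := by
      rw [inv_pow, inv_eq_one_div, div_le_div_iff₀ (by positivity) (by positivity)]; linarith
    rw [e]
    calc _ ≤ |1 / 2 * (p + q)| + |1 / 4 * (y⁻¹) ^ 2 * u| := abs_add_le _ _
      _ = 1 / 2 * |p + q| + 1 / 4 * (y⁻¹) ^ 2 * |u| := by
          rw [abs_mul, abs_mul, abs_of_pos (by norm_num : (0 : ℝ) < 1 / 2),
            abs_of_pos (by positivity : 0 < 1 / 4 * (y⁻¹) ^ 2)]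
      _ ≤ 1 / 2 * (6 * D * lam / z ^ 2) + 1 / 4 * (2 / z ^ 2) * (8 * D * lam) := by gcongr
      _ = _ := by ring

/-- The cancellation behind the decay of `K`: along the light cone `∂ₜu ≈ -U/√r`, so that the cubic
terms cancel up to the factor `1/t - 1/r = σ/(tr)`. -/
theorem K_bound {z y κ D lam T ua Ra qa Ua qb Ub : ℝ} (hz : 0 < z) (hy : 0 < y) (hκ : 1 ≤ κ)
    (hD : 0 < D) (hD1 : D ≤ 1) (hT : 0 ≤ T) (hl1 : 1 ≤ lam) (hz1 : 1 ≤ z)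
    (hzy : z ^ 2 ≤ 2 * y ^ 2) (hyz : y ^ 2 ≤ 2 * z ^ 2)
    (hσ : |y ^ 2 - z ^ 2| ≤ (1 + T) * κ ^ 2) (hua : |ua| ≤ 8 * D * lam) (hRa : |Ra| ≤ 12 * D * lam)
    (hqa : |qa| ≤ D / z) (hqb : |qb| ≤ D / z)
    (hUa : |Ua| ≤ 6 * D) (hUb : |Ub| ≤ 6 * D) (hUb2 : κ * |Ub| ≤ 9 * D * lam)
    (hga : |qa + y⁻¹ * Ua| ≤ 7 * D * lam / z ^ 2) (hgb : |qb + y⁻¹ * Ub| ≤ 7 * D * lam / z ^ 2) :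
    |1 / 2 * (y * qb ^ 2 * qa + 1 / z ^ 2 * Ub ^ 2 * Ua) - 1 / (8 * y ^ 3) * (4 * Ra + ua)|
      ≤ 1100 * (1 + T) * D * (lam ^ 2 / z ^ 3) := by
  have hy1 : y⁻¹ ≤ 3 / 2 * z⁻¹ := by
    have : z ≤ 3 / 2 * y := by
      apply le_of_abs_le; apply abs_le_of_sq_le_sq _ (by positivity); nlinarith
    rw [← div_eq_mul_inv, inv_eq_one_div, div_le_div_iff₀ hy hz]; linarith
  have hy2 : y ≤ 3 / 2 * z := by
    apply le_of_abs_le; apply abs_le_of_sq_le_sq _ (by positivity); nlinarith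
  obtain ⟨ga, hgad⟩ : ∃ g, g = qa + y⁻¹ * Ua := ⟨_, rfl⟩
  obtain ⟨gb, hgbd⟩ : ∃ g, g = qb + y⁻¹ * Ub := ⟨_, rfl⟩
  obtain ⟨nb, hnbd⟩ : ∃ n, n = -(y⁻¹ * Ub) := ⟨_, rfl⟩
  rw [← hgad] at hga
  rw [← hgbd] at hgb
  have hnb : |nb| ≤ 9 * D / z := by
    rw [hnbd, abs_neg, abs_mul, abs_of_pos (by positivity : 0 < y⁻¹)]
    calc _ ≤ 3 / 2 * z⁻¹ * (6 * D) := by gcongr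
      _ = _ := by field_simp; ring
  have e : 1 / 2 * (y * qb ^ 2 * qa + 1 / z ^ 2 * Ub ^ 2 * Ua) - 1 / (8 * y ^ 3) * (4 * Ra + ua)
      = 1 / 2 * (y * (gb * (qb + nb) * qa + nb ^ 2 * ga))
        + 1 / 2 * ((y ^ 2 - z ^ 2) * Ub ^ 2 * Ua * ((z ^ 2)⁻¹ * (y⁻¹) ^ 2))
        - 1 / 8 * (y⁻¹) ^ 3 * (4 * Ra + ua) := by
    rw [hgad, hgbd, hnbd]; field_simp; ring
  have hl2 : lam ≤ lam ^ 2 := by nlinarith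
  have hD2 : D ^ 3 ≤ D := by
    calc D ^ 3 ≤ D ^ 1 := pow_le_pow_of_le_one hD.le hD1 (by norm_num)
      _ = D := pow_one D
  have hX : 0 < D * (lam ^ 2 / z ^ 3) := by positivity
  have t1 : |1 / 2 * (y * (gb * (qb + nb) * qa + nb ^ 2 * ga))| ≤ 480 * (D * (lam ^ 2 / z ^ 3)) := by
    have h1 : |gb * (qb + nb) * qa| ≤ 7 * D * lam / z ^ 2 * (D / z + 9 * D / z) * (D / z) := by
      rw [abs_mul, abs_mul]
      have := (abs_add_le qb nb).trans (add_le_add hqb hnb)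
      gcongr
    have h2 : |nb ^ 2 * ga| ≤ (9 * D / z) ^ 2 * (7 * D * lam / z ^ 2) := by
      rw [abs_mul, abs_pow]; gcongr
    rw [abs_mul, abs_mul, abs_of_pos hy, abs_of_pos (by norm_num : (0 : ℝ) < 1 / 2)]
    calc _ ≤ 1 / 2 * (3 / 2 * z * (7 * D * lam / z ^ 2 * (D / z + 9 * D / z) * (D / z)
          + (9 * D / z) ^ 2 * (7 * D * lam / z ^ 2))) := by
          gcongr
          exact (abs_add_le _ _).trans (add_le_add h1 h2)
      _ = 1911 / 4 * (D ^ 3 * (lam / z ^ 3)) := by field_simp; ring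
      _ ≤ 480 * (D * (lam ^ 2 / z ^ 3)) := by gcongr; norm_num
  have t2 : |1 / 2 * ((y ^ 2 - z ^ 2) * Ub ^ 2 * Ua * ((z ^ 2)⁻¹ * (y⁻¹) ^ 2))|
      ≤ 547 * (1 + T) * (D * (lam ^ 2 / z ^ 3)) := by
    rw [abs_mul, abs_mul, abs_mul, abs_mul, abs_of_pos (by norm_num : (0 : ℝ) < 1 / 2),
      abs_of_pos (by positivity : 0 < (z ^ 2)⁻¹ * (y⁻¹) ^ 2), abs_pow]
    calc _ ≤ 1 / 2 * ((1 + T) * κ ^ 2 * |Ub| ^ 2 * (6 * D) * ((z ^ 2)⁻¹ * (3 / 2 * z⁻¹) ^ 2)) := by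
          gcongr
      _ = 1 / 2 * ((1 + T) * (κ * |Ub|) ^ 2 * (6 * D) * ((z ^ 2)⁻¹ * (3 / 2 * z⁻¹) ^ 2)) := by ring
      _ ≤ 1 / 2 * ((1 + T) * (9 * D * lam) ^ 2 * (6 * D) * ((z ^ 2)⁻¹ * (3 / 2 * z⁻¹) ^ 2)) := by
          have : 0 ≤ κ * |Ub| := by positivity
          gcongr
      _ = 2187 / 4 * (1 + T) * (D ^ 3 * (lam ^ 2 / (z ^ 3 * z))) := by field_simp; ring
      _ ≤ 547 * (1 + T) * (D * (lam ^ 2 / z ^ 3)) := by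
          gcongr
          · norm_num
          · exact le_mul_of_one_le_right (by positivity) hz1
  have t3 : |1 / 8 * (y⁻¹) ^ 3 * (4 * Ra + ua)| ≤ 24 * (D * (lam ^ 2 / z ^ 3)) := by
    have h1 : |4 * Ra + ua| ≤ 56 * D * lam := by
      refine (abs_add_le _ _).trans ?_
      rw [abs_mul, abs_of_pos (by norm_num : (0 : ℝ) < 4)]
      linarith
    rw [abs_mul, abs_of_pos (by positivity : 0 < 1 / 8 * (y⁻¹) ^ 3)]
    calc _ ≤ 1 / 8 * (3 / 2 * z⁻¹) ^ 3 * (56 * D * lam) := by gcongr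
      _ = 189 / 8 * (D * (lam / z ^ 3)) := by field_simp; ring
      _ ≤ _ := by gcongr; norm_num
  rw [e]
  refine (abs_sub _ _).trans ?_
  have := abs_add_le (1 / 2 * (y * (gb * (qb + nb) * qa + nb ^ 2 * ga)))
    (1 / 2 * ((y ^ 2 - z ^ 2) * Ub ^ 2 * Ua * ((z ^ 2)⁻¹ * (y⁻¹) ^ 2)))
  have hTX := mul_nonneg hT hX.le
  linarith only [this, t1, t2, t3, hTX, hX]

/-! ### From the Cauchy problem to the translated system -/

/-- Translation in time by `T`. -/
def sh (T : ℝ) (u : ℝ → ℝ → ℝ → ℝ) : ℝ → ℝ → ℝ → ℝ := fun t x y => u (t - T) x y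

theorem sh_val (T : ℝ) (u : ℝ → ℝ → ℝ → ℝ) (t x y : ℝ) : sh T u (t + T) x y = u t x y := by
  simp [sh]

theorem pt_sh (T : ℝ) (u : ℝ → ℝ → ℝ → ℝ) : pt (sh T u) = sh T (pt u) := by
  funext t x y
  exact deriv_comp_sub_const (f := fun s => u s x y) T t

theorem P_sh (T : ℝ) (k : Fin 3) (u : ℝ → ℝ → ℝ → ℝ) : P k (sh T u) = sh T (P k u) := by
  fin_cases k
  · exact pt_sh T u
  · rfl
  · rfl

theorem rot_sh (T : ℝ) (u : ℝ → ℝ → ℝ → ℝ) : rot (sh T u) = sh T (rot u) := rfl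

theorem box_sh (T : ℝ) (u : ℝ → ℝ → ℝ → ℝ) : dAlembert (sh T u) = sh T (dAlembert u) := by
  funext t x y
  show pt (pt (sh T u)) t x y - p1 (p1 (sh T u)) t x y - p2 (p2 (sh T u)) t x y = _
  rw [pt_sh, pt_sh]; rfl

theorem smooth_sh (T : ℝ) {u : ℝ → ℝ → ℝ → ℝ} (hu : Smooth3 u) : Smooth3 (sh T u) :=
  ContDiff.comp (g := fun p : ℝ × ℝ × ℝ => u p.1 p.2.1 p.2.2)
    (f := fun p : ℝ × ℝ × ℝ => (p.1 - T, p.2.1, p.2.2)) hu (by fun_prop)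

theorem supp_radius {f : ℝ → ℝ → ℝ} (hf : SmoothCompact2 f) :
    ∃ R, 0 ≤ R ∧ ∀ R', R ≤ R' → ∀ x y, R' ^ 2 < x ^ 2 + y ^ 2 → f x y = 0 := by
  obtain ⟨ρ, hρ⟩ := hf.2.isCompact.isBounded.exists_norm_le
  refine ⟨2 * |ρ|, by positivity, fun R' hR' x y hxy => ?_⟩
  by_contra h
  have h1 := hρ (x, y) (subset_tsupport _ h)
  have hx : |x| ≤ |ρ| := ((norm_fst_le (x, y)).trans h1).trans (le_abs_self ρ)
  have hy : |y| ≤ |ρ| := ((norm_snd_le (x, y)).trans h1).trans (le_abs_self ρ)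
  have := sq_le_sq' (by linarith [abs_nonneg ρ, abs_nonneg x]) hx
  have := sq_le_sq' (by linarith [abs_nonneg ρ, abs_nonneg y]) hy
  rw [sq_abs] at *
  have h5 : (2 * |ρ|) ^ 2 ≤ R' ^ 2 := by gcongr
  rw [mul_pow, sq_abs] at h5
  rw [sq_abs] at *
  nlinarith [sq_nonneg ρ]

/-- Data vanishing outside a disc of radius `R`, and finite speed of propagation. -/
theorem outside_zero {u : ℝ → ℝ → ℝ → ℝ} (hu : Smooth3 u) {R ε : ℝ} (hR : 0 ≤ R)
    {f g : ℝ → ℝ → ℝ} (hf : ∀ x y, R ^ 2 < x ^ 2 + y ^ 2 → f x y = 0)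
    (hg : ∀ x y, R ^ 2 < x ^ 2 + y ^ 2 → g x y = 0)
    (h0 : ∀ x y, u 0 x y = ε * f x y) (h1 : ∀ x y, pt u 0 x y = ε * g x y)
    {w : ℝ → ℝ → ℝ → ℝ}
    (hpde : ∀ t x y, 0 < t → dAlembert u t x y = -(w t x y) ^ 2 * pt u t x y) :
    VanishOn (Oset (R + 1)) (sh (R + 1) u) := by
  rintro ⟨t, x, y⟩ ⟨ht, hxy⟩
  refine finite_speed hu hR (fun t ht x y => ?_) (fun x y hxy => ?_) (t - (R + 1))
    (by simp only at ht; linarith) x y (by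
      simp only at hxy
      rwa [show t - (R + 1) + R = t - 1 by ring])
  · rw [hpde t x y ht]
    have := mul_nonneg (sq_nonneg (w t x y)) (sq_nonneg (pt u t x y))
    linarith
  · refine ⟨by rw [h0, hf x y hxy, mul_zero], fun k => ?_⟩
    have hz : ∀ x y, R ^ 2 < x ^ 2 + y ^ 2 → u 0 x y = 0 := fun x y h => by
      rw [h0, hf x y h, mul_zero]
    fin_cases k
    · show pt u 0 x y = 0
      rw [h1, hg x y hxy, mul_zero]
    · have hev : (fun s => u 0 s y) =ᶠ[𝓝 x] fun _ => 0 := by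
        have : ∀ᶠ s in 𝓝 x, R ^ 2 < s ^ 2 + y ^ 2 :=
          (by fun_prop : ContinuousAt (fun s => s ^ 2 + y ^ 2) x).eventually (lt_mem_nhds hxy)
        filter_upwards [this] with s hs using hz s y hs
      exact hev.deriv_eq.trans (deriv_const _ _)
    · have hev : (fun s => u 0 x s) =ᶠ[𝓝 y] fun _ => 0 := by
        have : ∀ᶠ s in 𝓝 y, R ^ 2 < x ^ 2 + s ^ 2 :=
          (by fun_prop : ContinuousAt (fun s => x ^ 2 + s ^ 2) y).eventually (lt_mem_nhds hxy)
        filter_upwards [this] with s hs using hz x s hs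
      exact hev.deriv_eq.trans (deriv_const _ _)

/-- Time-translated solutions of the Cauchy problem obey the decay estimates, uniformly. -/
theorem solution_decay {f1 f2 g1 g2 : ℝ → ℝ → ℝ}
    (hf1 : SmoothCompact2 f1) (hf2 : SmoothCompact2 f2)
    (hg1 : SmoothCompact2 g1) (hg2 : SmoothCompact2 g2) {δ : ℝ} (hδ0 : 0 < δ) (hδ : δ ≤ 1 / 4) :
    ∃ T ε0 C, 2 ≤ T ∧ 0 < ε0 ∧ 0 < C ∧ ∀ ε, 0 < ε → ε ≤ ε0 → ∀ u1 u2,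
      IsSolution ε f1 f2 g1 g2 u1 u2 →
      Sol T (fun c => sh T (![u1, u2] c)) ∧ Decays T (C * ε) δ (fun c => sh T (![u1, u2] c)) := by
  obtain ⟨R1, hR1, a1⟩ := supp_radius hf1
  obtain ⟨R2, hR2, a2⟩ := supp_radius hf2
  obtain ⟨R3, hR3, a3⟩ := supp_radius hg1
  obtain ⟨R4, hR4, a4⟩ := supp_radius hg2
  obtain ⟨R, hR⟩ : ∃ R, R = R1 + R2 + R3 + R4 + 1 := ⟨_, rfl⟩
  replace a1 := a1 R (by linarith)
  replace a2 := a2 R (by linarith)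
  replace a3 := a3 R (by linarith)
  replace a4 := a4 R (by linarith)
  have hR0 : 0 ≤ R := by linarith
  obtain ⟨C0, hC0, hdata⟩ := data_bound ![f1, f2] ![g1, g2]
    (Fin.forall_fin_two.2 ⟨hf1.1, hf2.1⟩) (Fin.forall_fin_two.2 ⟨hg1.1, hg2.1⟩)
    (Fin.forall_fin_two.2 ⟨a1, a2⟩) (Fin.forall_fin_two.2 ⟨a3, a4⟩) (R + 1) 8
  obtain ⟨ε0, C, hε0, hC, hdec⟩ := decay (T := R + 1) (by linarith) hC0 hδ0 hδ
  refine ⟨R + 1, min ε0 1, C, by linarith, lt_min hε0 one_pos, hC, fun ε he hle u1 u2 h => ?_⟩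
  have hS : Sol (R + 1) (fun c => sh (R + 1) (![u1, u2] c)) := by
    refine ⟨Fin.forall_fin_two.2 ⟨smooth_sh _ h.smooth1, smooth_sh _ h.smooth2⟩,
      Fin.forall_fin_two.2 ⟨fun t x y ht => ?_, fun t x y ht => ?_⟩, Fin.forall_fin_two.2
      ⟨outside_zero h.smooth1 hR0 a1 a3 h.init1 h.initd1 h.pde1,
        outside_zero h.smooth2 hR0 a2 a4 h.init2 h.initd2 h.pde2⟩⟩
    · show dAlembert (sh (R + 1) u1) t x y = -(pt (sh (R + 1) u2) t x y) ^ 2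
        * pt (sh (R + 1) u1) t x y
      rw [box_sh, pt_sh, pt_sh]
      exact h.pde1 _ _ _ (by linarith)
    · show dAlembert (sh (R + 1) u2) t x y = -(pt (sh (R + 1) u1) t x y) ^ 2
        * pt (sh (R + 1) u2) t x y
      rw [box_sh, pt_sh, pt_sh]
      exact h.pde2 _ _ _ (by linarith)
  refine ⟨hS, hdec ε he (hle.trans (min_le_left _ _)) _ hS
    (hdata ε he (hle.trans (min_le_right _ _)) _ hS
      (Fin.forall_fin_two.2 ⟨fun x y => ?_, fun x y => ?_⟩)
      (Fin.forall_fin_two.2 ⟨fun x y => ?_, fun x y => ?_⟩))⟩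
  · show u1 (R + 1 - (R + 1)) x y = _
    rw [sub_self]; exact h.init1 x y
  · show u2 (R + 1 - (R + 1)) x y = _
    rw [sub_self]; exact h.init2 x y
  · show pt (sh (R + 1) u1) (R + 1) x y = _
    rw [pt_sh]
    show pt u1 (R + 1 - (R + 1)) x y = _
    rw [sub_self]; exact h.initd1 x y
  · show pt (sh (R + 1) u2) (R + 1) x y = _
    rw [pt_sh]
    show pt u2 (R + 1 - (R + 1)) x y = _
    rw [sub_self]; exact h.initd2 x y

/-! ### Pointwise decay of `ρ` -/

theorem radius_polar {r ω1 ω2 : ℝ} (hr : 0 < r) (hω : ω1 ^ 2 + ω2 ^ 2 = 1) :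
    radius (r * ω1) (r * ω2) = r := by
  rw [radius, show (r * ω1) ^ 2 + (r * ω2) ^ 2 = r ^ 2 by linear_combination r ^ 2 * hω]
  exact Real.sqrt_sq hr.le

/-- `U = ½(u/(2√r) + √r(∂ᵣu - ∂ₜu))`. -/
theorem Uop_eq {u : ℝ → ℝ → ℝ → ℝ} (hu : Smooth3 u) {t r ω1 ω2 : ℝ} (hr : 0 < r)
    (hω : ω1 ^ 2 + ω2 ^ 2 = 1) :
    Uop u t (r * ω1) (r * ω2) = 1 / 2 * (1 / 2 * (√r)⁻¹ * u t (r * ω1) (r * ω2)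
      + √r * ((ω1 * p1 u t (r * ω1) (r * ω2) + ω2 * p2 u t (r * ω1) (r * ω2))
        - pt u t (r * ω1) (r * ω2))) := by
  obtain ⟨x, hx⟩ : ∃ x, x = r * ω1 := ⟨_, rfl⟩
  obtain ⟨y, hy⟩ : ∃ y, y = r * ω2 := ⟨_, rfl⟩
  have hrad : radius x y = r := by rw [hx, hy]; exact radius_polar hr hω
  have hxy : x ^ 2 + y ^ 2 = r ^ 2 := by rw [hx, hy]; linear_combination r ^ 2 * hω
  have hne : x ^ 2 + y ^ 2 ≠ 0 := by rw [hxy]; positivity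
  have hrad' : √(x ^ 2 + y ^ 2) = r := hrad
  have d1 : HasDerivAt (fun a => radius a y) ω1 x :=
    ((((hasDerivAt_id x).pow 2).add_const (y ^ 2)).sqrt (by simpa using hne)).congr_deriv (by
      simp only [id, Pi.pow_apply, hrad']
      rw [hx]; field_simp; norm_num; ring)
  have d2 : HasDerivAt (fun a => radius x a) ω2 y :=
    ((((hasDerivAt_id y).pow 2).const_add (x ^ 2)).sqrt (by simpa using hne)).congr_deriv (by
      simp only [id, Pi.pow_apply, hrad']
      rw [hy]; field_simp; norm_num; ring)
  have hhalf : r ^ ((1 : ℝ) / 2) = √r := (Real.sqrt_eq_rpow r).symm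
  have hmhalf : r ^ ((1 : ℝ) / 2 - 1) = (√r)⁻¹ := by
    rw [Real.sqrt_eq_rpow, ← Real.rpow_neg hr.le]; norm_num
  have e1 : p1 (fun s y1 y2 => radius y1 y2 ^ ((1 : ℝ) / 2) * u s y1 y2) t x y
      = ω1 * (1 / 2) * (√r)⁻¹ * u t x y + √r * p1 u t x y :=
    ((d1.rpow_const (p := (1 : ℝ) / 2) (Or.inl (by rw [hrad]; exact hr.ne'))).mul
      (p1_hd hu t x y)).deriv.trans (by rw [hrad, hhalf, hmhalf])
  have e2 : p2 (fun s y1 y2 => radius y1 y2 ^ ((1 : ℝ) / 2) * u s y1 y2) t x y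
      = ω2 * (1 / 2) * (√r)⁻¹ * u t x y + √r * p2 u t x y :=
    ((d2.rpow_const (p := (1 : ℝ) / 2) (Or.inl (by rw [hrad]; exact hr.ne'))).mul
      (p2_hd hu t x y)).deriv.trans (by rw [hrad, hhalf, hmhalf])
  have e0 : pt (fun s y1 y2 => radius y1 y2 ^ ((1 : ℝ) / 2) * u s y1 y2) t x y
      = √r * pt u t x y :=
    ((pt_hd hu t x y).const_mul _).deriv.trans (by rw [hrad, hhalf])
  have q1 : x / r = ω1 := by rw [hx]; field_simp
  have q2 : y / r = ω2 := by rw [hy]; field_simp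
  rw [← hx, ← hy]
  show 1 / 2 * (x / radius x y * _ + y / radius x y * _ - _) = _
  rw [e0, e1, e2, hrad, q1, q2]
  linear_combination (1 / 4 * (√r)⁻¹ * u t x y) * hω

theorem rpow_three_half {r : ℝ} (hr : 0 < r) : r ^ ((3 : ℝ) / 2) = √r ^ 3 := by
  rw [Real.sqrt_eq_rpow, ← Real.rpow_natCast, ← Real.rpow_mul hr.le]; norm_num

theorem Hfun_eq (ua ub : ℝ → ℝ → ℝ → ℝ) {t r ω1 ω2 : ℝ} (ht : 0 < t) (hr : 0 < r)
    (hω : ω1 ^ 2 + ω2 ^ 2 = 1) :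
    Hfun ua ub t (r * ω1) (r * ω2) =
      1 / 2 * (√r * pt ub t (r * ω1) (r * ω2) ^ 2 * pt ua t (r * ω1) (r * ω2)
        + 1 / √t ^ 2 * Uop ub t (r * ω1) (r * ω2) ^ 2 * Uop ua t (r * ω1) (r * ω2))
      - 1 / (8 * √r ^ 3) * (4 * rot (rot ua) t (r * ω1) (r * ω2) + ua t (r * ω1) (r * ω2)) := by
  have hhalf : r ^ ((1 : ℝ) / 2) = √r := (Real.sqrt_eq_rpow r).symm
  rw [Hfun, radius_polar hr hω, hhalf, rpow_three_half hr, Real.sq_sqrt ht.le]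

set_option maxHeartbeats 1000000 in
/-- Pointwise decay of `ρ` along the outgoing rays. -/
theorem rho_point {T D δ : ℝ} {u : Fin 2 → ℝ → ℝ → ℝ → ℝ} (hT : 2 ≤ T) (hD : 0 < D) (hD1 : D ≤ 1)
    (hδ0 : 0 ≤ δ) (hδ : δ ≤ 1 / 4) (hs : ∀ c, Smooth3 (u c)) (hu : Sol T (fun c => sh T (u c)))
    (H : Decays T D δ (fun c => sh T (u c))) {t σ ω1 ω2 : ℝ} (ht : (T + 1) ^ 2 ≤ t)
    (hσ : -2 * σ ≤ t) (hω : ω1 ^ 2 + ω2 ^ 2 = 1) :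
    |rhoFun (u 0) (u 1) t σ ω1 ω2| ≤ 13200 * (1 + T) * D ^ 2 * t ^ (2 * δ - 3 / 2) := by
  have ht0 : 0 < t := by nlinarith
  have hTt : T ≤ t := by nlinarith
  have ht1 : 1 ≤ t := by linarith
  obtain ⟨r, hr⟩ : ∃ r, r = t + σ := ⟨_, rfl⟩
  have hr2 : t ≤ 2 * r := by rw [hr]; linarith
  have hr0 : 0 < r := by linarith
  have hnorm : r ^ 2 = (r * ω1) ^ 2 + (r * ω2) ^ 2 := by linear_combination -r ^ 2 * hω
  have hrho : rhoFun (u 0) (u 1) t σ ω1 ω2 =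
      Uop (u 0) t (r * ω1) (r * ω2) * Hfun (u 0) (u 1) t (r * ω1) (r * ω2)
      - Uop (u 1) t (r * ω1) (r * ω2) * Hfun (u 1) (u 0) t (r * ω1) (r * ω2) := by
    rw [hr]; rfl
  have hval : ∀ j, u j t (r * ω1) (r * ω2) = sh T (u j) (t + T) (r * ω1) (r * ω2) := fun j =>
    (sh_val T (u j) t _ _).symm
  have hPval : ∀ k j, P k (u j) t (r * ω1) (r * ω2) = P k (sh T (u j)) (t + T) (r * ω1) (r * ω2) :=
    fun k j => by rw [P_sh, sh_val]
  have hRval : ∀ j, rot (rot (u j)) t (r * ω1) (r * ω2)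
      = rot (rot (sh T (u j))) (t + T) (r * ω1) (r * ω2) := fun j => by
    rw [rot_sh, rot_sh, sh_val]
  have hRHS : 0 ≤ 13200 * (1 + T) * D ^ 2 * t ^ (2 * δ - 3 / 2) := by positivity
  rcases lt_or_ge (t + T - 1) r with hout | hin
  · have hz : ∀ j, Uop (u j) t (r * ω1) (r * ω2) = 0 := fun j => by
      obtain ⟨z0, z1⟩ := hu.zero commFam_P [] j (t := t + T) (by linarith)
        (x := r * ω1) (y := r * ω2) (by rw [← hnorm]; nlinarith)
      have w0 : u j t (r * ω1) (r * ω2) = 0 := (hval j).trans z0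
      have w1 : pt (u j) t (r * ω1) (r * ω2) = 0 := (hPval 0 j).trans (z1 0)
      have w2 : p1 (u j) t (r * ω1) (r * ω2) = 0 := (hPval 1 j).trans (z1 1)
      have w3 : p2 (u j) t (r * ω1) (r * ω2) = 0 := (hPval 2 j).trans (z1 2)
      rw [Uop_eq (hs j) hr0 hω, w0, w1, w2, w3]; ring
    rw [hrho, hz 0, hz 1]
    simpa using hRHS
  obtain ⟨z, hz⟩ : ∃ z, z = √t := ⟨_, rfl⟩
  obtain ⟨y, hy⟩ : ∃ y, y = √r := ⟨_, rfl⟩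
  obtain ⟨κ, hκ⟩ : ∃ κ, κ = √(t + T - r) := ⟨_, rfl⟩
  obtain ⟨lam, hlam⟩ : ∃ lam, lam = t ^ δ := ⟨_, rfl⟩
  have hz2 : z ^ 2 = t := by rw [hz]; exact Real.sq_sqrt ht0.le
  have hy2 : y ^ 2 = r := by rw [hy]; exact Real.sq_sqrt hr0.le
  have hκ2 : κ ^ 2 = t + T - r := by rw [hκ]; exact Real.sq_sqrt (by linarith)
  have hz0 : 0 < z := by rw [hz]; exact Real.sqrt_pos.2 ht0
  have hy0 : 0 < y := by rw [hy]; exact Real.sqrt_pos.2 hr0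
  have hz1 : 1 ≤ z := by rw [hz]; exact Real.one_le_sqrt.2 ht1
  have hκ1 : 1 ≤ κ := by rw [hκ]; exact Real.one_le_sqrt.2 (by linarith)
  have hκ0 : 0 < κ := by linarith
  have hl1 : 1 ≤ lam := by rw [hlam]; exact Real.one_le_rpow ht1 hδ0
  have hlz : lam ≤ z := by
    rw [hlam, hz, Real.sqrt_eq_rpow]
    exact Real.rpow_le_rpow_of_exponent_le ht1 (by linarith)
  have hpow : (t + T) ^ δ ≤ 2 * lam := by
    calc (t + T) ^ δ ≤ (2 * t) ^ δ := by gcongr; linarith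
      _ = 2 ^ δ * t ^ δ := Real.mul_rpow (by norm_num) ht0.le
      _ ≤ 2 ^ (1 : ℝ) * t ^ δ := by gcongr <;> linarith
      _ = 2 * lam := by rw [Real.rpow_one, hlam]
  have ht'0 : 0 < t + T := by linarith
  have hzz : z ≤ √(t + T) := by rw [hz]; exact Real.sqrt_le_sqrt (by linarith)
  have hfac := fun j => cone_facts hT hD hδ0 H (t := t + T) (by linarith) hr0.le hnorm hin j
  have hua : ∀ j, |u j t (r * ω1) (r * ω2)| ≤ 8 * D * lam := fun j => by
    rw [hval]
    refine (u_bound hT hD hu hδ0 H (t := t + T) (by linarith) hω hr0.le hin j).trans ?_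
    nlinarith
  have hP1 : ∀ k j, |P k (u j) t (r * ω1) (r * ω2)| ≤ D / z := fun k j => by
    rw [hPval]
    refine ((hfac j).1 k).trans ?_
    rw [div_eq_mul_inv]
    gcongr
  have hP2 : ∀ k j, |P k (u j) t (r * ω1) (r * ω2)| ≤ 2 * D * lam / (z * κ) := fun k j => by
    rw [hPval]
    refine ((hfac j).2.1 k).trans ?_
    rw [← hκ]
    calc _ ≤ D * (2 * lam) * (z * κ)⁻¹ := by gcongr
      _ = _ := by rw [div_eq_mul_inv]; ring
  have hω1 : |ω1| ≤ 1 := abs_le_of_sq_le_sq (by linarith [sq_nonneg ω2]) (by norm_num)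
  have hω2 : |ω2| ≤ 1 := abs_le_of_sq_le_sq (by linarith [sq_nonneg ω1]) (by norm_num)
  have hRa : ∀ j, |rot (rot (u j)) t (r * ω1) (r * ω2)| ≤ 12 * D * lam := fun j => by
    rw [hRval]
    have hle : ∀ w : ℝ, |w| ≤ 1 → |r * w| ≤ t + T := fun w hw => by
      rw [abs_mul, abs_of_pos hr0]; nlinarith
    refine (rot_rot_bound (hu.smooth j) ht'0 (hle _ hω1) (hle _ hω2) (hfac j).2.2.1
      (hfac j).2.2.2).trans ?_
    nlinarith
  obtain ⟨p, hp⟩ : ∃ p : Fin 2 → ℝ, ∀ j, p j = ω1 * p1 (u j) t (r * ω1) (r * ω2)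
    + ω2 * p2 (u j) t (r * ω1) (r * ω2) := ⟨_, fun _ => rfl⟩
  have hpA : ∀ j A, (∀ k, |P k (u j) t (r * ω1) (r * ω2)| ≤ A) → |p j| ≤ 2 * A := by
    intro j A hA
    rw [hp]
    have q1 : |p1 (u j) t (r * ω1) (r * ω2)| ≤ A := hA 1
    have q2 : |p2 (u j) t (r * ω1) (r * ω2)| ≤ A := hA 2
    refine (abs_add_le _ _).trans ?_
    rw [abs_mul, abs_mul]
    have s1 := mul_le_mul hω1 q1 (abs_nonneg _) zero_le_one
    have s2 := mul_le_mul hω2 q2 (abs_nonneg _) zero_le_one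
    linarith
  have hpq : ∀ j, |p j + pt (u j) t (r * ω1) (r * ω2)| ≤ 6 * D * lam / z ^ 2 := fun j => by
    have o := outgoing (v := sh T (u j)) (t := t + T) (c := t + T - r)
      (Y := D * (t + T) ^ δ) (Z := D * (t + T) ^ δ * (√(t + T) * √(t + T - r))⁻¹) ht'0 hω
      (by linarith)
    rw [show t + T - (t + T - r) = r by ring] at o
    have o1 := o (hfac j).2.2.1 ((hfac j).2.1 0)
    have e1 : p1 (u j) t (r * ω1) (r * ω2) = p1 (sh T (u j)) (t + T) (r * ω1) (r * ω2) := hPval 1 j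
    have e2 : p2 (u j) t (r * ω1) (r * ω2) = p2 (sh T (u j)) (t + T) (r * ω1) (r * ω2) := hPval 2 j
    have e0 : pt (u j) t (r * ω1) (r * ω2) = pt (sh T (u j)) (t + T) (r * ω1) (r * ω2) := hPval 0 j
    rw [hp, e0, e1, e2]
    refine o1.trans ?_
    have hY : 0 < D * (t + T) ^ δ := by positivity
    have hc : (t + T - r) * (D * (t + T) ^ δ * (√(t + T) * √(t + T - r))⁻¹) ≤ D * (t + T) ^ δ := by
      have hκ' : 0 < √(t + T - r) := by rw [← hκ]; exact hκ0
      have hs' : 0 < √(t + T) := Real.sqrt_pos.2 ht'0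
      have h1 : √(t + T - r) ≤ √(t + T) := Real.sqrt_le_sqrt (by linarith)
      calc _ = √(t + T - r) ^ 2 * (D * (t + T) ^ δ * (√(t + T) * √(t + T - r))⁻¹) := by
            rw [Real.sq_sqrt (by linarith)]
        _ = D * (t + T) ^ δ * (√(t + T - r) / √(t + T)) := by field_simp
        _ ≤ D * (t + T) ^ δ * 1 := by gcongr; exact (div_le_one hs').2 h1
        _ = _ := mul_one _
    rw [hz2]
    calc _ ≤ (3 * (D * (2 * lam))) / t := by
          gcongr
          · have : D * (t + T) ^ δ ≤ D * (2 * lam) := by gcongr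
            linarith only [this, hc]
          · linarith
      _ = _ := by ring
  have hzy : z ^ 2 ≤ 2 * y ^ 2 := by rw [hz2, hy2]; exact hr2
  have hyz : y ^ 2 ≤ 2 * z ^ 2 := by rw [hz2, hy2]; linarith
  have hκz : κ ^ 2 ≤ 2 * z ^ 2 := by rw [hz2, hκ2]; linarith
  have hUf := fun j => U_facts (U := Uop (u j) t (r * ω1) (r * ω2)) (p := p j)
    (q := pt (u j) t (r * ω1) (r * ω2))
    hz0 hy0 hκ1 hD (by linarith) hlz hzy hyz hκz
    (by rw [Uop_eq (hs j) hr0 hω, hp, hy]) (hua j)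
    ((hpA j _ fun k => hP1 k j).trans (by rw [mul_div_assoc])) (hP1 0 j)
    ((hpA j _ fun k => hP2 k j).trans (by apply le_of_eq; ring)) (hP2 0 j) (hpq j)
  have hσκ : |y ^ 2 - z ^ 2| ≤ (1 + T) * κ ^ 2 := by
    have hκsq : 1 ≤ κ ^ 2 := by nlinarith
    have e : y ^ 2 - z ^ 2 = T - κ ^ 2 := by rw [hy2, hz2, hκ2]; ring
    rw [e, abs_le]
    constructor <;> nlinarith
  have hK : ∀ a b, |Hfun (u a) (u b) t (r * ω1) (r * ω2)|
      ≤ 1100 * (1 + T) * D * (lam ^ 2 / z ^ 3) := fun a b => by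
    rw [Hfun_eq _ _ ht0 hr0 hω, ← hy, ← hz]
    exact K_bound hz0 hy0 hκ1 hD hD1 (by linarith) hl1 hz1 hzy hyz hσκ (hua a) (hRa a)
      (hP1 0 a) (hP1 0 b) (hUf a).1 (hUf b).1 (hUf b).2.1 (hUf a).2.2 (hUf b).2.2
  have hend : lam ^ 2 / z ^ 3 = t ^ (2 * δ - 3 / 2) := by
    rw [Real.rpow_sub ht0, rpow_three_half ht0, hlam, hz, ← Real.rpow_natCast, ← Real.rpow_mul ht0.le]
    congr 2; push_cast; ring
  rw [hrho, ← hend]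
  refine (abs_sub _ _).trans ?_
  rw [abs_mul, abs_mul]
  have m1 := mul_le_mul (hUf 0).1 (hK 0 1) (abs_nonneg _) (by positivity)
  have m2 := mul_le_mul (hUf 1).1 (hK 1 0) (abs_nonneg _) (by positivity)
  linarith only [m1, m2]

/-! ### Integration in time -/

theorem Uop_contOn {u : ℝ → ℝ → ℝ → ℝ} (hu : Smooth3 u) {σ ω1 ω2 a : ℝ} (ha : 0 ≤ a)
    (hσ : -2 * σ ≤ a) (hω : ω1 ^ 2 + ω2 ^ 2 = 1) :
    ContinuousOn (fun τ => Uop u τ ((τ + σ) * ω1) ((τ + σ) * ω2)) (Set.Ioi a) := by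
  have hr : ∀ τ ∈ Set.Ioi a, 0 < τ + σ := fun τ hτ => by
    have : a < τ := hτ
    linarith
  have hc : ∀ {v : ℝ → ℝ → ℝ → ℝ}, Smooth3 v →
      ContinuousOn (fun τ => v τ ((τ + σ) * ω1) ((τ + σ) * ω2)) (Set.Ioi a) := fun hv =>
    (smooth_comp_cont hv (by fun_prop) (by fun_prop) (by fun_prop)).continuousOn
  have hs : ContinuousOn (fun τ => √(τ + σ)) (Set.Ioi a) := by fun_prop
  have hi : ContinuousOn (fun τ => (√(τ + σ))⁻¹) (Set.Ioi a) :=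
    hs.inv₀ fun τ hτ => (Real.sqrt_pos.2 (hr τ hτ)).ne'
  refine ContinuousOn.congr ?_ fun τ hτ => Uop_eq hu (hr τ hτ) hω
  exact continuousOn_const.mul (((continuousOn_const.mul hi).mul (hc hu)).add
    (hs.mul (((continuousOn_const.mul (hc (smooth_p1 hu))).add
      (continuousOn_const.mul (hc (smooth_p2 hu)))).sub (hc (smooth_pt hu)))))

theorem rho_contOn {u1 u2 : ℝ → ℝ → ℝ → ℝ} (h1 : Smooth3 u1) (h2 : Smooth3 u2) {σ ω1 ω2 a : ℝ}
    (ha : 0 ≤ a) (hσ : -2 * σ ≤ a) (hω : ω1 ^ 2 + ω2 ^ 2 = 1) :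
    ContinuousOn (fun τ => rhoFun u1 u2 τ σ ω1 ω2) (Set.Ioi a) := by
  have hr : ∀ τ ∈ Set.Ioi a, 0 < τ + σ := fun τ hτ => by
    have : a < τ := hτ
    linarith
  have ht : ∀ τ ∈ Set.Ioi a, 0 < τ := fun τ hτ => lt_of_le_of_lt ha hτ
  have hc : ∀ {v : ℝ → ℝ → ℝ → ℝ}, Smooth3 v →
      ContinuousOn (fun τ => v τ ((τ + σ) * ω1) ((τ + σ) * ω2)) (Set.Ioi a) := fun hv =>
    (smooth_comp_cont hv (by fun_prop) (by fun_prop) (by fun_prop)).continuousOn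
  have hs : ContinuousOn (fun τ => √(τ + σ)) (Set.Ioi a) := by fun_prop
  have hz : ContinuousOn (fun τ : ℝ => √τ ^ 2) (Set.Ioi a) := by fun_prop
  have hK : ∀ {v w : ℝ → ℝ → ℝ → ℝ}, Smooth3 v → Smooth3 w →
      ContinuousOn (fun τ => Hfun v w τ ((τ + σ) * ω1) ((τ + σ) * ω2)) (Set.Ioi a) := by
    intro v w hv hw
    refine ContinuousOn.congr ?_ fun τ hτ => Hfun_eq v w (ht τ hτ) (hr τ hτ) hω
    refine (continuousOn_const.mul (((hs.mul ((hc (smooth_pt hw)).pow 2)).mul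
      (hc (smooth_pt hv))).add (((continuousOn_const.div hz fun τ hτ => ?_).mul
      ((Uop_contOn hw ha hσ hω).pow 2)).mul (Uop_contOn hv ha hσ hω)))).sub
      ((continuousOn_const.div (continuousOn_const.mul (hs.pow 3)) fun τ hτ => ?_).mul
      ((continuousOn_const.mul (hc (smooth_rot (smooth_rot hv)))).add (hc hv)))
    · exact pow_ne_zero _ (Real.sqrt_pos.2 (ht τ hτ)).ne'
    · exact mul_ne_zero (by norm_num) (pow_ne_zero _ (Real.sqrt_pos.2 (hr τ hτ)).ne')
  exact ((Uop_contOn h1 ha hσ hω).mul (hK h1 h2)).sub ((Uop_contOn h2 ha hσ hω).mul (hK h2 h1))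

/-- A function on `(a, ∞)`, `a ≥ ε⁻¹`, dominated by `Mτ^{-s}` with `s > 1`. -/
theorem tail_bound {F : ℝ → ℝ} {a ε M e : ℝ} (hε : 0 < ε) (ha : ε⁻¹ ≤ a) (hM : 0 ≤ M)
    (he : e < -1) (hF : ContinuousOn F (Set.Ioi a))
    (hb : ∀ τ ∈ Set.Ioi a, |F τ| ≤ M * τ ^ e) :
    IntegrableOn F (Set.Ioi a) volume ∧
      |∫ τ in Set.Ioi a, F τ| ≤ M * (ε ^ (-(e + 1)) / -(e + 1)) := by
  have hε' : 0 < ε⁻¹ := inv_pos.2 hε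
  have ha0 : 0 < a := lt_of_lt_of_le hε' ha
  have hg : IntegrableOn (fun τ : ℝ => M * τ ^ e) (Set.Ioi a) volume :=
    (integrableOn_Ioi_rpow_of_lt he ha0).const_mul M
  have hae : ∀ᵐ τ ∂(volume.restrict (Set.Ioi a)), ‖F τ‖ ≤ M * τ ^ e :=
    (ae_restrict_iff' measurableSet_Ioi).2 (Eventually.of_forall hb)
  refine ⟨Integrable.mono' hg (hF.aestronglyMeasurable measurableSet_Ioi) hae, ?_⟩
  refine (norm_integral_le_of_norm_le hg hae).trans ?_
  rw [integral_const_mul, integral_Ioi_rpow_of_lt he ha0]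
  have h1 : a ^ (e + 1) ≤ ε ^ (-(e + 1)) := by
    rw [Real.rpow_neg_eq_inv_rpow]
    exact Real.rpow_le_rpow_of_nonpos hε' ha (by linarith)
  rw [neg_div, ← div_neg]
  have h2 : 0 < -(e + 1) := by linarith
  gcongr

/-- the tail integral of `ρ` beyond `t_{1,σ} = max{ε⁻¹, −2σ}`
converges absolutely and is `O(ε^{5/2−2μ})`. -/
theorem rho_tail_estimate (f1 f2 g1 g2 : ℝ → ℝ → ℝ)
    (hf1 : SmoothCompact2 f1) (hf2 : SmoothCompact2 f2)
    (hg1 : SmoothCompact2 g1) (hg2 : SmoothCompact2 g2)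
    (k : ℕ) (hk : 4 ≤ k) (μ ν : ℝ) (hμ0 : 0 < μ) (hμ1 : μ < 1 / 10)
    (hν0 : 0 < ν) (hν1 : ((8 * k + 7 : ℕ) : ℝ) * ν < μ) :
    ∃ ε₀ C : ℝ, 0 < ε₀ ∧ 0 < C ∧ ∀ ε : ℝ, 0 < ε → ε < ε₀ →
      ∀ u1 u2 : ℝ → ℝ → ℝ → ℝ, IsSolution ε f1 f2 g1 g2 u1 u2 →
        ∀ σ ω1 ω2 : ℝ, ω1 ^ 2 + ω2 ^ 2 = 1 →
          IntegrableOn (fun τ => rhoFun u1 u2 τ σ ω1 ω2)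
            (Set.Ioi (max ε⁻¹ (-2 * σ))) volume ∧
          |∫ τ in Set.Ioi (max ε⁻¹ (-2 * σ)), rhoFun u1 u2 τ σ ω1 ω2|
            ≤ C * ε ^ ((5 : ℝ) / 2 - 2 * μ) := by
  obtain ⟨T, ε0, C, hT, hε0, hC, hdec⟩ := solution_decay hf1 hf2 hg1 hg2 hμ0 (by linarith : μ ≤ 1 / 4)
  have hT1 : 0 < (T + 1) ^ 2 := by positivity
  refine ⟨min ε0 (min C⁻¹ ((T + 1) ^ 2)⁻¹), 13200 * (1 + T) * C ^ 2 / (1 / 2 - 2 * μ),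
    lt_min hε0 (lt_min (inv_pos.2 hC) (inv_pos.2 hT1)),
    div_pos (by positivity) (by linarith), ?_⟩
  intro ε hε hlt u1 u2 h σ ω1 ω2 hω
  obtain ⟨l1, l2⟩ := lt_min_iff.1 hlt
  obtain ⟨l2, l3⟩ := lt_min_iff.1 l2
  obtain ⟨hS, hD⟩ := hdec ε hε l1.le u1 u2 h
  have hD1 : C * ε ≤ 1 := by
    calc C * ε ≤ C * C⁻¹ := by gcongr
      _ = 1 := mul_inv_cancel₀ hC.ne'
  have hTε : (T + 1) ^ 2 ≤ ε⁻¹ := by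
    rw [← inv_inv ((T + 1) ^ 2)]
    exact inv_anti₀ hε l3.le
  have ha : ε⁻¹ ≤ max ε⁻¹ (-2 * σ) := le_max_left _ _
  have ha0 : 0 ≤ max ε⁻¹ (-2 * σ) := (inv_pos.2 hε).le.trans ha
  have key := tail_bound (e := 2 * μ - 3 / 2) (M := 13200 * (1 + T) * (C * ε) ^ 2) hε ha
    (by positivity) (by linarith)
    (rho_contOn h.smooth1 h.smooth2 ha0 (le_max_right _ _) hω) (fun τ hτ => by
      have hτ' : max ε⁻¹ (-2 * σ) < τ := hτ
      exact rho_point (u := ![u1, u2]) hT (by positivity) hD1 hμ0.le (by linarith)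
        (Fin.forall_fin_two.2 ⟨h.smooth1, h.smooth2⟩) hS hD
        ((hTε.trans ha).trans hτ'.le) ((le_max_right _ _).trans hτ'.le) hω)
  refine ⟨key.1, key.2.trans (le_of_eq ?_)⟩
  have e1 : ε ^ ((5 : ℝ) / 2 - 2 * μ) = ε ^ 2 * ε ^ (-(2 * μ - 3 / 2 + 1)) := by
    rw [← Real.rpow_natCast ε 2, ← Real.rpow_add hε]
    congr 1; push_cast; ring
  rw [e1, show -(2 * μ - 3 / 2 + 1) = 1 / 2 - 2 * μ by ring]
  ring

end
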